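/- arXiv:math/0402442 — 5 statements merged into one kernel-verified Lean document; each statement's English description precedes it below -/
import Mathlib

section
/- Let P be a Polish space and let X ⊆ P be an analytic set such that the subspace X is countable dense homogeneous. Then X is completely Baire, i.e., every closed subspace of the subspace X is a Baire space. -/
/-- A topological space is countable dense homogeneous (CDH) if for any two countable
dense subsets `D`, `D'` there is a self-homeomorphism taking `D` onto `D'`. -/
def IsCDH (X : Type*) [TopologicalSpace X] : Prop :=
  ∀ D D' : Set X, D.Countable → Dense D → D'.Countable → Dense D' →
    ∃ h : X ≃ₜ X, h '' D = D'

open Set Filter Topology TopologicalSpace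

namespace CDHAux

/-- points near which `A` is everywhere non-meagre -/
def D {Z : Type*} [TopologicalSpace Z] (A : Set Z) : Set Z :=
  {z | ∀ V : Set Z, IsOpen V → z ∈ V → ¬ IsMeagre (V ∩ A)}

lemma isMeagre_frontier {Z : Type*} [TopologicalSpace Z] {U : Set Z} (hU : IsOpen U) :
    IsMeagre (frontier U) := by
  apply residual_of_dense_open
  · exact isClosed_frontier.isOpen_compl
  · rw [← interior_eq_empty_iff_dense_compl, ← frontier_compl]
    exact interior_frontier hU.isClosed_compl

lemma isMeagre_sUnion_open {Z : Type*} [TopologicalSpace Z] [SecondCountableTopology Z]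
    (A : Set Z) : IsOpen (D A)ᶜ ∧ IsMeagre ((D A)ᶜ ∩ A) := by
  have key : (D A)ᶜ = ⋃₀ {V | IsOpen V ∧ IsMeagre (V ∩ A)} := by
    ext z
    simp only [D, mem_compl_iff, mem_setOf_eq, mem_sUnion]
    push Not
    constructor
    · rintro ⟨V, h1, h2, h3⟩
      exact ⟨V, ⟨h1, h3⟩, h2⟩
    · rintro ⟨V, ⟨h1, h3⟩, h2⟩
      exact ⟨V, h1, h2, h3⟩
  refine ⟨key ▸ isOpen_sUnion fun V hV => hV.1, ?_⟩
  obtain ⟨T, hTc, hTs, hTe⟩ := isOpen_sUnion_countable {V | IsOpen V ∧ IsMeagre (V ∩ A)}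
    (fun V hV => hV.1)
  rw [key, ← hTe, sUnion_eq_biUnion, iUnion₂_inter]
  have := hTc.to_subtype
  rw [biUnion_eq_iUnion]
  exact isMeagre_iUnion fun V => (hTs V.2).2

lemma nonempty_inter_interior_D {Z : Type*} [TopologicalSpace Z] [SecondCountableTopology Z]
    {A V : Set Z} (h : ¬ IsMeagre (V ∩ A)) : (V ∩ interior (D A)).Nonempty := by
  by_contra hne
  rw [not_nonempty_iff_eq_empty] at hne
  apply h
  obtain ⟨ho, hm⟩ := isMeagre_sUnion_open A
  refine (hm.union (isMeagre_frontier ho)).mono ?_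
  rintro z ⟨hzV, hzA⟩
  by_cases hz : z ∈ D A
  · right
    rw [frontier_compl, (isOpen_compl_iff.1 ho).frontier_eq]
    refine ⟨hz, fun hzi => ?_⟩
    have : z ∈ V ∩ interior (D A) := ⟨hzV, hzi⟩
    rw [hne] at this
    exact this
  · exact Or.inl ⟨hz, hzA⟩

/-- the set of sequences extending the (reversed) finite sequence -/
def N (s : List ℕ) : Set (ℕ → ℕ) := {x | PiNat.res x s.length = s}

lemma N_subset (s : List ℕ) : N s ⊆ ⋃ n, N (n :: s) := by
  intro x hx
  have hx' : PiNat.res x s.length = s := hx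
  refine mem_iUnion.2 ⟨x s.length, ?_⟩
  simp [N, hx']

lemma D_subset_closure {Z : Type*} [TopologicalSpace Z] (A : Set Z) : D A ⊆ closure A := by
  intro z hz
  rw [mem_closure_iff]
  intro V hV hzV
  by_contra hne
  rw [not_nonempty_iff_eq_empty] at hne
  apply hz V hV hzV
  rw [hne]
  exact IsMeagre.empty

lemma range_mem_residual {Z : Type*} [TopologicalSpace Z] [SecondCountableTopology Z] [T2Space Z]
    (f : (ℕ → ℕ) → Z) (hf : Continuous f)
    (hV : ∀ V : Set Z, IsOpen V → V.Nonempty → ¬ IsMeagre (V ∩ range f)) :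
    range f ∈ residual Z := by
  let O : List ℕ → Set Z := fun s => interior (D (f '' N s))
  have hR : ∀ s, {z | z ∈ O s → ∃ n, z ∈ O (n :: s)} ∈ residual Z := by
    intro s
    have hUo : IsOpen (⋃ n, O (n :: s)) := isOpen_iUnion fun n => isOpen_interior
    refine mem_of_superset (isMeagre_frontier hUo) ?_
    intro z hz hzO
    by_contra hno
    apply hz
    rw [hUo.frontier_eq]
    refine ⟨?_, by simpa using hno⟩
    rw [mem_closure_iff]
    intro V hVo hzV
    have h1 : ¬ IsMeagre (V ∩ f '' N s) := interior_subset hzO V hVo hzV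
    have h2 : ∃ n, ¬ IsMeagre (V ∩ f '' N (n :: s)) := by
      by_contra hall
      push Not at hall
      apply h1
      refine (isMeagre_iUnion hall).mono ?_
      rw [← inter_iUnion, ← image_iUnion]
      exact inter_subset_inter_right _ (image_mono (N_subset s))
    obtain ⟨n, hn⟩ := h2
    obtain ⟨w, hw1, hw2⟩ := nonempty_inter_interior_D hn
    exact ⟨w, hw1, mem_iUnion.2 ⟨n, hw2⟩⟩
  refine mem_of_superset (countable_iInter_mem.2 hR) ?_
  intro z hz
  simp only [mem_iInter, mem_setOf_eq] at hz
  have h0 : z ∈ O [] := by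
    have : D (f '' N []) = univ := by
      ext w
      simp only [mem_univ, iff_true]
      intro V hVo hwV
      have : f '' N [] = range f := by
        rw [← image_univ]; congr 1; ext x; simp [N]
      rw [this]
      exact hV V hVo ⟨w, hwV⟩
    simp [O, this]
  choose! g hg using hz
  let L : ℕ → List ℕ := fun k => Nat.rec [] (fun _ l => g l :: l) k
  have hL : ∀ k, z ∈ O (L k) := by
    intro k
    induction k with
    | zero => exact h0
    | succ k ih => exact hg _ ih
  let σ : ℕ → ℕ := fun k => g (L k)
  have hσ : ∀ k, PiNat.res σ k = L k := by
    intro k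
    induction k with
    | zero => rfl
    | succ k ih => rw [PiNat.res_succ, ih]
  refine ⟨σ, ?_⟩
  by_contra hne
  obtain ⟨V1, V2, ho1, ho2, hm1, hm2, hd⟩ := t2_separation hne
  have hnh : f ⁻¹' V1 ∈ 𝓝 σ := hf.continuousAt.preimage_mem_nhds (ho1.mem_nhds hm1)
  obtain ⟨k, hk⟩ : ∃ k, PiNat.cylinder σ k ⊆ f ⁻¹' V1 := by
    obtain ⟨v, hv, hσv, hvs⟩ := (PiNat.isTopologicalBasis_cylinders
      (fun _ : ℕ => ℕ)).mem_nhds_iff.1 hnh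
    obtain ⟨x, n, rfl⟩ := hv
    rw [← PiNat.mem_cylinder_iff_eq.1 hσv] at hvs
    exact ⟨n, hvs⟩
  have hz := D_subset_closure _ (interior_subset (hL k))
  obtain ⟨w, hw2, x, hxN, rfl⟩ := mem_closure_iff.1 hz V2 ho2 hm2
  refine hd.le_bot ⟨hk ?_, hw2⟩
  rw [PiNat.cylinder_eq_res]
  have : PiNat.res x (L k).length = L k := hxN
  have hl : (L k).length = k := by rw [← hσ, PiNat.res_length]
  rw [hl] at this
  rw [mem_setOf_eq, this, hσ]

lemma countable_range_of {Y X : Type*} [TopologicalSpace Y] [PolishSpace Y] [TopologicalSpace X]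
    [T1Space X] (g : Y → X) (hg : Continuous g)
    (h : ∀ A : Set X, A.Countable → A ⊆ range g → IsGδ A) : (range g).Countable := by
  let S : Set (Set Y) := {V | IsOpen V ∧ (g '' V).Countable}
  have hW : (g '' ⋃₀ S).Countable := by
    obtain ⟨T, hTc, hTs, hTe⟩ := isOpen_sUnion_countable S (fun V hV => hV.1)
    rw [← hTe, sUnion_eq_biUnion, image_iUnion₂]
    exact hTc.biUnion fun V hV => (hTs hV).2
  have hWo : IsOpen (⋃₀ S) := isOpen_sUnion fun V hV => hV.1
  by_cases hne : (⋃₀ S) = univ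
  · rw [hne, image_univ] at hW; exact hW
  exfalso
  have hCc : IsClosed (⋃₀ S)ᶜ := hWo.isClosed_compl
  generalize hC : (⋃₀ S)ᶜ = C at hCc
  have : PolishSpace C := hCc.polishSpace
  have hCne : Nonempty C := by
    rw [← hC, nonempty_coe_sort, nonempty_compl]; exact hne
  obtain ⟨E, hEc, hEd⟩ := exists_countable_dense C
  let k : C → X := fun c => g c
  have hk : Continuous k := hg.comp continuous_subtype_val
  have hA : IsGδ (k '' E) := h _ (hEc.image _) (by rintro _ ⟨c, _, rfl⟩; exact ⟨c, rfl⟩)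
  have hd : Dense (k ⁻¹' (k '' E)) := hEd.mono (subset_preimage_image _ _)
  letI := upgradeIsCompletelyMetrizable C
  have := (hA.preimage hk).dense_biUnion_interior_of_closed hd (f := fun a => k ⁻¹' {a})
    (hEc.image k) (fun a _ => isClosed_singleton.preimage hk)
    (fun x hx => mem_biUnion hx rfl)
  obtain ⟨x, hx⟩ := this.nonempty
  simp only [mem_iUnion] at hx
  obtain ⟨a, -, hx⟩ := hx
  obtain ⟨V', hV's, hV'o, hxV'⟩ := mem_interior.1 hx
  obtain ⟨V, hVo, rfl⟩ := isOpen_induced_iff.1 hV'o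
  have hxC : (x : Y) ∈ (⋃₀ S)ᶜ := hC ▸ x.2
  apply hxC
  refine ⟨V, ⟨hVo, ?_⟩, hxV'⟩
  refine (hW.union (countable_singleton a)).mono ?_
  rintro _ ⟨y, hyV, rfl⟩
  by_cases hy : y ∈ ⋃₀ S
  · exact Or.inl ⟨y, hy, rfl⟩
  · right
    have hyC : y ∈ C := hC ▸ hy
    exact hV's (show (⟨y, hyC⟩ : C) ∈ _ from hyV)

/-- largest open meagre set -/
def U0 (X : Type*) [TopologicalSpace X] : Set X := (D (univ : Set X))ᶜ

lemma mem_U0 {X : Type*} [TopologicalSpace X] {x : X} :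
    x ∈ U0 X ↔ ∃ V, IsOpen V ∧ x ∈ V ∧ IsMeagre V := by
  simp [U0, D]

lemma U0_homeo {X : Type*} [TopologicalSpace X] (h : X ≃ₜ X) {x : X} (hx : h x ∈ U0 X) :
    x ∈ U0 X := by
  rw [mem_U0] at *
  obtain ⟨V, h1, h2, h3⟩ := hx
  exact ⟨h ⁻¹' V, h1.preimage h.continuous, h2,
    h3.preimage_of_isOpenMap h.continuous h.isOpenMap⟩

lemma U0_homeo_iff {X : Type*} [TopologicalSpace X] (h : X ≃ₜ X) {x : X} :
    h x ∈ U0 X ↔ x ∈ U0 X :=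
  ⟨U0_homeo h, fun hx => U0_homeo h.symm (by simpa using hx)⟩

lemma exists_open_dense_seq {X : Type*} [TopologicalSpace X] {U : Set X} (hU : IsMeagre U) :
    ∃ O : ℕ → Set X, (∀ n, IsOpen (O n)) ∧ (∀ n, Dense (O n)) ∧ ∀ x ∈ U, ∃ n, x ∉ O n := by
  obtain ⟨S, hSo, hSd, hSc, hSs⟩ := mem_residual_iff.1 hU
  have hSc' : (insert univ S).Countable := hSc.insert _
  obtain ⟨O, hO⟩ := hSc'.exists_eq_range (insert_nonempty _ _)
  have hmem : ∀ n, O n = univ ∨ O n ∈ S := fun n => by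
    have : O n ∈ insert univ S := hO ▸ mem_range_self n
    simpa using this
  refine ⟨O, fun n => ?_, fun n => ?_, fun x hx => ?_⟩
  · rcases hmem n with h | h
    · rw [h]; exact isOpen_univ
    · exact hSo _ h
  · rcases hmem n with h | h
    · rw [h]; exact dense_univ
    · exact hSd _ h
  · by_contra hall
    push Not at hall
    refine hSs (mem_sInter.2 fun t ht => ?_) hx
    have : t ∈ range O := hO ▸ mem_insert_of_mem _ ht
    obtain ⟨n, rfl⟩ := this
    exact hall n

/-- A meagre open set has a countable dense subset that is a G-delta. -/
lemma exists_countable_Gdelta {X : Type*} [TopologicalSpace X] [SecondCountableTopology X]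
    [T1Space X] {U : Set X} (hUo : IsOpen U) (hU : IsMeagre U) :
    ∃ D0 ⊆ U, D0.Countable ∧ IsGδ D0 ∧
      ∀ V, IsOpen V → (V ∩ U).Nonempty → (V ∩ D0).Nonempty := by
  obtain ⟨O, hOo, hOd, hOU⟩ := exists_open_dense_seq hU
  have hfin : ∀ n : ℕ, IsOpen (⋂ k : Fin n, O k) ∧ Dense (⋂ k : Fin n, O k) := by
    intro n
    refine ⟨isOpen_iInter_of_finite fun k => hOo k, ?_⟩
    rw [← sInter_range]
    refine (finite_range _).dense_sInter ?_ ?_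
    · rintro _ ⟨k, rfl⟩; exact hOo k
    · rintro _ ⟨k, rfl⟩; exact hOd k
  let b := countableBasis X
  have hb := isBasis_countableBasis X
  have : Countable b := (countable_countableBasis X).to_subtype
  obtain ⟨e, he⟩ := exists_injective_nat b
  have hex : ∀ v : b, ∃ d, ((v : Set X) ∩ U).Nonempty → d ∈ (v : Set X) ∩ U ∧
      ∀ k, k < e v → d ∈ O k := by
    intro v
    by_cases hv : ((v : Set X) ∩ U).Nonempty
    · obtain ⟨d, hd1, hd2⟩ := (hfin (e v)).2.inter_open_nonempty _
        ((hb.isOpen v.2).inter hUo) hv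
      refine ⟨d, fun _ => ⟨hd1, fun k hk => ?_⟩⟩
      exact mem_iInter.1 hd2 ⟨k, hk⟩
    · have : Nonempty X := by
        obtain ⟨x, -⟩ := nonempty_of_mem_countableBasis v.2
        exact ⟨x⟩
      exact ⟨Classical.arbitrary X, fun h => absurd h hv⟩
  choose d hd using hex
  let D0 : Set X := d '' {v | ((v : Set X) ∩ U).Nonempty}
  have hD0U : D0 ⊆ U := by
    rintro _ ⟨v, hv, rfl⟩
    exact (hd v hv).1.2
  have hDk : ∀ k, (D0 ∩ (O k)ᶜ).Finite := by
    intro k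
    have : (d '' {v | e v ≤ k}).Finite :=
      ((finite_le_nat k).preimage he.injOn).image _
    refine this.subset ?_
    rintro _ ⟨⟨v, hv, rfl⟩, hk⟩
    refine ⟨v, ?_, rfl⟩
    by_contra hlt
    exact hk ((hd v hv).2 k (not_le.1 hlt))
  refine ⟨D0, hD0U, (to_countable _).image _, ?_, ?_⟩
  · have heq : D0 = U ∩ ⋂ k, (O k ∪ D0 ∩ (O k)ᶜ) := by
      ext x
      simp only [mem_inter_iff, mem_iInter, mem_union]
      constructor
      · intro hx
        refine ⟨hD0U hx, fun k => ?_⟩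
        by_cases hk : x ∈ O k
        · exact Or.inl hk
        · exact Or.inr ⟨hx, hk⟩
      · rintro ⟨hxU, hall⟩
        obtain ⟨k, hk⟩ := hOU x hxU
        exact ((hall k).resolve_left hk).1
    rw [heq]
    exact hUo.isGδ.inter (IsGδ.iInter fun k => (hOo k).isGδ.union (hDk k).isGδ)
  · rintro V hVo ⟨x, hxV, hxU⟩
    obtain ⟨v, hv, hxv, hvV⟩ := hb.exists_subset_of_mem_open hxV hVo
    have hne : (v ∩ U).Nonempty := ⟨x, hxv, hxU⟩
    exact ⟨d ⟨v, hv⟩, hvV (hd ⟨v, hv⟩ hne).1.1, ⟨v, hv⟩, hne, rfl⟩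

lemma U0_eq_empty {X : Type*} [TopologicalSpace X] [SecondCountableTopology X]
    [T1Space X] (hX : IsCDH X) (g : (ℕ → ℕ) → X) (hg : Continuous g)
    (hgs : Function.Surjective g) : U0 X = ∅ := by
  obtain ⟨hUo, hUm⟩ := isMeagre_sUnion_open (univ : Set X)
  rw [inter_univ] at hUm
  change IsOpen (U0 X) at hUo
  change IsMeagre (U0 X) at hUm
  obtain ⟨C, hCc, hCd⟩ := exists_countable_dense X
  obtain ⟨D0, hD0U, hD0c, hD0G, hD0d⟩ := exists_countable_Gdelta hUo hUm
  have hDs : Dense (D0 ∪ C \ U0 X) := by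
    rw [dense_iff_inter_open]
    intro V hVo hVne
    by_cases h : (V ∩ U0 X).Nonempty
    · exact (hD0d V hVo h).mono (inter_subset_inter_right _ subset_union_left)
    · obtain ⟨c, hcV, hc⟩ := hCd.inter_open_nonempty V hVo hVne
      exact ⟨c, hcV, Or.inr ⟨hc, fun hcU => h ⟨c, hcV, hcU⟩⟩⟩
  have hG : ∀ D' : Set X, D'.Countable → Dense D' → IsGδ (D' ∩ U0 X) := by
    intro D' hc hd
    obtain ⟨h, hh⟩ := hX _ _ (hD0c.union (hCc.mono diff_subset)) hDs hc hd
    have : D' ∩ U0 X = h.symm ⁻¹' D0 := by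
      ext x
      obtain ⟨y, rfl⟩ := h.surjective x
      rw [← hh]
      simp only [mem_inter_iff, h.injective.mem_set_image, U0_homeo_iff, mem_preimage,
        Homeomorph.symm_apply_apply, mem_union, mem_diff]
      constructor
      · rintro ⟨h1 | h1, h2⟩
        · exact h1
        · exact absurd h2 h1.2
      · intro hy
        exact ⟨Or.inl hy, hD0U hy⟩
    rw [this]
    exact hD0G.preimage h.symm.continuous
  have hGA : ∀ A : Set X, A.Countable → A ⊆ U0 X → IsGδ A := by
    intro A hA hAU
    have h1 := hG (A ∪ C) (hA.union hCc) (hCd.mono subset_union_right)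
    have h2 : A = ((A ∪ C) ∩ U0 X) ∩ (C \ A)ᶜ := by
      ext x
      have := @hAU x
      simp only [mem_inter_iff, mem_union, mem_compl_iff, mem_diff]
      tauto
    rw [h2]
    exact h1.inter (hCc.mono diff_subset).isGδ_compl
  have hUc : (U0 X).Countable := by
    have hPo : IsOpen (g ⁻¹' U0 X) := hUo.preimage hg
    have : PolishSpace (g ⁻¹' U0 X) := hPo.polishSpace
    have hr : range (fun y : g ⁻¹' U0 X => g y) = U0 X := by
      ext x
      constructor
      · rintro ⟨y, rfl⟩; exact y.2
      · intro hx
        obtain ⟨y, rfl⟩ := hgs x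
        exact ⟨⟨y, hx⟩, rfl⟩
    rw [← hr]
    refine countable_range_of _ (hg.comp continuous_subtype_val) fun A hA hAr => hGA A hA ?_
    rwa [hr] at hAr
  by_contra hne
  obtain ⟨x, hx⟩ := nonempty_iff_ne_empty.2 hne
  have hd1 : Dense (U0 X ∪ C) := hCd.mono subset_union_right
  have hd2 : Dense ((U0 X ∪ C) \ {x}) := by
    rw [dense_iff_inter_open]
    intro V hVo hVne
    by_contra hemp
    have hVx : V = {x} := by
      have hVx : V ∩ {x}ᶜ = ∅ := by
        by_contra hnn
        obtain ⟨c, hc, hc'⟩ := hd1.inter_open_nonempty (V ∩ {x}ᶜ)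
          (hVo.inter isOpen_compl_singleton) (nonempty_iff_ne_empty.2 hnn)
        exact hemp ⟨c, hc.1, hc', hc.2⟩
      refine (hVne.subset_singleton_iff).1 ?_
      intro y hy
      by_contra hyx
      have : y ∈ V ∩ {x}ᶜ := ⟨hy, hyx⟩
      rw [hVx] at this
      exact this
    obtain ⟨O, hOo, hOd, hOU⟩ := exists_open_dense_seq hUm
    obtain ⟨n, hn⟩ := hOU x hx
    obtain ⟨y, hyV, hy⟩ := (hOd n).inter_open_nonempty V hVo hVne
    rw [hVx] at hyV
    exact hn (hyV ▸ hy)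
  obtain ⟨h, hh⟩ := hX _ _ (hUc.union hCc) hd1 ((hUc.union hCc).mono diff_subset) hd2
  have hy : h.symm x ∈ U0 X := (U0_homeo_iff h.symm).2 hx
  have : x ∈ (U0 X ∪ C) \ {x} := by
    rw [← hh]
    exact ⟨h.symm x, Or.inl hy, by simp⟩
  exact this.2 rfl

/-- preimages of meagre sets under dense inducing maps are meagre -/
lemma meagre_preimage {X Z : Type*} [TopologicalSpace X] [TopologicalSpace Z] {i : X → Z}
    (hi : IsDenseInducing i) {A : Set Z} (hA : IsMeagre A) : IsMeagre (i ⁻¹' A) := by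
  obtain ⟨S, hSo, hSd, hSc, hSs⟩ := mem_residual_iff.1 hA
  refine mem_residual_iff.2 ⟨preimage i '' S, ?_, ?_, hSc.image _, ?_⟩
  · rintro _ ⟨t, ht, rfl⟩
    exact (hSo t ht).preimage hi.continuous
  · rintro _ ⟨t, ht, rfl⟩
    rw [dense_iff_inter_open]
    intro V hVo hVne
    obtain ⟨W, hWo, rfl⟩ := hi.isInducing.isOpen_iff.1 hVo
    obtain ⟨x, hx⟩ := hVne
    obtain ⟨w, hw1, hw2⟩ := (hSd t ht).inter_open_nonempty W hWo ⟨i x, hx⟩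
    obtain ⟨z, hz⟩ := hi.dense.exists_mem_open (hWo.inter (hSo t ht)) ⟨w, hw1, hw2⟩
    exact ⟨z, hz.1, hz.2⟩
  · intro x hx
    refine fun hxA => hSs (mem_sInter.2 fun t ht => ?_) hxA
    exact mem_sInter.1 hx _ ⟨t, ht, rfl⟩

lemma baire_of_dense_Gdelta {Y C : Type*} [TopologicalSpace Y] [TopologicalSpace C] [BaireSpace C]
    {i : Y → C} (hi : IsInducing i) {G : Set C} (hG : IsGδ G) (hd : Dense G)
    (hGi : G ⊆ range i) : BaireSpace Y := by
  refine ⟨fun f hfo hfd => ?_⟩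
  choose V hVo hVf using fun n => hi.isOpen_iff.1 (hfo n)
  have hVd : ∀ n, Dense (V n) := by
    intro n
    rw [dense_iff_inter_open]
    intro W hWo hWne
    obtain ⟨z, hzW, hzG⟩ := hd.inter_open_nonempty W hWo hWne
    obtain ⟨y, rfl⟩ := hGi hzG
    obtain ⟨w, hw1, hw2⟩ := (hfd n).inter_open_nonempty _ (hWo.preimage hi.continuous) ⟨y, hzW⟩
    rw [← hVf n] at hw2
    exact ⟨i w, hw1, hw2⟩
  have hVG : Dense ((⋂ n, V n) ∩ G) :=
    Dense.inter_of_Gδ (IsGδ.iInter_of_isOpen hVo) hG (dense_iInter_of_isOpen hVo hVd) hd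
  rw [dense_iff_inter_open]
  intro W' hW'o hW'ne
  obtain ⟨W, hWo, rfl⟩ := hi.isOpen_iff.1 hW'o
  obtain ⟨y, hy⟩ := hW'ne
  obtain ⟨z, hzW, hzV, hzG⟩ := hVG.inter_open_nonempty W hWo ⟨i y, hy⟩
  obtain ⟨w, rfl⟩ := hGi hzG
  refine ⟨w, hzW, mem_iInter.2 fun n => ?_⟩
  rw [← hVf n]
  exact mem_iInter.1 hzV n

end CDHAux

open CDHAux in
/-- Every analytic CDH subspace of a Polish space is completely Baire: every closed
subspace of it is a Baire space. -/
theorem completelyBaire_of_analytic_CDH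
    (P : Type*) [TopologicalSpace P] [PolishSpace P] (X : Set P)
    (hA : MeasureTheory.AnalyticSet X)
    (hCDH : IsCDH ↥X) :
    ∀ F : Set ↥X, IsClosed F → BaireSpace ↥F := by
  intro F hF
  rw [MeasureTheory.AnalyticSet] at hA
  rcases hA with rfl | ⟨f, hf, rfl⟩
  · exact baire_of_finite
  let X := range f
  let g : (ℕ → ℕ) → X := rangeFactorization f
  have hg : Continuous g := hf.subtype_mk _
  have hgs : Function.Surjective g := rangeFactorization_surjective
  have hU0 : U0 X = ∅ := U0_eq_empty hCDH g hg hgs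
  -- the closure
  let Z := closure (range f)
  have : PolishSpace Z := isClosed_closure.polishSpace
  let i : X → Z := inclusion subset_closure
  have hi : IsDenseInducing i := by
    refine ⟨IsInducing.of_comp (continuous_inclusion _) continuous_subtype_val
      IsInducing.subtypeVal, ?_⟩
    exact denseRange_inclusion_iff subset_closure |>.2 subset_rfl
  have hres : range (i ∘ g) ∈ residual Z := by
    refine range_mem_residual _ (hi.continuous.comp hg) fun V hVo hVne hm => ?_
    obtain ⟨x, hx⟩ := hi.dense.exists_mem_open hVo hVne
    have hm' := meagre_preimage hi hm
    rw [hgs.range_comp, preimage_inter, preimage_range, inter_univ] at hm'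
    have : x ∈ U0 X := mem_U0.2 ⟨_, hVo.preimage hi.continuous, hx, hm'⟩
    rw [hU0] at this
    exact this
  letI := upgradeIsCompletelyMetrizable Z
  obtain ⟨G, hGs, hGδ, hGd⟩ := mem_residual.1 hres
  rw [hgs.range_comp] at hGs
  -- countable dense subset of `X` inside `G`
  obtain ⟨E, hEG, hEc, hEd⟩ : ∃ E : Set X, E ⊆ i ⁻¹' G ∧ E.Countable ∧ Dense E := by
    obtain ⟨E, hEG, hEc, hEd⟩ := TopologicalSpace.IsSeparable.exists_countable_dense_subset
      (TopologicalSpace.IsSeparable.of_separableSpace (i ⁻¹' G))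
    refine ⟨E, hEG, hEc, ?_⟩
    have hd : Dense (i ⁻¹' G) := by
      rw [dense_iff_inter_open]
      intro V hVo hVne
      obtain ⟨W, hWo, rfl⟩ := hi.isInducing.isOpen_iff.1 hVo
      obtain ⟨x, hx⟩ := hVne
      obtain ⟨z, hzW, hzG⟩ := hGd.inter_open_nonempty W hWo ⟨i x, hx⟩
      obtain ⟨y, rfl⟩ := hGs hzG
      exact ⟨y, hzW, hzG⟩
    exact fun x => closure_minimal hEd isClosed_closure (hd x)
  -- countable dense subset of `X` containing a dense subset of `F`
  obtain ⟨B, hBF, hBc, hBd⟩ := TopologicalSpace.IsSeparable.exists_countable_dense_subset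
      (TopologicalSpace.IsSeparable.of_separableSpace F)
  obtain ⟨h, hh⟩ := hCDH E (B ∪ E) hEc hEd (hBc.union hEc) (hEd.mono subset_union_right)
  -- transport
  let j : F → Z := fun y => i (h.symm y)
  have hj : IsInducing j :=
    hi.isInducing.comp (h.symm.isInducing.comp IsInducing.subtypeVal)
  let C : Set Z := closure (range j)
  have hPC : PolishSpace C := isClosed_closure.polishSpace
  letI := upgradeIsCompletelyMetrizable C
  let j' : F → C := fun y => ⟨j y, subset_closure (mem_range_self y)⟩
  have hj' : IsInducing j' :=
    IsInducing.of_comp (hj.continuous.subtype_mk _) continuous_subtype_val hj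
  have hj'd : DenseRange j' := by
    intro c
    rw [closure_subtype]
    convert c.2 using 2
    rw [← range_comp]
    rfl
  refine baire_of_dense_Gdelta hj' (hGδ.preimage continuous_subtype_val) ?_ ?_
  · rw [dense_iff_inter_open]
    intro V hVo hVne
    obtain ⟨y, hy⟩ := hj'd.exists_mem_open hVo hVne
    have hVy := hVo.preimage hj'.continuous
    obtain ⟨W, hWo, hWV⟩ := isOpen_induced_iff.1 hVy
    have hyW : (y : X) ∈ W := by
      have : y ∈ Subtype.val ⁻¹' W := hWV ▸ hy
      exact this
    obtain ⟨b, hbW, hbB⟩ := mem_closure_iff.1 (hBd y.2) W hWo hyW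
    have hbV : (⟨b, hBF hbB⟩ : F) ∈ j' ⁻¹' V := by
      rw [← hWV]; exact hbW
    refine ⟨_, hbV, ?_⟩
    have hb : b ∈ h '' E := hh ▸ Or.inl hbB
    obtain ⟨e, he, rfl⟩ := hb
    have := hEG he
    simpa [j', j] using this
  · intro c hc
    obtain ⟨x, hx⟩ := hGs hc
    -- `x` lies in the closed set `h ⁻¹' F`
    have hx' : h x ∈ F := by
      have hcl : x ∈ closure (h ⁻¹' F) := by
        rw [hi.isInducing.closure_eq_preimage_closure_image, mem_preimage, hx]
        refine closure_mono ?_ c.2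
        rintro _ ⟨y, rfl⟩
        exact ⟨h.symm y, by simp, rfl⟩
      rwa [(hF.preimage h.continuous).closure_eq] at hcl
    refine ⟨⟨h x, hx'⟩, Subtype.ext ?_⟩
    simp [j', j, hx]
end

section
/- Let P be a Polish space and let X ⊆ P be a Borel set such that the subspace X is countable dense homogeneous. Then X is a Gδ subset of P; in particular, the subspace X is completely metrizable (Polish). -/
open Set Filter Topology TopologicalSpace MeasureTheory

theorem aux_gdelta_polish {P : Type*} [TopologicalSpace P] [PolishSpace P] {G : Set P}
    (hG : IsGδ G) : PolishSpace G := by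
  obtain ⟨O, hO, rfl⟩ := isGδ_iff_eq_iInter_nat.1 hG
  have : ∀ n, PolishSpace (O n) := fun n => (hO n).polishSpace
  let F : (↥(⋂ n, O n)) → (∀ n, O n) := fun x n => ⟨x.1, mem_iInter.1 x.2 n⟩
  have hFc : Continuous F := by fun_prop
  let p : (∀ n, O n) → P := fun g => (g 0).1
  have hpc : Continuous p := by fun_prop
  have hemb : IsEmbedding F := by
    refine IsEmbedding.of_comp hFc hpc ?_
    exact IsEmbedding.subtypeVal
  have hr : range F = ⋂ n, {g : ∀ n, O n | (g n).1 = (g 0).1} := by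
    ext g
    simp only [mem_range, mem_iInter, mem_ofPred_eq]
    constructor
    · rintro ⟨x, rfl⟩ n
      rfl
    · intro h
      refine ⟨⟨(g 0).1, mem_iInter.2 fun n => by rw [← h n]; exact (g n).2⟩, ?_⟩
      funext n
      exact Subtype.ext (h n).symm
  have hcl : IsClosed (range F) := by
    rw [hr]
    exact isClosed_iInter fun n => isClosed_eq (by fun_prop) (by fun_prop)
  exact IsClosedEmbedding.polishSpace ⟨hemb, hcl⟩

theorem aux_polish_gdelta {P T : Type*} [TopologicalSpace P] [MetrizableSpace P]
    [TopologicalSpace T] [PolishSpace T] {e : T → P} (he : IsEmbedding e) :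
    IsGδ (range e) := by
  let := TopologicalSpace.upgradeIsCompletelyMetrizable T
  let := TopologicalSpace.metrizableSpaceMetric P
  let O : ℕ → Set P := fun n => ⋃₀ {U : Set P | IsOpen U ∧
    ∀ x y : T, e x ∈ U → e y ∈ U → dist x y < 1 / ((n : ℝ) + 1)}
  have hO : ∀ n, IsOpen (O n) := fun n => isOpen_sUnion fun U hU => hU.1
  have hEq : range e = closure (range e) ∩ ⋂ n, O n := by
    apply Subset.antisymm
    · rintro _ ⟨x, rfl⟩
      refine ⟨subset_closure ⟨x, rfl⟩, mem_iInter.2 fun n => ?_⟩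
      have hpos : (0 : ℝ) < 1 / ((n : ℝ) + 1) / 2 := by positivity
      obtain ⟨U, hU, hUe⟩ := he.isInducing.isOpen_iff.1
        (Metric.isOpen_ball (x := x) (ε := 1 / ((n : ℝ) + 1) / 2))
      refine ⟨U, ⟨hU, ?_⟩, ?_⟩
      · intro a b ha hb
        have ha' : a ∈ Metric.ball x (1 / ((n : ℝ) + 1) / 2) := by rw [← hUe]; exact ha
        have hb' : b ∈ Metric.ball x (1 / ((n : ℝ) + 1) / 2) := by rw [← hUe]; exact hb
        rw [Metric.mem_ball] at ha' hb'
        have := dist_triangle_right a b x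
        linarith
      · have : x ∈ e ⁻¹' U := by rw [hUe]; exact Metric.mem_ball_self hpos
        exact this
    · rintro p ⟨hp, hpO⟩
      have hne : (comap e (𝓝 p)).NeBot := by
        rw [comap_neBot_iff]
        intro t ht
        obtain ⟨q, hq, x, rfl⟩ := mem_closure_iff_nhds.1 hp t ht
        exact ⟨x, hq⟩
      have hca : Cauchy (comap e (𝓝 p)) := by
        rw [Metric.cauchy_iff]
        refine ⟨hne, fun ε hε => ?_⟩
        obtain ⟨n, hn⟩ := exists_nat_one_div_lt hε
        obtain ⟨U, ⟨hU, hUd⟩, hpU⟩ := mem_iInter.1 hpO n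
        exact ⟨e ⁻¹' U, preimage_mem_comap (hU.mem_nhds hpU),
          fun x hx y hy => (hUd x y hx hy).trans hn⟩
      obtain ⟨g, hg⟩ := CompleteSpace.complete hca
      have h1 : Tendsto e (comap e (𝓝 p)) (𝓝 (e g)) :=
        (he.continuous.tendsto g).mono_left hg
      have h2 : Tendsto e (comap e (𝓝 p)) (𝓝 p) := tendsto_comap
      exact ⟨g, tendsto_nhds_unique h1 h2⟩
  rw [hEq]
  exact isClosed_closure.isGδ.inter (IsGδ.iInter_of_isOpen hO)

theorem aux_hurewicz {P : Type*} [TopologicalSpace P] {X : Set P}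
    (hA : AnalyticSet Xᶜ)
    (hX : ∀ Q : Set P, Q.Countable → Q ⊆ X → ∃ G, IsGδ G ∧ Q ⊆ G ∧ G ⊆ X) : IsGδ X := by
  rw [AnalyticSet] at hA
  rcases hA with hA | ⟨f, hf, hfr⟩
  · rw [compl_empty_iff.1 hA]
    exact IsGδ.univ
  have hfX : ∀ z, f z ∉ X := fun z => by
    have : f z ∈ Xᶜ := hfr ▸ mem_range_self z
    exact this
  let B := countableBasis (ℕ → ℕ)
  have hB : IsTopologicalBasis B := isBasis_countableBasis _
  let good : Set (Set (ℕ → ℕ)) := {b | b ∈ B ∧ ∃ H : Set P, IsGδ H ∧ X ⊆ H ∧ ∀ z ∈ b, f z ∉ H}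
  have hgc : good.Countable := (countable_countableBasis _).mono fun b hb => hb.1
  have hgH : ∀ b : good, ∃ H : Set P, IsGδ H ∧ X ⊆ H ∧ ∀ z ∈ b.1, f z ∉ H := fun b => b.2.2
  choose H hHG hHX hHf using hgH
  have := hgc.to_subtype
  let HW := ⋂ b, H b
  have hHWG : IsGδ HW := IsGδ.iInter hHG
  have hHWX : X ⊆ HW := subset_iInter hHX
  let W := ⋃₀ good
  have hHWf : ∀ z ∈ W, f z ∉ HW := by
    rintro z ⟨b, hb, hz⟩ h
    exact hHf ⟨b, hb⟩ z hz (mem_iInter.1 h ⟨b, hb⟩)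
  have hWo : IsOpen W := isOpen_sUnion fun b hb => hB.isOpen hb.1
  by_cases hZ : W = univ
  · have : X = HW := by
      refine hHWX.antisymm fun p hp => ?_
      by_contra hpX
      have : p ∈ range f := by rw [hfr]; exact hpX
      obtain ⟨z, rfl⟩ := this
      exact hHWf z (hZ ▸ mem_univ z) hp
    rw [this]; exact hHWG
  exfalso
  have hZc : IsClosed Wᶜ := hWo.isClosed_compl
  have : PolishSpace ↥(Wᶜ) := hZc.polishSpace
  have : Nonempty ↥(Wᶜ) := (nonempty_compl.2 hZ).to_subtype
  let I := {b : Set (ℕ → ℕ) // b ∈ B ∧ (b ∩ Wᶜ).Nonempty}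
  have hIc : Countable I :=
    ((countable_countableBasis (ℕ → ℕ)).mono (s₁ := {b | b ∈ B ∧ (b ∩ Wᶜ).Nonempty})
      fun b hb => hb.1).to_subtype
  have key : ∀ b : I, ∃ x, x ∈ closure (f '' (b.1 ∩ Wᶜ)) ∧ x ∈ X := by
    rintro ⟨b, hb, z, hzb, hzW⟩
    by_contra hcon
    push Not at hcon
    apply hzW
    refine ⟨b, ⟨hb, HW ∩ (closure (f '' (b ∩ Wᶜ)))ᶜ,
      hHWG.inter isClosed_closure.isOpen_compl.isGδ,
      fun x hx => ⟨hHWX hx, fun h => hcon x h hx⟩, ?_⟩, hzb⟩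
    rintro y hy ⟨h1, h2⟩
    by_cases hyW : y ∈ W
    · exact hHWf y hyW h1
    · exact h2 (subset_closure ⟨y, ⟨hy, hyW⟩, rfl⟩)
  choose x hxc hxX using key
  obtain ⟨G, hG, hQG, hGX⟩ := hX (range x) (countable_range x) (by rintro _ ⟨b, rfl⟩; exact hxX b)
  obtain ⟨O, hO, rfl⟩ := isGδ_iff_eq_iInter_nat.1 hG
  have hd : Dense (⋂ n, {z : ↥(Wᶜ) | f z.1 ∈ O n}) := by
    refine dense_iInter_of_isOpen (fun n => (hO n).preimage (by fun_prop)) fun n => ?_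
    rw [dense_iff_inter_open]
    rintro V hV ⟨v, hv⟩
    obtain ⟨V', hV', rfl⟩ := isOpen_induced_iff.1 hV
    obtain ⟨b, hb, hvb, hbV⟩ := hB.exists_subset_of_mem_open hv hV'
    let i : I := ⟨b, hb, v.1, hvb, v.2⟩
    obtain ⟨_, hq, y, hy, rfl⟩ := mem_closure_iff.1 (hxc i) (O n) (hO n)
      (mem_iInter.1 (hQG (mem_range_self i)) n)
    exact ⟨⟨y, hy.2⟩, hbV hy.1, hq⟩
  obtain ⟨z, hz⟩ := hd.nonempty
  exact hfX z.1 (hGX (mem_iInter.2 fun n => mem_iInter.1 hz n))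

/-- A countable dense subset of the Cantor space is not `Gδ`. -/
theorem aux_cantor {E : Set (ℕ → Bool)} (hE : E.Countable) (hd : Dense E) : ¬ IsGδ E := by
  intro hG
  apply not_isMeagre_of_isGδ_of_dense hG hd
  have : E = ⋃ x ∈ E, {x} := by simp
  rw [this]
  refine isMeagre_biUnion hE fun x _ => IsNowhereDense.isMeagre ?_
  rw [isClosed_singleton.isNowhereDense_iff, ← Set.not_nonempty_iff_eq_empty]
  rintro ⟨y, hy⟩
  have hyx : y = x := mem_singleton_iff.1 (interior_subset hy)
  subst hyx
  have ht : Tendsto (fun n : ℕ => Function.update y n (!(y n))) atTop (𝓝 y) := by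
    rw [tendsto_pi_nhds]
    intro k
    refine tendsto_const_nhds.congr' ?_
    filter_upwards [eventually_gt_atTop k] with n hn
    rw [Function.update_of_ne hn.ne]
  have h2 := ht.eventually (isOpen_interior.mem_nhds hy)
  obtain ⟨n, hn⟩ := h2.exists
  have h3 : Function.update y n (!(y n)) = y :=
    mem_singleton_iff.1 (interior_subset (s := {y}) hn)
  have := congrFun h3 n
  simp at this

theorem aux_borel_cantor {P : Type*} [tP : TopologicalSpace P] [PolishSpace P]
    [MeasurableSpace P] [BorelSpace P] {A : Set P} (hA : MeasurableSet A)
    (hunc : ¬ A.Countable) :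
    ∃ f : (ℕ → Bool) → P, range f ⊆ A ∧ Continuous f ∧ Function.Injective f := by
  obtain ⟨t', ht', hpol, hcl, -⟩ := hA.isClopenable
  obtain ⟨f, hfr, hfc, hfi⟩ :=
    @IsClosed.exists_nat_bool_injection_of_not_countable P t' hpol _ hcl hunc
  exact ⟨f, hfr, @continuous_le_rng _ _ _ _ t' tP ht' hfc, hfi⟩

theorem aux_uncountable {P : Type*} [TopologicalSpace P] [PolishSpace P]
    [MeasurableSpace P] [BorelSpace P] (X : Set P) (hB : MeasurableSet X) (U : Set X)
    (hU : IsOpen U) (hC : ∀ C : Set X, C.Countable → C ⊆ U → IsGδ C) : U.Countable := by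
  by_contra hunc
  have hmeas : MeasurableSet (Subtype.val '' U : Set P) := hB.subtype_image hU.measurableSet
  have hunc' : ¬ (Subtype.val '' U : Set P).Countable := fun h =>
    hunc (countable_of_injective_of_countable_image Subtype.val_injective.injOn h)
  obtain ⟨f, hfr, hfc', hfi⟩ := aux_borel_cantor hmeas hunc'
  have hfX : ∀ z, ∃ u : X, u ∈ U ∧ u.1 = f z := fun z => hfr (mem_range_self z)
  choose g hgU hgf using hfX
  have hgc : Continuous g := by
    rw [continuous_induced_rng]
    exact hfc'.congr fun z => (hgf z).symm
  have hgi : Function.Injective g := fun a b hab => hfi (by rw [← hgf, ← hgf, hab])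
  obtain ⟨E, hE, hEd⟩ := exists_countable_dense (ℕ → Bool)
  have hG := hC (g '' E) (hE.image g) (by rintro _ ⟨z, _, rfl⟩; exact hgU z)
  have := hG.preimage hgc
  rw [preimage_image_eq _ hgi] at this
  exact aux_cantor hE hEd this

theorem aux_no_meagre {P : Type*} [TopologicalSpace P] [PolishSpace P]
    [MeasurableSpace P] [BorelSpace P] (X : Set P) (hB : MeasurableSet X) (hCDH : IsCDH X)
    (V : Set X) (hV : IsOpen V) (hVm : IsMeagre V) : V = ∅ := by
  let 𝒱 : Set (Set X) := {V | IsOpen V ∧ IsMeagre V}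
  let U := ⋃₀ 𝒱
  have hUo : IsOpen U := isOpen_sUnion fun V hV => hV.1
  have hUm : IsMeagre U := by
    obtain ⟨T, hT, hTs, hTU⟩ := isOpen_sUnion_countable 𝒱 fun V hV => hV.1
    change IsMeagre (⋃₀ 𝒱)
    rw [← hTU, sUnion_eq_biUnion]
    exact isMeagre_biUnion hT fun V hV => (hTs hV).2
  have hinv : ∀ h : X ≃ₜ X, ∀ x, h x ∈ U → x ∈ U := by
    rintro h x ⟨V, ⟨hVo, hVm⟩, hx⟩
    exact ⟨h ⁻¹' V, ⟨hVo.preimage h.continuous,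
      hVm.preimage_of_isOpenMap h.continuous h.isOpenMap⟩, hx⟩
  have hinv' : ∀ h : X ≃ₜ X, ∀ x, x ∈ U → h x ∈ U := fun h x hx =>
    hinv h.symm (h x) (by simpa using hx)
  obtain ⟨S, hSn, hSc, hUS⟩ := isMeagre_iff_countable_union_isNowhereDense.1 hUm
  -- closed nowhere dense sets covering `U`
  obtain ⟨F, hFc, hFn, hUF⟩ : ∃ F : ℕ → Set X, (∀ n, IsClosed (F n)) ∧
      (∀ n, interior (F n) = ∅) ∧ U ⊆ ⋃ n, F n := by
    obtain ⟨F, hF⟩ := (hSc.insert ∅).exists_eq_range (insert_nonempty _ _)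
    have hF' : ∀ n, IsNowhereDense (F n) := fun n => by
      have : F n ∈ insert ∅ S := hF ▸ mem_range_self n
      rcases this with h | h
      · rw [h]; exact isNowhereDense_empty
      · exact hSn _ h
    refine ⟨fun n => closure (F n), fun n => isClosed_closure, hF', fun x hx => ?_⟩
    obtain ⟨s, hs, hxs⟩ := hUS hx
    have : s ∈ range F := hF ▸ mem_insert_of_mem _ hs
    obtain ⟨n, rfl⟩ := this
    exact mem_iUnion.2 ⟨n, subset_closure hxs⟩
  have hsing : ∀ x ∈ U, ¬ IsOpen ({x} : Set X) := by
    intro x hx ho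
    obtain ⟨n, hn⟩ := mem_iUnion.1 (hUF hx)
    have : x ∈ interior (F n) :=
      mem_interior.2 ⟨{x}, by simpa using hn, ho, rfl⟩
    rw [hFn] at this
    exact this
  suffices hUe : U = ∅ by
    rw [← subset_empty_iff, ← hUe]
    exact subset_sUnion_of_mem (show V ∈ 𝒱 from ⟨hV, hVm⟩)
  by_contra hUne
  obtain ⟨x₀, hx₀⟩ := nonempty_iff_ne_empty.2 hUne
  obtain ⟨D₁, hD₁c, hD₁d⟩ := exists_countable_dense X
  -- basis indexed by naturals
  obtain ⟨b, hb⟩ := (countable_countableBasis X).exists_eq_range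
    (by
      obtain ⟨v, hv, -, -⟩ := (isBasis_countableBasis X).exists_subset_of_mem_open
        (mem_univ x₀) isOpen_univ
      exact ⟨v, hv⟩)
  have hbb : IsTopologicalBasis (range b) := hb ▸ isBasis_countableBasis X
  have hpick : ∀ k, ∃ e, e ∈ U ∧ (∀ n ≤ k, e ∉ F n) ∧ ((b k ∩ U).Nonempty → e ∈ b k) := by
    intro k
    have hdense : Dense (⋂ n ∈ Finset.range (k + 1), (F n)ᶜ) := by
      have : ∀ s : Finset ℕ, IsOpen (⋂ n ∈ s, (F n)ᶜ) ∧ Dense (⋂ n ∈ s, (F n)ᶜ) := by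
        intro s
        induction s using Finset.induction_on with
        | empty => simp
        | insert a s ha ih =>
          rw [Finset.set_biInter_insert]
          exact ⟨(hFc a).isOpen_compl.inter ih.1,
            (interior_eq_empty_iff_dense_compl.1 (hFn a)).inter_of_isOpen_right ih.2 ih.1⟩
      exact (this _).2
    have hget : ∀ O : Set X, IsOpen O → O.Nonempty → ∃ e ∈ O, ∀ n ≤ k, e ∉ F n := by
      intro O hO hne
      obtain ⟨e, heO, he⟩ := hdense.inter_open_nonempty O hO hne
      refine ⟨e, heO, fun n hn => ?_⟩
      have := mem_iInter₂.1 he n (Finset.mem_range.2 (by omega))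
      exact this
    by_cases hne : (b k ∩ U).Nonempty
    · obtain ⟨e, he, he'⟩ := hget (b k ∩ U) ((hbb.isOpen (mem_range_self k)).inter hUo) hne
      exact ⟨e, he.2, he', fun _ => he.1⟩
    · obtain ⟨e, he, he'⟩ := hget U hUo ⟨x₀, hx₀⟩
      exact ⟨e, he, he', fun h => absurd h hne⟩
  choose e heU heF heb using hpick
  have hEG : IsGδ (range e) := by
    have hEq : range e = U ∩ ⋂ n, ((F n)ᶜ ∪ (range e ∩ F n)) := by
      apply Subset.antisymm
      · rintro _ ⟨k, rfl⟩
        refine ⟨heU k, mem_iInter.2 fun n => ?_⟩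
        by_cases h : e k ∈ F n
        · exact Or.inr ⟨mem_range_self k, h⟩
        · exact Or.inl h
      · rintro x ⟨hxU, hx⟩
        obtain ⟨n, hn⟩ := mem_iUnion.1 (hUF hxU)
        rcases mem_iInter.1 hx n with h | h
        · exact absurd hn h
        · exact h.1
    rw [hEq]
    refine hUo.isGδ.inter (IsGδ.iInter fun n => (hFc n).isOpen_compl.isGδ.union ?_)
    apply Set.Finite.isGδ
    refine ((Set.finite_lt_nat n).image e).subset ?_
    rintro _ ⟨⟨k, rfl⟩, hk⟩
    refine ⟨k, ?_, rfl⟩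
    by_contra hlt
    exact heF k n (not_lt.1 hlt) hk
  let D := range e ∪ (D₁ \ U)
  have hDc : D.Countable := (countable_range e).union (hD₁c.mono sdiff_subset)
  have hDd : Dense D := by
    rw [dense_iff_inter_open]
    rintro O hO hOne
    by_cases hne : (O ∩ U).Nonempty
    · obtain ⟨y, hy⟩ := hne
      obtain ⟨_, ⟨k, rfl⟩, hyk, hk⟩ := hbb.exists_subset_of_mem_open hy (hO.inter hUo)
      exact ⟨e k, (hk (heb k ⟨y, hyk, hy.2⟩)).1, Or.inl (mem_range_self k)⟩
    · obtain ⟨y, hyO, hyD⟩ := hD₁d.inter_open_nonempty O hO hOne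
      exact ⟨y, hyO, Or.inr ⟨hyD, fun hyU => hne ⟨y, hyO, hyU⟩⟩⟩
  have hcountG : ∀ C : Set X, C.Countable → C ⊆ U → IsGδ C := by
    intro C hC hCU
    obtain ⟨h, hh⟩ := hCDH D (D ∪ C) hDc hDd (hDc.union hC) (hDd.mono subset_union_left)
    have hGim : IsGδ (h '' range e) := by
      rw [h.image_eq_preimage_symm]
      exact hEG.preimage h.symm.continuous
    have hsub : C ⊆ h '' range e := by
      intro c hc
      have : c ∈ h '' D := hh ▸ Or.inr hc
      obtain ⟨d, hd, rfl⟩ := this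
      rcases hd with hd | hd
      · exact ⟨d, hd, rfl⟩
      · exact absurd (hinv h d (hCU hc)) hd.2
    have hEq : C = h '' range e ∩ (h '' range e \ C)ᶜ := by
      ext c
      constructor
      · intro hc
        exact ⟨hsub hc, fun h' => h'.2 hc⟩
      · rintro ⟨h1, h2⟩
        by_contra hc
        exact h2 ⟨h1, hc⟩
    rw [hEq]
    exact hGim.inter (((countable_range e).image h).mono sdiff_subset).isGδ_compl
  have hUc : U.Countable := aux_uncountable X hB U hUo hcountG
  have hnb : NeBot (𝓝[≠] x₀) := by
    rw [neBot_iff, Ne, ← isOpen_singleton_iff_punctured_nhds]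
    exact hsing x₀ hx₀
  have hDUc := hDc.union hUc
  have hDUd : Dense (D ∪ U) := hDd.mono subset_union_left
  obtain ⟨h, hh⟩ := hCDH (D ∪ U) ((D ∪ U) \ {x₀}) hDUc hDUd (hDUc.mono sdiff_subset)
    (hDUd.diff_singleton x₀)
  have : h (h.symm x₀) ∈ (D ∪ U) \ {x₀} := by
    rw [← hh]
    exact ⟨h.symm x₀, Or.inr (hinv' h.symm x₀ hx₀), rfl⟩
  rw [h.apply_symm_apply] at this
  exact this.2 rfl

theorem aux_dense_polish {P : Type*} [TopologicalSpace P] [PolishSpace P]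
    [MeasurableSpace P] [BorelSpace P] (X : Set P) (hB : MeasurableSet X)
    (hX : ∀ V : Set X, IsOpen V → IsMeagre V → V = ∅) :
    ∃ (t : Set (closure X)) (e : t → X), PolishSpace t ∧ IsEmbedding e ∧ DenseRange e := by
  have : PolishSpace (closure X) := isClosed_closure.polishSpace
  let i : X → closure X := inclusion subset_closure
  have hi : IsEmbedding i := IsEmbedding.inclusion subset_closure
  have hid : DenseRange i := by
    rw [DenseRange, dense_iff_inter_open]
    rintro V hV ⟨v, hv⟩
    obtain ⟨V', hV', rfl⟩ := isOpen_induced_iff.1 hV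
    obtain ⟨y, hyV, hyX⟩ := mem_closure_iff.1 v.2 V' hV' hv
    exact ⟨i ⟨y, hyX⟩, hyV, mem_range_self _⟩
  have htend : Tendsto i (residual X) (residual (closure X)) := by
    apply le_countableGenerate_iff_of_countableInterFilter.mpr
    rintro t ⟨ht, htd⟩
    refine residual_of_dense_open (ht.preimage hi.continuous) ?_
    rw [dense_iff_inter_open]
    rintro V hV ⟨v, hv⟩
    obtain ⟨T, hT, rfl⟩ := hi.isInducing.isOpen_iff.1 hV
    have h1 := htd.inter_open_nonempty T hT ⟨i v, hv⟩
    obtain ⟨_, hy, y, rfl⟩ := hid.inter_open_nonempty _ (hT.inter ht) h1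
    exact ⟨y, hy.1, hy.2⟩
  let Y : Set (closure X) := Subtype.val ⁻¹' X
  have hY : MeasurableSet Y := measurable_subtype_coe hB
  obtain ⟨W, hWo, hW⟩ := hY.compl.residualEq_isOpen
  have hWe : W = ∅ := by
    have h1 : i ⁻¹' W = ∅ := by
      refine hX _ (hWo.preimage hi.continuous) ?_
      have h2 := htend.eventually hW.mem_iff
      change (i ⁻¹' W)ᶜ ∈ residual X
      filter_upwards [h2] with x hx hxW
      exact (hx.2 hxW) x.2
    by_contra hne
    obtain ⟨_, hy, y, rfl⟩ := hid.inter_open_nonempty W hWo (nonempty_iff_ne_empty.2 hne)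
    have : y ∈ i ⁻¹' W := hy
    rw [h1] at this
    exact this
  subst hWe
  have hYres : Y ∈ residual (closure X) := by
    filter_upwards [hW.mem_iff] with y hy
    by_contra hyY
    exact hy.1 hyY
  obtain ⟨t, htY, htG, htd⟩ := mem_residual.1 hYres
  let e : t → X := fun y => ⟨y.1.1, htY y.2⟩
  have hec : Continuous e := by fun_prop
  refine ⟨t, e, aux_gdelta_polish htG, ?_, ?_⟩
  · refine IsEmbedding.of_comp hec hi.continuous ?_
    exact IsEmbedding.subtypeVal
  · rw [DenseRange, dense_iff_inter_open]
    rintro V hV ⟨v, hv⟩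
    obtain ⟨T, hT, rfl⟩ := hi.isInducing.isOpen_iff.1 hV
    obtain ⟨y, hyT, hyt⟩ := htd.inter_open_nonempty T hT ⟨i v, hv⟩
    exact ⟨e ⟨y, hyt⟩, hyT, mem_range_self _⟩

/-- A Borel CDH subspace of a Polish space is `Gδ`, hence completely metrizable (Polish). -/
theorem polish_of_borel_CDH
    (P : Type*) [TopologicalSpace P] [PolishSpace P]
    [MeasurableSpace P] [BorelSpace P] (X : Set P)
    (hB : MeasurableSet X)
    (hCDH : IsCDH ↥X) :
    IsGδ X ∧ PolishSpace ↥X := by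
  suffices hG : IsGδ X from ⟨hG, aux_gdelta_polish hG⟩
  obtain ⟨t, e, ht, he, hed⟩ := aux_dense_polish X hB (aux_no_meagre X hB hCDH)
  refine aux_hurewicz hB.compl.analyticSet fun Q hQ hQX => ?_
  obtain ⟨T₀, hT₀c, hT₀d⟩ := exists_countable_dense t
  have hd : Dense (e '' T₀) := hed.dense_image he.continuous hT₀d
  have hc : (e '' T₀).Countable := hT₀c.image e
  have hQc : (Subtype.val ⁻¹' Q : Set X).Countable := hQ.preimage Subtype.val_injective
  obtain ⟨h, hh⟩ := hCDH (e '' T₀) (e '' T₀ ∪ Subtype.val ⁻¹' Q) hc hd (hc.union hQc)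
    (hd.mono subset_union_left)
  refine ⟨range (fun y : t => (h (e y)).1), ?_, ?_, ?_⟩
  · apply aux_polish_gdelta
    exact IsEmbedding.subtypeVal.comp (h.isEmbedding.comp he)
  · intro q hq
    have : (⟨q, hQX hq⟩ : X) ∈ h '' (e '' T₀) := by rw [hh]; exact Or.inr hq
    obtain ⟨_, ⟨y, _, rfl⟩, hy⟩ := this
    exact ⟨y, congrArg Subtype.val hy⟩
  · rintro _ ⟨y, rfl⟩
    exact (h (e y)).2
end

section
/- Let P be a Polish space and let X ⊆ P be a nonempty Borel set such that the subspace X has no isolated points, has a basis consisting of clopen sets (is zero-dimensional), and is countable dense homogeneous. Then the subspace X is homeomorphic to one of the following five spaces: the Cantor space 2^ℕ, the Baire space ℕ^ℕ, the Cantor space with one point removed 2^ℕ ∖ {0}, the topological sum ℕ^ℕ ⊕ 2^ℕ, or the topological sum ℕ^ℕ ⊕ (2^ℕ ∖ {0}). -/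
open Set Filter Topology TopologicalSpace MeasureTheory

theorem aux_isGdelta_polish {Q : Type*} [TopologicalSpace Q] [PolishSpace Q] {G : Set Q}
    (hG : IsGδ G) : PolishSpace G := by
  obtain ⟨O, hO, rfl⟩ := isGδ_iff_eq_iInter_nat.1 hG
  have : ∀ n, PolishSpace (O n) := fun n => (hO n).polishSpace
  let φ : ↥(⋂ n, O n) → ∀ n, O n := fun x n => ⟨x.1, mem_iInter.1 x.2 n⟩
  have hc : Continuous φ := by
    refine continuous_pi fun n => ?_
    exact continuous_subtype_val.subtype_mk _
  have hi : IsEmbedding φ := by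
    refine IsEmbedding.of_comp hc (g := fun z => ((z 0 : O 0) : Q)) ?_ ?_
    · fun_prop
    · exact IsEmbedding.subtypeVal
  have hr : range φ = ⋂ n, {z : ∀ n, O n | ((z n : O n) : Q) = z 0} := by
    ext z
    simp only [mem_range, mem_iInter, mem_ofPred_eq]
    constructor
    · rintro ⟨x, rfl⟩ n; rfl
    · intro h
      refine ⟨⟨z 0, mem_iInter.2 fun n => ?_⟩, ?_⟩
      · rw [← h n]; exact (z n).2
      · funext n; exact Subtype.ext (h n).symm
  have hcl : IsClosed (range φ) := by
    rw [hr]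
    refine isClosed_iInter fun n => isClosed_eq ?_ ?_ <;> fun_prop
  exact (IsClosedEmbedding.mk hi hcl).polishSpace

theorem aux_range_isGdelta {Y Q : Type*} [TopologicalSpace Y] [PolishSpace Y]
    [TopologicalSpace Q] [PolishSpace Q] {f : Y → Q} (hf : IsEmbedding f) :
    IsGδ (range f) := by
  let _ := upgradeIsCompletelyMetrizable Y
  let _ := upgradeIsCompletelyMetrizable Q
  let O : ℕ → Set Q := fun n => ⋃₀ {V | IsOpen V ∧ ∀ x ∈ f ⁻¹' V, ∀ y ∈ f ⁻¹' V,
    dist x y < 1 / ((n : ℝ) + 1)}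
  have hO : ∀ n, IsOpen (O n) := fun n => isOpen_sUnion fun V hV => hV.1
  have : range f = closure (range f) ∩ ⋂ n, O n := by
    apply Subset.antisymm
    · rintro _ ⟨y, rfl⟩
      refine ⟨subset_closure ⟨y, rfl⟩, mem_iInter.2 fun n => ?_⟩
      have hpos : (0 : ℝ) < 1 / ((n : ℝ) + 1) / 2 := by positivity
      obtain ⟨V, hV, hVe⟩ := hf.isInducing.isOpen_iff.1
        (Metric.isOpen_ball (x := y) (ε := 1 / ((n : ℝ) + 1) / 2))
      refine ⟨V, ⟨hV, ?_⟩, ?_⟩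
      · rw [hVe]; intro a ha b hb
        have := dist_triangle_right a b y
        rw [Metric.mem_ball] at ha hb
        linarith
      · change y ∈ f ⁻¹' V
        rw [hVe]; exact Metric.mem_ball_self hpos
    · rintro q ⟨hq, hqO⟩
      have hne : (comap f (𝓝 q)).NeBot := by
        rw [comap_neBot_iff]
        intro t ht
        obtain ⟨_, h1, y, rfl⟩ := mem_closure_iff_nhds.1 hq t ht
        exact ⟨y, h1⟩
      have hcau : Cauchy (comap f (𝓝 q)) := by
        rw [Metric.cauchy_iff]
        refine ⟨hne, fun ε hε => ?_⟩
        obtain ⟨n, hn⟩ := exists_nat_one_div_lt hε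
        obtain ⟨V, ⟨hV, hVd⟩, hqV⟩ := mem_iInter.1 hqO n
        exact ⟨f ⁻¹' V, preimage_mem_comap (hV.mem_nhds hqV),
          fun x hx y hy => (hVd x hx y hy).trans hn⟩
      obtain ⟨y, hy⟩ := CompleteSpace.complete hcau
      refine ⟨y, ?_⟩
      have h1 : Tendsto f (comap f (𝓝 q)) (𝓝 q) := tendsto_comap
      have h2 : Tendsto f (comap f (𝓝 q)) (𝓝 (f y)) := (hf.continuous.tendsto y).mono_left hy
      exact tendsto_nhds_unique h2 h1
  rw [this]
  exact isClosed_closure.isGδ.inter (IsGδ.iInter_of_isOpen hO)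

theorem aux_hurewicz_s7 {Q : Type*} [TopologicalSpace Q] [PolishSpace Q]
    [MeasurableSpace Q] [BorelSpace Q] {B : Set Q} (hB : MeasurableSet B)
    (h : ∀ A ⊆ B, A.Countable → ∃ G, IsGδ G ∧ A ⊆ G ∧ G ⊆ B) : IsGδ B := by
  have hA := hB.compl.analyticSet
  rw [AnalyticSet] at hA
  rcases hA with hA | ⟨f, hf, hr⟩
  · rw [compl_empty_iff.1 hA]; exact IsGδ.univ
  let bs := countableBasis (ℕ → ℕ)
  let good : Set (ℕ → ℕ) → Prop := fun V => ∃ H, IsGδ H ∧ B ⊆ H ∧ ∀ x ∈ V, f x ∉ H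
  let E : Set (ℕ → ℕ) := ⋃₀ {V ∈ bs | good V}
  have hEo : IsOpen E := isOpen_sUnion fun V hV => isOpen_of_mem_countableBasis hV.1
  have hEgood : good E := by
    have hcount : {V ∈ bs | good V}.Countable := (countable_countableBasis _).mono (sep_subset _ _)
    have hex : ∀ V : {V ∈ bs | good V}, good V.1 := fun V => V.2.2
    choose H hH hBH hd using hex
    have := hcount.to_subtype
    refine ⟨⋂ V, H V, IsGδ.iInter hH, subset_iInter hBH, ?_⟩
    rintro x ⟨V, hV, hxV⟩ hx
    exact hd ⟨V, hV⟩ x hxV (mem_iInter.1 hx _)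
  by_cases hC : Eᶜ = ∅
  · obtain ⟨H, hH, hBH, hd⟩ := hEgood
    rw [compl_empty_iff] at hC
    have : B = H := by
      apply Subset.antisymm hBH
      intro x hx
      by_contra hxB
      have : x ∈ range f := by rw [hr]; exact hxB
      obtain ⟨y, rfl⟩ := this
      exact hd y (hC ▸ mem_univ y) hx
    rw [this]; exact hH
  exfalso
  have key : ∀ V : bs, (V.1 ∩ Eᶜ).Nonempty → ∃ x ∈ B, x ∈ closure (f '' (V.1 ∩ Eᶜ)) := by
    intro V hV
    by_contra hcon
    push Not at hcon
    obtain ⟨H, hH, hBH, hd⟩ := hEgood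
    have : good V.1 := by
      refine ⟨H ∩ (closure (f '' (V.1 ∩ Eᶜ)))ᶜ, hH.inter isClosed_closure.isOpen_compl.isGδ,
        subset_inter hBH fun x hx => hcon x hx, ?_⟩
      rintro x hx ⟨h1, h2⟩
      by_cases hxE : x ∈ E
      · exact hd x hxE h1
      · exact h2 (subset_closure ⟨x, ⟨hx, hxE⟩, rfl⟩)
    obtain ⟨x, hx, hxE⟩ := hV
    exact hxE ⟨V.1, ⟨V.2, this⟩, hx⟩
  have hQne : Nonempty Q := ⟨f 0⟩
  choose! p hpB hpc using key
  have := (countable_countableBasis (ℕ → ℕ)).to_subtype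
  obtain ⟨G, hG, hAG, hGB⟩ := h (p '' {V : bs | (V.1 ∩ Eᶜ).Nonempty}) (by
    rintro _ ⟨V, hV, rfl⟩; exact hpB V hV) ((Set.to_countable _).image _)
  obtain ⟨O, hO, rfl⟩ := isGδ_iff_eq_iInter_nat.1 hG
  have hpol : PolishSpace ↥(Eᶜ) := hEo.isClosed_compl.polishSpace
  have hdense : Dense (⋂ n, {c : ↥(Eᶜ) | f c.1 ∈ O n}) := by
    apply dense_iInter_of_isOpen
    · intro n; exact (hO n).preimage (hf.comp continuous_subtype_val)
    · intro n
      rw [dense_iff_inter_open]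
      rintro W hW ⟨c, hc⟩
      obtain ⟨W', hW', rfl⟩ := isOpen_induced_iff.1 hW
      obtain ⟨V, hV, hcV, hVW⟩ := (isBasis_countableBasis (ℕ → ℕ)).exists_subset_of_mem_open hc hW'
      have hne : (V ∩ Eᶜ).Nonempty := ⟨c.1, hcV, c.2⟩
      have h1 := hpc ⟨V, hV⟩ hne
      have h2 : p ⟨V, hV⟩ ∈ O n := mem_iInter.1 (hAG ⟨⟨V, hV⟩, hne, rfl⟩) n
      obtain ⟨_, h3, z, ⟨hzV, hzE⟩, rfl⟩ := mem_closure_iff.1 h1 _ (hO n) h2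
      exact ⟨⟨z, hzE⟩, hVW hzV, h3⟩
  have : Nonempty ↥(Eᶜ) := (nonempty_iff_ne_empty.2 hC).to_subtype
  obtain ⟨c, hc⟩ := hdense.nonempty
  have h1 : f c.1 ∈ B := hGB (mem_iInter.2 fun n => mem_iInter.1 hc n)
  have h2 : f c.1 ∈ Bᶜ := hr ▸ mem_range_self _
  exact h2 h1

theorem aux_not_isOpen_singleton_cantor (x : ℕ → Bool) : (𝓝[≠] x).NeBot := by
  have h : Tendsto (fun n : ℕ => Function.update x n (!x n)) atTop (𝓝[≠] x) := by
    rw [tendsto_nhdsWithin_iff]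
    constructor
    · rw [tendsto_pi_nhds]
      intro i
      apply tendsto_const_nhds.congr'
      filter_upwards [eventually_gt_atTop i] with n hn
      rw [Function.update_of_ne (by omega)]
    · refine Eventually.of_forall fun n hn => ?_
      have := congrFun hn n
      simp at this
  exact h.neBot

theorem aux_cantor_in_borel {Q : Type*} [tQ : TopologicalSpace Q] [PolishSpace Q]
    [MeasurableSpace Q] [BorelSpace Q] {B : Set Q} (hB : MeasurableSet B) (hc : ¬ B.Countable) :
    ∃ g : (ℕ → Bool) → Q, range g ⊆ B ∧ Continuous g ∧ Function.Injective g := by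
  obtain ⟨t', htt', hpol, hcl, -⟩ := hB.isClopenable
  obtain ⟨g, hgr, hgc, hgi⟩ :=
    @IsClosed.exists_nat_bool_injection_of_not_countable Q t' hpol _ hcl hc
  exact ⟨g, hgr, @continuous_le_rng _ _ _ _ t' tQ htt' hgc, hgi⟩

theorem aux_tendsto_residual {Y Q : Type*} [TopologicalSpace Y] [TopologicalSpace Q]
    {f : Y → Q} (hf : IsEmbedding f) (hd : DenseRange f) {s : Set Q} (hs : s ∈ residual Q) :
    f ⁻¹' s ∈ residual Y := by
  rw [mem_residual_iff] at hs ⊢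
  obtain ⟨S, hSo, hSd, hSc, hSs⟩ := hs
  refine ⟨(fun t => f ⁻¹' t) '' S, ?_, ?_, hSc.image _, ?_⟩
  · rintro _ ⟨t, ht, rfl⟩; exact (hSo t ht).preimage hf.continuous
  · rintro _ ⟨t, ht, rfl⟩
    rw [dense_iff_inter_open]
    rintro W hW ⟨y, hy⟩
    obtain ⟨W', hW', rfl⟩ := hf.isInducing.isOpen_iff.1 hW
    obtain ⟨q, hq1, hq2⟩ := dense_iff_inter_open.1 (hSd t ht) W' hW' ⟨_, hy⟩
    obtain ⟨z, hz⟩ := hd.exists_mem_open (hW'.inter (hSo t ht)) ⟨q, hq1, hq2⟩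
    exact ⟨z, hz.1, hz.2⟩
  · intro y hy
    apply hSs
    intro t ht
    exact hy _ ⟨t, ht, rfl⟩

/-- A crowded Borel CDH space has no nonempty meagre open subset. -/
theorem aux_no_meagre_s7 {Y Q : Type*} [TopologicalSpace Y] [TopologicalSpace Q] [PolishSpace Q]
    [MeasurableSpace Q] [BorelSpace Q] {f : Y → Q} (hf : IsEmbedding f)
    (hB : MeasurableSet (range f)) (hiso : ∀ x : Y, ¬ IsOpen ({x} : Set Y)) (hY : IsCDH Y)
    (U₀ : Set Y) (hU₀ : IsOpen U₀) (hm₀ : IsMeagre U₀) : U₀ = ∅ := by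
  by_contra hne
  have : T2Space Y := hf.t2Space
  have : SecondCountableTopology Y := hf.secondCountableTopology
  have hperf : ∀ x : Y, (𝓝[≠] x).NeBot := fun x => by
    rw [neBot_iff, ne_eq, ← isOpen_singleton_iff_punctured_nhds]; exact hiso x
  -- the largest meagre open set
  let U : Set Y := ⋃₀ {V ∈ countableBasis Y | IsMeagre V}
  have hUo : IsOpen U := isOpen_sUnion fun V hV => isOpen_of_mem_countableBasis hV.1
  have hUm : IsMeagre U := by
    have hc : {V ∈ countableBasis Y | IsMeagre V}.Countable :=
      (countable_countableBasis _).mono (sep_subset _ _)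
    have : U = ⋃ V ∈ {V ∈ countableBasis Y | IsMeagre V}, V := sUnion_eq_biUnion
    rw [this]
    exact isMeagre_biUnion hc fun V hV => hV.2
  have hUmax : ∀ W : Set Y, IsOpen W → IsMeagre W → W ⊆ U := by
    intro W hW hWm x hx
    obtain ⟨V, hV, hxV, hVW⟩ := (isBasis_countableBasis Y).exists_subset_of_mem_open hx hW
    exact ⟨V, ⟨hV, hWm.mono hVW⟩, hxV⟩
  have hUne : U.Nonempty := (nonempty_iff_ne_empty.2 hne).mono (hUmax _ hU₀ hm₀)
  have hinv1 : ∀ h : Y ≃ₜ Y, h ⁻¹' U ⊆ U := fun h =>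
    hUmax _ (hUo.preimage h.continuous) (hUm.preimage_of_isOpenMap h.continuous h.isOpenMap)
  have hinv : ∀ (h : Y ≃ₜ Y) (x : Y), h x ∈ U ↔ x ∈ U := by
    intro h x
    refine ⟨fun hx => hinv1 h hx, fun hx => hinv1 h.symm ?_⟩
    simpa using hx
  -- closed nowhere dense cover
  obtain ⟨F, hFc, hFi, hUF⟩ : ∃ F : ℕ → Set Y, (∀ n, IsClosed (F n)) ∧
      (∀ n, interior (F n) = ∅) ∧ U ⊆ ⋃ n, F n := by
    obtain ⟨S, hS, hSc, hSU⟩ := isMeagre_iff_countable_union_isNowhereDense.1 hUm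
    obtain ⟨g, hg⟩ := (hSc.insert ∅).exists_eq_range ⟨∅, mem_insert _ _⟩
    have hgn : ∀ n, IsNowhereDense (g n) := by
      intro n
      have : g n ∈ insert ∅ S := hg ▸ mem_range_self n
      rcases this with h | h
      · rw [h]; exact isNowhereDense_empty
      · exact hS _ h
    refine ⟨fun n => closure (g n), fun n => isClosed_closure, fun n => hgn n, ?_⟩
    intro x hx
    obtain ⟨t, ht, hxt⟩ := hSU hx
    have : t ∈ range g := hg ▸ mem_insert_of_mem _ ht
    obtain ⟨n, rfl⟩ := this
    exact mem_iUnion.2 ⟨n, subset_closure hxt⟩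
  -- a dense sequence meeting each F n in a finite set
  obtain ⟨b, hb⟩ : ∃ b : ℕ → Set Y, countableBasis Y = range b := by
    apply (countable_countableBasis Y).exists_eq_range
    by_contra hemp
    rw [not_nonempty_iff_eq_empty] at hemp
    obtain ⟨x, hx⟩ := hUne
    obtain ⟨V, hV, -⟩ := (isBasis_countableBasis Y).exists_subset_of_mem_open hx hUo
    rw [hemp] at hV; exact hV
  have hbm : ∀ n, b n ∈ countableBasis Y := fun n => hb ▸ mem_range_self n
  have hpick : ∀ n, ∃ d ∈ b n, ∀ i ≤ n, d ∉ F i := by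
    intro n
    have hfin : interior (⋃ i ∈ Finset.range (n + 1), F i) = ∅ := by
      have : ∀ k, interior (⋃ i ∈ Finset.range k, F i) = ∅ := by
        intro k
        induction k with
        | zero => simp
        | succ k ih =>
          have : (⋃ i ∈ Finset.range (k + 1), F i) = F k ∪ ⋃ i ∈ Finset.range k, F i := by
            rw [Finset.range_add_one, Finset.set_biUnion_insert]
          rw [this, interior_union_isClosed_of_interior_empty (hFc k) ih, hFi]
      exact this _
    have hbne := nonempty_of_mem_countableBasis (hbm n)
    have hbo := isOpen_of_mem_countableBasis (hbm n)
    by_contra hcon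
    push Not at hcon
    have : b n ⊆ interior (⋃ i ∈ Finset.range (n + 1), F i) := by
      apply interior_maximal _ hbo
      intro x hx
      obtain ⟨i, hi, hxi⟩ := hcon x hx
      exact mem_biUnion (Finset.mem_coe.2 (Finset.mem_range.2 (by omega))) hxi
    rw [hfin] at this
    exact hbne.ne_empty (subset_empty_iff.1 this)
  choose d hdb hdF using hpick
  have hDd : Dense (range d) := by
    rw [dense_iff_inter_open]
    rintro W hW ⟨x, hx⟩
    obtain ⟨V, hV, hxV, hVW⟩ := (isBasis_countableBasis Y).exists_subset_of_mem_open hx hW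
    rw [hb] at hV
    obtain ⟨n, rfl⟩ := hV
    exact ⟨d n, hVW (hdb n), n, rfl⟩
  have hDc : (range d).Countable := countable_range d
  have hDG : IsGδ (U ∩ range d) := by
    have hfin : ∀ n, (F n ∩ range d).Finite := by
      intro n
      apply ((finite_lt_nat n).image d).subset
      rintro _ ⟨hx, m, rfl⟩
      refine ⟨m, ?_, rfl⟩
      by_contra hlt
      exact hdF m n (not_lt.1 hlt) hx
    have : U ∩ range d = U ∩ ⋂ n, ((F n)ᶜ ∪ (F n ∩ range d)) := by
      ext x
      constructor
      · rintro ⟨h1, h2⟩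
        refine ⟨h1, mem_iInter.2 fun n => ?_⟩
        by_cases hx : x ∈ F n
        · exact Or.inr ⟨hx, h2⟩
        · exact Or.inl hx
      · rintro ⟨h1, h2⟩
        refine ⟨h1, ?_⟩
        obtain ⟨n, hn⟩ := mem_iUnion.1 (hUF h1)
        rcases mem_iInter.1 h2 n with h | h
        · exact absurd hn h
        · exact h.2
    rw [this]
    exact hUo.isGδ.inter (IsGδ.iInter fun n => (hFc n).isOpen_compl.isGδ.union (hfin n).isGδ)
  have hall : ∀ D' : Set Y, D'.Countable → Dense D' → IsGδ (U ∩ D') := by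
    intro D' hc hd
    obtain ⟨h, hh⟩ := hY _ _ hDc hDd hc hd
    have : U ∩ D' = h.symm ⁻¹' (U ∩ range d) := by
      ext x
      rw [preimage_inter, ← h.image_eq_preimage_symm (range d), hh]
      simp only [mem_inter_iff, mem_preimage, hinv]
    rw [this]
    exact hDG.preimage h.symm.continuous
  have hA : ∀ A ⊆ U, A.Countable → IsGδ A := by
    intro A hAU hAc
    have h1 := hall (A ∪ range d) (hAc.union hDc) (hDd.mono subset_union_right)
    have h2 : IsGδ (range d \ A)ᶜ := (hDc.mono sdiff_subset).isGδ_compl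
    have : A = (U ∩ (A ∪ range d)) ∩ (range d \ A)ᶜ := by
      ext x
      constructor
      · intro hx
        exact ⟨⟨hAU hx, Or.inl hx⟩, fun h => h.2 hx⟩
      · rintro ⟨⟨-, h1⟩, h2⟩
        by_contra hx
        exact h2 ⟨h1.resolve_left hx, hx⟩
    rw [this]; exact h1.inter h2
  by_cases hUc : U.Countable
  · obtain ⟨u, hu⟩ := hUne
    have hd1 : Dense (range d ∪ U) := hDd.mono subset_union_left
    obtain ⟨h, hh⟩ := hY _ ((range d ∪ U) \ {u}) (hDc.union hUc) hd1
      ((hDc.union hUc).mono sdiff_subset) (hd1.sdiff_singleton u)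
    have h1 : h (h.symm u) ∈ h '' (range d ∪ U) := by
      refine mem_image_of_mem _ (Or.inr ?_)
      rwa [hinv]
    rw [hh] at h1
    exact h1.2 (by simp)
  · have hBU : MeasurableSet (f '' U) := by
      obtain ⟨W, hW, hWU⟩ := hf.isInducing.isOpen_iff.1 hUo
      rw [← hWU, image_preimage_eq_inter_range]
      exact hW.measurableSet.inter hB
    have hBnc : ¬ (f '' U).Countable := fun h =>
      hUc (countable_of_injective_of_countable_image hf.injective.injOn h)
    obtain ⟨g, hgr, hgc', hgi⟩ := aux_cantor_in_borel hBU hBnc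
    have hex : ∀ z, ∃ y ∈ U, f y = g z := fun z => hgr (mem_range_self z)
    choose k hkU hk using hex
    have hkc : Continuous k := by
      rw [hf.isInducing.continuous_iff]
      have : f ∘ k = g := funext hk
      rw [this]; exact hgc'
    have hki : Function.Injective k := by
      intro a b hab
      apply hgi
      rw [← hk, ← hk, hab]
    obtain ⟨C, hCc, hCd⟩ := exists_countable_dense (ℕ → Bool)
    have hCG : IsGδ C := by
      have := (hA (k '' C) (by rintro _ ⟨z, -, rfl⟩; exact hkU z) (hCc.image k)).preimage hkc
      rwa [preimage_image_eq _ hki] at this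
    apply not_isMeagre_of_isGδ_of_dense hCG hCd
    have : C = ⋃ z ∈ C, {z} := by simp
    rw [this]
    refine isMeagre_biUnion hCc fun z hz => IsNowhereDense.isMeagre ?_
    have := aux_not_isOpen_singleton_cantor z
    rw [isClosed_singleton.isNowhereDense_iff, interior_singleton]

/-- A crowded Borel CDH space is Polish. -/
theorem aux_polish {Y Q : Type*} [TopologicalSpace Y] [TopologicalSpace Q] [PolishSpace Q]
    [MeasurableSpace Q] [BorelSpace Q] {f : Y → Q} (hf : IsEmbedding f) (hd : DenseRange f)
    (hB : MeasurableSet (range f)) (hiso : ∀ x : Y, ¬ IsOpen ({x} : Set Y)) (hY : IsCDH Y) :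
    PolishSpace Y := by
  have hmain : IsGδ (range f) := by
    obtain ⟨O, hO, hBO⟩ := hB.residualEq_isOpen
    have hOd : Dense O := by
      rw [dense_iff_closure_eq]
      by_contra hne
      have hWo : IsOpen (f ⁻¹' (closure O)ᶜ) :=
        isClosed_closure.isOpen_compl.preimage hf.continuous
      have hWm : IsMeagre (f ⁻¹' (closure O)ᶜ) := by
        have h1 := aux_tendsto_residual hf hd hBO
        refine mem_of_superset h1 fun y hy hyc => ?_
        have h2 : (f y ∈ range f) = (f y ∈ O) := hy
        exact hyc (subset_closure (h2 ▸ mem_range_self y))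
      have hemp := aux_no_meagre_s7 hf hB hiso hY _ hWo hWm
      have hne' : ((closure O)ᶜ).Nonempty := nonempty_compl.2 hne
      obtain ⟨y, hy⟩ := hd.exists_mem_open isClosed_closure.isOpen_compl hne'
      have : y ∈ f ⁻¹' (closure O)ᶜ := hy
      rw [hemp] at this; exact this
    have hres : range f ∈ residual Q := by
      filter_upwards [hBO, residual_of_dense_open hO hOd] with x hx hxO
      have h2 : (x ∈ range f) = (x ∈ O) := hx
      rw [h2]; exact hxO
    obtain ⟨G, hGr, hGG, hGd⟩ := mem_residual.1 hres
    obtain ⟨D, hDG, hDc, hDd⟩ := hGd.exists_countable_dense_subset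
    have hDY : Dense (f ⁻¹' D) := by
      intro y
      rw [hf.isInducing.closure_eq_preimage_closure_image,
        image_preimage_eq_of_subset (hDG.trans hGr)]
      exact hDd _
    have hDYc : (f ⁻¹' D).Countable := hDc.preimage hf.injective
    have hpG : PolishSpace G := aux_isGdelta_polish hGG
    have hpY : PolishSpace ↥(f ⁻¹' G) := by
      have he : IsEmbedding (G.restrictPreimage f) := hf.restrictPreimage G
      have hr : range (G.restrictPreimage f) = univ := by
        rw [range_restrictPreimage]
        ext x
        simpa using hGr x.2
      exact (IsClosedEmbedding.mk he (hr ▸ isClosed_univ)).polishSpace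
    apply aux_hurewicz_s7 hB
    intro A hA hAc
    obtain ⟨h, hh⟩ := hY _ (f ⁻¹' D ∪ f ⁻¹' A) hDYc hDY
      (hDYc.union (hAc.preimage hf.injective)) (hDY.mono subset_union_left)
    refine ⟨range (fun y : ↥(f ⁻¹' G) => f (h y.1)), ?_, ?_, ?_⟩
    · exact aux_range_isGdelta ((hf.comp h.isEmbedding).comp IsEmbedding.subtypeVal)
    · intro a ha
      obtain ⟨y, rfl⟩ := hA ha
      have : y ∈ h '' (f ⁻¹' D) := by rw [hh]; exact Or.inr ha
      obtain ⟨z, hz, rfl⟩ := this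
      exact ⟨⟨z, hDG hz⟩, rfl⟩
    · rintro _ ⟨y, rfl⟩
      exact mem_range_self _
  have := aux_isGdelta_polish hmain
  exact hf.toHomeomorph.isClosedEmbedding.polishSpace

theorem aux_scheme {Y β : Type*} [TopologicalSpace Y] [TopologicalSpace β]
    [DiscreteTopology β] (A : List β → Set Y) (h0 : A [] = univ) (ho : ∀ s, IsOpen (A s))
    (hsub : ∀ s b, A (b :: s) ⊆ A s) (hcov : ∀ s, ∀ x ∈ A s, ∃ b, x ∈ A (b :: s))
    (hdis : ∀ s b b' x, x ∈ A (b :: s) → x ∈ A (b' :: s) → b = b') :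
    ∃ f : Y → (ℕ → β), Continuous f ∧ (∀ x n, x ∈ A (PiNat.res (f x) n)) ∧
      (∀ x y n, x ∈ A (PiNat.res y n) → PiNat.res (f x) n = PiNat.res y n) := by
  rcases isEmpty_or_nonempty Y with hY | ⟨⟨y₀⟩⟩
  · exact ⟨fun x => hY.elim x, continuous_of_const fun x => hY.elim x, fun x => hY.elim x,
      fun x => hY.elim x⟩
  have : Nonempty β := ⟨(hcov [] y₀ (h0 ▸ mem_univ _)).choose⟩
  choose! nb hnb using hcov
  let c : Y → ℕ → List β := fun x n => Nat.rec [] (fun _ l => nb l x :: l) n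
  let f : Y → ℕ → β := fun x n => nb (c x n) x
  have hc : ∀ x n, PiNat.res (f x) n = c x n := by
    intro x n
    induction n with
    | zero => rfl
    | succ n ih => rw [PiNat.res_succ, ih]
  have hmem : ∀ x n, x ∈ A (PiNat.res (f x) n) := by
    intro x n
    induction n with
    | zero => rw [PiNat.res_zero, h0]; exact mem_univ _
    | succ n ih =>
      rw [PiNat.res_succ]
      have h1 : f x n = nb (PiNat.res (f x) n) x := by rw [hc]
      rw [h1]
      exact hnb _ _ ih
  have huniq : ∀ x y n, x ∈ A (PiNat.res y n) → PiNat.res (f x) n = PiNat.res y n := by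
    intro x y n
    induction n with
    | zero => intro _; rfl
    | succ n ih =>
      intro hx
      rw [PiNat.res_succ] at hx
      have h1 := ih (hsub _ _ hx)
      have h2 := hmem x (n + 1)
      rw [PiNat.res_succ, h1] at h2
      rw [PiNat.res_succ, PiNat.res_succ, h1, hdis _ _ _ _ h2 hx]
  refine ⟨f, ?_, hmem, huniq⟩
  refine continuous_pi fun n => ?_
  rw [continuous_iff_continuousAt]
  intro x
  have : (fun z => f z n) =ᶠ[𝓝 x] fun _ => f x n := by
    filter_upwards [(ho _).mem_nhds (hmem x (n + 1))] with z hz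
    have := huniq z (f x) (n + 1) hz
    rw [PiNat.res_succ, PiNat.res_succ, List.cons.injEq] at this
    exact this.1
  exact continuousAt_const.congr this.symm

/-- Brouwer's characterization of the Cantor space. -/
theorem aux_brouwer {Y : Type*} [TopologicalSpace Y] [CompactSpace Y] [T2Space Y]
    [SecondCountableTopology Y] [Nonempty Y] (hiso : ∀ x : Y, ¬ IsOpen ({x} : Set Y))
    (hzd : IsTopologicalBasis {U : Set Y | IsClopen U}) : Nonempty (Y ≃ₜ (ℕ → Bool)) := by
  obtain ⟨C, hCc, hCsep⟩ : ∃ C : ℕ → Set Y, (∀ n, IsClopen (C n)) ∧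
      ∀ x y, x ≠ y → ∃ n, x ∈ C n ∧ y ∉ C n := by
    obtain ⟨bs, hbs, hbc, hbb⟩ := hzd.exists_countable
    obtain ⟨g, hg⟩ := (hbc.insert ∅).exists_eq_range ⟨∅, mem_insert _ _⟩
    refine ⟨g, ?_, ?_⟩
    · intro n
      have : g n ∈ insert ∅ bs := hg ▸ mem_range_self n
      rcases this with h | h
      · rw [h]; exact isClopen_empty
      · exact hbs h
    · intro x y hxy
      obtain ⟨V, hV, hxV, hVs⟩ := hbb.exists_subset_of_mem_open
        (show x ∈ ({y} : Set Y)ᶜ from hxy) isOpen_compl_singleton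
      have : V ∈ range g := hg ▸ mem_insert_of_mem _ hV
      obtain ⟨n, rfl⟩ := this
      exact ⟨n, hxV, fun hy => hVs hy rfl⟩
  have hsplit : ∀ (S : {S : Set Y // IsClopen S ∧ S.Nonempty}) (n : ℕ), ∃ T : Set Y,
      IsClopen T ∧ T ⊆ S.1 ∧ T.Nonempty ∧ (S.1 \ T).Nonempty ∧
      ((S.1 ∩ C n).Nonempty → (S.1 \ C n).Nonempty → T = S.1 ∩ C n) := by
    rintro ⟨S, hS, hSne⟩ n
    by_cases h : (S ∩ C n).Nonempty ∧ (S \ C n).Nonempty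
    · refine ⟨S ∩ C n, hS.inter (hCc n), inter_subset_left, h.1, ?_, fun _ _ => rfl⟩
      obtain ⟨x, hx⟩ := h.2
      exact ⟨x, hx.1, fun h => hx.2 h.2⟩
    · obtain ⟨x, hx⟩ := hSne
      have : ∃ y ∈ S, y ≠ x := by
        by_contra hcon
        push Not at hcon
        apply hiso x
        have : S = {x} := Subset.antisymm hcon (singleton_subset_iff.2 hx)
        rw [← this]; exact hS.isOpen
      obtain ⟨y, hy, hyx⟩ := this
      obtain ⟨m, hxm, hym⟩ := hCsep x y hyx.symm
      exact ⟨S ∩ C m, hS.inter (hCc m), inter_subset_left, ⟨x, hx, hxm⟩,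
        ⟨y, hy, fun h => hym h.2⟩, fun h1 h2 => absurd ⟨h1, h2⟩ h⟩
  choose T hTc hTS hTne hTd hTC using hsplit
  let B : List Bool → {S : Set Y // IsClopen S ∧ S.Nonempty} := fun s =>
    List.rec ⟨univ, isClopen_univ, univ_nonempty⟩
      (fun b l S => if b then ⟨T S l.length, hTc S _, hTne S _⟩
        else ⟨S.1 \ T S l.length, IsClopen.diff S.2.1 (hTc S _), hTd S _⟩) s
  have hBt : ∀ s, (B (true :: s)).1 = T (B s) s.length := fun s => rfl
  have hBf : ∀ s, (B (false :: s)).1 = (B s).1 \ T (B s) s.length := fun s => rfl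
  have hsub : ∀ s b, (B (b :: s)).1 ⊆ (B s).1 := by
    intro s b
    cases b
    · rw [hBf]; exact sdiff_subset
    · rw [hBt]; exact hTS _ _
  obtain ⟨f, hfc, hfm, hfu⟩ := aux_scheme (fun s => (B s).1) rfl (fun s => (B s).2.1.isOpen) hsub
    (by
      intro s x hx
      by_cases h : x ∈ T (B s) s.length
      · exact ⟨true, h⟩
      · exact ⟨false, hx, h⟩)
    (by
      intro s b b' x h1 h2
      cases b <;> cases b'
      · rfl
      · exact absurd h2 h1.2
      · exact absurd h1 h2.2
      · rfl)
  have hinj : Function.Injective f := by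
    intro x y hxy
    by_contra hne
    obtain ⟨n, hxn, hyn⟩ := hCsep x y hne
    have hx := hfm x n
    have hy := hfm y n
    have hx1 := hfm x (n + 1)
    have hy1 := hfm y (n + 1)
    rw [← hxy] at hy hy1
    rw [PiNat.res_succ] at hx1 hy1
    have hT := hTC (B (PiNat.res (f x) n)) n ⟨x, hx, hxn⟩ ⟨y, hy, hyn⟩
    cases hb : f x n
    · rw [hb] at hx1
      have : x ∉ T (B (PiNat.res (f x) n)) (PiNat.res (f x) n).length := hx1.2
      rw [PiNat.res_length, hT] at this
      exact this ⟨hx, hxn⟩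
    · rw [hb] at hy1
      have : y ∈ T (B (PiNat.res (f x) n)) (PiNat.res (f x) n).length := hy1
      rw [PiNat.res_length, hT] at this
      exact hyn this.2
  have hsurj : Function.Surjective f := by
    intro y
    obtain ⟨x, hx⟩ := IsCompact.nonempty_iInter_of_sequence_nonempty_isCompact_isClosed
      (fun n => (B (PiNat.res y n)).1) (fun n => by
        change (B (PiNat.res y (n + 1))).1 ⊆ _
        rw [PiNat.res_succ]; exact hsub _ _)
      (fun n => (B (PiNat.res y n)).2.2) (B (PiNat.res y 0)).2.1.isClosed.isCompact
      (fun n => (B (PiNat.res y n)).2.1.isClosed)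
    refine ⟨x, PiNat.res_injective (funext fun n => hfu x y n (mem_iInter.1 hx n))⟩
  exact ⟨Continuous.homeoOfEquivCompactToT2 (f := Equiv.ofBijective f ⟨hinj, hsurj⟩) hfc⟩

/-- Partition of a clopen set into infinitely many nonempty small clopen sets. -/
theorem aux_partition {Y : Type*} [TopologicalSpace Y] [SecondCountableTopology Y]
    (hzd : IsTopologicalBasis {U : Set Y | IsClopen U}) (p : Set Y → Prop)
    (hp : ∀ s t, s ⊆ t → p t → p s) (S : Set Y) (hS : IsClopen S)
    (hloc : ∀ x ∈ S, ∃ N ∈ 𝓝 x, p N)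
    (hfin : ¬ ∃ F : Set (Set Y), F.Finite ∧ (∀ t ∈ F, p t) ∧ S ⊆ ⋃₀ F) :
    ∃ T : ℕ → Set Y, (∀ n, IsClopen (T n)) ∧ (∀ n, (T n).Nonempty) ∧ (∀ n, p (T n)) ∧
      (∀ m n x, x ∈ T m → x ∈ T n → m = n) ∧ ⋃ n, T n = S := by
  obtain ⟨bs, hbs, hbc, hbb⟩ := hzd.exists_countable
  let K : Set (Set Y) := {V ∈ bs | p V ∧ V ⊆ S}
  have hKne : K.Nonempty := by
    by_contra hemp
    rw [not_nonempty_iff_eq_empty] at hemp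
    apply hfin
    refine ⟨∅, finite_empty, by simp, ?_⟩
    intro x hx
    obtain ⟨N, hN, hpN⟩ := hloc x hx
    obtain ⟨V, hV, hxV, hVN⟩ := hbb.mem_nhds_iff.1 (inter_mem hN (hS.isOpen.mem_nhds hx))
    have : V ∈ K := ⟨hV, hp _ _ (hVN.trans inter_subset_left) hpN, hVN.trans inter_subset_right⟩
    rw [hemp] at this; exact absurd this (notMem_empty _)
  obtain ⟨g, hg⟩ := (hbc.mono (sep_subset bs _) : K.Countable).exists_eq_range hKne
  have hgK : ∀ n, g n ∈ K := fun n => hg ▸ mem_range_self n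
  have hgU : ⋃ n, g n = S := by
    apply Subset.antisymm (iUnion_subset fun n => (hgK n).2.2)
    intro x hx
    obtain ⟨N, hN, hpN⟩ := hloc x hx
    obtain ⟨V, hV, hxV, hVN⟩ := hbb.mem_nhds_iff.1 (inter_mem hN (hS.isOpen.mem_nhds hx))
    have : V ∈ K := ⟨hV, hp _ _ (hVN.trans inter_subset_left) hpN, hVN.trans inter_subset_right⟩
    rw [hg] at this
    obtain ⟨n, rfl⟩ := this
    exact mem_iUnion.2 ⟨n, hxV⟩
  let d : ℕ → Set Y := fun n => g n \ ⋃ i ∈ Finset.range n, g i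
  have hdc : ∀ n, IsClopen (d n) := fun n => IsClopen.diff (hbs (hgK n).1)
    (isClopen_biUnion_finset fun i _ => hbs (hgK i).1)
  have hdg : ∀ n, d n ⊆ g n := fun n => sdiff_subset
  have hdd : ∀ m n x, x ∈ d m → x ∈ d n → m = n := by
    have : ∀ m n x, m < n → x ∈ d m → x ∉ d n := by
      intro m n x hmn h1 h2
      exact h2.2 (mem_biUnion (Finset.mem_coe.2 (Finset.mem_range.2 hmn)) h1.1)
    intro m n x h1 h2
    rcases lt_trichotomy m n with h | h | h
    · exact absurd h2 (this m n x h h1)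
    · exact h
    · exact absurd h1 (this n m x h h2)
  have hdU : ∀ x ∈ S, ∃ n, x ∈ d n := by
    intro x hx
    rw [← hgU, mem_iUnion] at hx
    classical
    refine ⟨Nat.find hx, Nat.find_spec hx, ?_⟩
    simp only [mem_iUnion, not_exists]
    intro i hi
    exact Nat.find_min hx (Finset.mem_range.1 hi)
  let I : Set ℕ := {n | (d n).Nonempty}
  have hI : I.Infinite := by
    intro hI
    apply hfin
    refine ⟨d '' I, hI.image d, ?_, ?_⟩
    · rintro _ ⟨n, -, rfl⟩
      exact hp _ _ (hdg n) (hgK n).2.1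
    · intro x hx
      obtain ⟨n, hn⟩ := hdU x hx
      exact ⟨d n, ⟨n, ⟨x, hn⟩, rfl⟩, hn⟩
  have := hI.to_subtype
  obtain ⟨e⟩ : Nonempty (ℕ ≃ I) := by
    have := nonempty_denumerable I
    obtain ⟨hden⟩ := this
    exact ⟨(Denumerable.eqv I).symm⟩
  refine ⟨fun n => d (e n).1, fun n => hdc _, fun n => (e n).2,
    fun n => hp _ _ (hdg _) (hgK _).2.1, ?_, ?_⟩
  · intro m n x h1 h2
    exact e.injective (Subtype.ext (hdd _ _ _ h1 h2))
  · apply Subset.antisymm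
    · exact iUnion_subset fun n => (hdg _).trans (hgK _).2.2
    · intro x hx
      obtain ⟨n, hn⟩ := hdU x hx
      refine mem_iUnion.2 ⟨e.symm ⟨n, ⟨x, hn⟩⟩, ?_⟩
      simpa using hn

/-- Alexandrov-Urysohn characterization of the Baire space. -/
theorem aux_alexandrov {Y : Type*} [TopologicalSpace Y] [PolishSpace Y] [Nonempty Y]
    (hnc : ∀ S : Set Y, IsClopen S → S.Nonempty → ¬ IsCompact S)
    (hzd : IsTopologicalBasis {U : Set Y | IsClopen U}) : Nonempty (Y ≃ₜ (ℕ → ℕ)) := by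
  classical
  let _ := upgradeIsCompletelyMetrizable Y
  have hsplit : ∀ (S : {S : Set Y // IsClopen S ∧ S.Nonempty}) (n : ℕ), ∃ T : ℕ → Set Y,
      (∀ k, IsClopen (T k)) ∧ (∀ k, (T k).Nonempty) ∧
      (∀ k, ∀ x ∈ T k, ∀ y ∈ T k, dist x y < 1 / ((n : ℝ) + 1)) ∧
      (∀ k l x, x ∈ T k → x ∈ T l → k = l) ∧ ⋃ k, T k = S.1 := by
    rintro ⟨S, hS, hSne⟩ n
    have hε : (0 : ℝ) < 1 / ((n : ℝ) + 1) := by positivity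
    obtain ⟨δ, hδ0, hδ, hfin⟩ : ∃ δ > 0, δ ≤ 1 / ((n : ℝ) + 1) ∧
        ¬ ∃ F : Set (Set Y), F.Finite ∧ (∀ t ∈ F, ∀ x ∈ t, ∀ y ∈ t, dist x y < δ) ∧
          S ⊆ ⋃₀ F := by
      by_contra hcon
      push Not at hcon
      apply hnc S hS hSne
      refine TotallyBounded.isCompact_of_isClosed ?_ hS.isClosed
      rw [Metric.totallyBounded_iff]
      intro η hη
      obtain ⟨F, hF, hFd, hSF⟩ := hcon (min η (1 / ((n : ℝ) + 1))) (lt_min hη hε) (min_le_right _ _)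
      let c : Set Y → Y := fun t => if h : t.Nonempty then h.some else hSne.some
      refine ⟨c '' F, hF.image c, fun x hx => ?_⟩
      obtain ⟨t, ht, hxt⟩ := hSF hx
      refine mem_biUnion (mem_image_of_mem c ht) ?_
      have hct : c t ∈ t := by
        have hne : t.Nonempty := ⟨x, hxt⟩
        simp only [c, dif_pos hne]; exact hne.some_mem
      exact (hFd t ht x hxt _ hct).trans_le (min_le_left _ _)
    obtain ⟨T, h1, h2, h3, h4, h5⟩ := aux_partition hzd
      (fun t => ∀ x ∈ t, ∀ y ∈ t, dist x y < δ)
      (fun s t hst ht x hx y hy => ht x (hst hx) y (hst hy)) S hS (by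
        intro x _
        refine ⟨Metric.ball x (δ / 2), Metric.ball_mem_nhds _ (by positivity), ?_⟩
        intro a ha b hb
        have := dist_triangle_right a b x
        rw [Metric.mem_ball] at ha hb
        linarith) hfin
    exact ⟨T, h1, h2, fun k x hx y hy => (h3 k x hx y hy).trans_le hδ, h4, h5⟩
  choose T hTc hTne hTd hTu hTU using hsplit
  let B : List ℕ → {S : Set Y // IsClopen S ∧ S.Nonempty} := fun s =>
    List.rec ⟨univ, isClopen_univ, univ_nonempty⟩
      (fun b l S => ⟨T S l.length b, hTc S _ _, hTne S _ _⟩) s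
  have hBc : ∀ b s, (B (b :: s)).1 = T (B s) s.length b := fun b s => rfl
  have hsub : ∀ s b, (B (b :: s)).1 ⊆ (B s).1 := by
    intro s b
    rw [hBc, ← hTU (B s) s.length]
    exact subset_iUnion _ b
  obtain ⟨f, hfc, hfm, hfu⟩ := aux_scheme (fun s => (B s).1) rfl (fun s => (B s).2.1.isOpen) hsub
    (by
      intro s x hx
      rw [← hTU (B s) s.length] at hx
      exact mem_iUnion.1 hx)
    (by
      intro s b b' x h1 h2
      exact hTu _ _ _ _ _ h1 h2)
  have hdiam : ∀ (z : ℕ → ℕ) n, ∀ x ∈ (B (PiNat.res z (n + 1))).1,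
      ∀ y ∈ (B (PiNat.res z (n + 1))).1, dist x y < 1 / ((n : ℝ) + 1) := by
    intro z n
    rw [PiNat.res_succ, hBc, PiNat.res_length]
    exact hTd _ _ _
  have hinj : Function.Injective f := by
    intro x y hxy
    by_contra hne
    obtain ⟨n, hn⟩ := exists_nat_one_div_lt (dist_pos.2 hne)
    have := hdiam (f x) n x (hfm x (n + 1)) y (hxy ▸ hfm y (n + 1))
    linarith
  have hanti : ∀ z : ℕ → ℕ, Antitone fun n => (B (PiNat.res z n)).1 := fun z =>
    antitone_nat_of_succ_le fun n => by
      rw [PiNat.res_succ]; exact hsub _ _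
  have hsurj : Function.Surjective f := by
    intro z
    have hex : ∀ n, ∃ x, x ∈ (B (PiNat.res z n)).1 := fun n => (B (PiNat.res z n)).2.2
    choose u hu using hex
    have hcau : CauchySeq u := by
      rw [Metric.cauchySeq_iff]
      intro ε hε
      obtain ⟨n, hn⟩ := exists_nat_one_div_lt hε
      exact ⟨n + 1, fun a ha b hb => (hdiam z n _ (hanti z ha (hu a)) _ (hanti z hb (hu b))).trans hn⟩
    obtain ⟨x, hx⟩ := cauchySeq_tendsto_of_complete hcau
    refine ⟨x, PiNat.res_injective (funext fun n => hfu x z n ?_)⟩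
    exact (B (PiNat.res z n)).2.1.isClosed.mem_of_tendsto hx
      (eventually_atTop.2 ⟨n, fun a ha => hanti z ha (hu a)⟩)
  have hopen : IsOpenMap f := by
    rw [isOpenMap_iff_nhds_le]
    intro x
    intro s hs
    rw [mem_map] at hs
    obtain ⟨ε, hε, hball⟩ := Metric.mem_nhds_iff.1 hs
    obtain ⟨n, hn⟩ := exists_nat_one_div_lt hε
    have hcyl : {z : ℕ → ℕ | PiNat.res z (n + 1) = PiNat.res (f x) (n + 1)} ∈ 𝓝 (f x) := by
      rw [← PiNat.cylinder_eq_res]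
      exact (PiNat.isOpen_cylinder _ _ _).mem_nhds (PiNat.self_mem_cylinder _ _)
    filter_upwards [hcyl] with z hz
    obtain ⟨y, rfl⟩ := hsurj z
    apply hball
    have hz' : PiNat.res (f y) (n + 1) = PiNat.res (f x) (n + 1) := hz
    rw [Metric.mem_ball]
    exact (hdiam (f x) n y (hz' ▸ hfm y (n + 1)) x (hfm x (n + 1))).trans hn
  exact ⟨(Equiv.ofBijective f ⟨hinj, hsurj⟩).toHomeomorphOfContinuousOpen hfc hopen⟩

theorem aux_zd_subtype {Y : Type*} [TopologicalSpace Y]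
    (hzd : IsTopologicalBasis {U : Set Y | IsClopen U}) (S : Set Y) :
    IsTopologicalBasis {U : Set S | IsClopen U} := by
  refine isTopologicalBasis_of_isOpen_of_nhds (fun U hU => hU.isOpen) ?_
  intro x U hx hU
  obtain ⟨W, hW, rfl⟩ := isOpen_induced_iff.1 hU
  obtain ⟨V, hV, hxV, hVW⟩ := hzd.exists_subset_of_mem_open hx hW
  exact ⟨Subtype.val ⁻¹' V, hV.preimage continuous_subtype_val, hxV, preimage_mono hVW⟩

theorem aux_iso_subtype {Y : Type*} [TopologicalSpace Y]
    (hiso : ∀ x : Y, ¬ IsOpen ({x} : Set Y)) (S : Set Y) (hS : IsOpen S) :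
    ∀ x : S, ¬ IsOpen ({x} : Set S) := by
  intro x hx
  apply hiso x.1
  have := hS.isOpenMap_subtype_val _ hx
  rwa [image_singleton] at this

/-- Noncompact locally compact crowded zero-dimensional spaces. -/
theorem aux_loccompact {Y : Type*} [TopologicalSpace Y] [T2Space Y] [SecondCountableTopology Y]
    (hlc : ∀ x : Y, ∃ K ∈ 𝓝 x, IsCompact K) (hnc : ¬ CompactSpace Y)
    (hiso : ∀ x : Y, ¬ IsOpen ({x} : Set Y))
    (hzd : IsTopologicalBasis {U : Set Y | IsClopen U}) :
    Nonempty ((Σ _ : ℕ, (ℕ → Bool)) ≃ₜ Y) := by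
  obtain ⟨T, h1, h2, h3, h4, h5⟩ := aux_partition hzd (fun t => ∃ K, IsCompact K ∧ t ⊆ K)
    (fun s t hst ⟨K, hK, htK⟩ => ⟨K, hK, hst.trans htK⟩) univ isClopen_univ
    (by
      intro x _
      obtain ⟨K, hK, hKc⟩ := hlc x
      exact ⟨K, hK, K, hKc, Subset.rfl⟩)
    (by
      rintro ⟨F, hF, hFp, hFU⟩
      choose! K hK htK using hFp
      apply hnc
      rw [← isCompact_univ_iff]
      have : (univ : Set Y) = ⋃ t ∈ F, K t := by
        apply Subset.antisymm _ (subset_univ _)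
        intro x hx
        obtain ⟨t, ht, hxt⟩ := hFU hx
        exact mem_biUnion ht (htK t ht hxt)
      rw [this]
      exact hF.isCompact_biUnion hK)
  have he : ∀ n, Nonempty (T n ≃ₜ (ℕ → Bool)) := by
    intro n
    obtain ⟨K, hK, hTK⟩ := h3 n
    have : CompactSpace (T n) :=
      isCompact_iff_compactSpace.1 (hK.of_isClosed_subset (h1 n).isClosed hTK)
    have : Nonempty (T n) := (h2 n).to_subtype
    exact aux_brouwer (aux_iso_subtype hiso _ (h1 n).isOpen) (aux_zd_subtype hzd _)
  let e : ∀ n, T n ≃ₜ (ℕ → Bool) := fun n => (he n).some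
  let φ : (Σ _ : ℕ, (ℕ → Bool)) → Y := fun z => ((e z.1).symm z.2 : T z.1)
  have hc : Continuous φ := continuous_sigma fun n =>
    continuous_subtype_val.comp (e n).symm.continuous
  have ho : IsOpenMap φ := isOpenMap_sigma.2 fun n =>
    ((h1 n).isOpen.isOpenMap_subtype_val).comp (e n).symm.isOpenMap
  have hb : Function.Bijective φ := by
    constructor
    · rintro ⟨m, z⟩ ⟨n, w⟩ h
      have h' : (((e m).symm z : T m) : Y) = ((e n).symm w : T n) := h
      have hmn : m = n := h4 m n _ ((e m).symm z).2 (h' ▸ ((e n).symm w).2)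
      subst hmn
      have := (e m).symm.injective (Subtype.ext h')
      rw [this]
    · intro y
      have : y ∈ ⋃ n, T n := h5 ▸ mem_univ y
      obtain ⟨n, hn⟩ := mem_iUnion.1 this
      exact ⟨⟨n, e n ⟨y, hn⟩⟩, by simp [φ]⟩
  exact ⟨(Equiv.ofBijective φ hb).toHomeomorphOfContinuousOpen hc ho⟩

theorem aux_cantor_zd : IsTopologicalBasis {U : Set (ℕ → Bool) | IsClopen U} := by
  exact isTopologicalBasis_isClopen

theorem aux_cantor_minus :
    Nonempty ((Σ _ : ℕ, (ℕ → Bool)) ≃ₜ ↥{y : ℕ → Bool | y ≠ fun _ => false}) := by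
  have ho : IsOpen {y : ℕ → Bool | y ≠ fun _ => false} := isOpen_compl_singleton
  have hlc : LocallyCompactSpace ↥{y : ℕ → Bool | y ≠ fun _ => false} := ho.locallyCompactSpace
  apply aux_loccompact
  · intro x
    obtain ⟨K, hK, hKx⟩ := exists_compact_mem_nhds x
    exact ⟨K, hKx, hK⟩
  · intro h
    have h1 : IsClosed {y : ℕ → Bool | y ≠ fun _ => false} :=
      (isCompact_iff_compactSpace.2 h).isClosed
    have h2 : IsOpen ({fun _ => false} : Set (ℕ → Bool)) := by
      have := h1.isOpen_compl
      convert this using 1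
      ext y; simp
    have := aux_not_isOpen_singleton_cantor (fun _ => false)
    rw [isOpen_singleton_iff_punctured_nhds] at h2
    exact this.ne h2
  · apply aux_iso_subtype _ _ ho
    intro x hx
    rw [isOpen_singleton_iff_punctured_nhds] at hx
    exact (aux_not_isOpen_singleton_cantor x).ne hx
  · exact aux_zd_subtype aux_cantor_zd _

theorem aux_sum {Y : Type*} [TopologicalSpace Y] {V : Set Y} (hV : IsClopen V) :
    Nonempty (Y ≃ₜ (↥Vᶜ ⊕ ↥V)) := by
  classical
  let e : ↥V ⊕ ↥Vᶜ ≃ Y := Equiv.Set.sumCompl V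
  have hc : Continuous e := by
    rw [continuous_sum_dom]
    exact ⟨continuous_subtype_val, continuous_subtype_val⟩
  have ho : IsOpenMap e := by
    rw [isOpenMap_sum]
    exact ⟨hV.isOpen.isOpenMap_subtype_val, hV.compl.isOpen.isOpenMap_subtype_val⟩
  exact ⟨(e.toHomeomorphOfContinuousOpen hc ho).symm.trans (Homeomorph.sumComm _ _)⟩

/-- A nonempty zero-dimensional Borel CDH subspace of a Polish space without isolated
points is homeomorphic to one of: the Cantor space `2^ℕ`, the Baire space `ℕ^ℕ`,
`2^ℕ ∖ {0}`, `ℕ^ℕ ⊕ 2^ℕ`, or `ℕ^ℕ ⊕ (2^ℕ ∖ {0})`. -/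
theorem zeroDim_borel_CDH_classification
    (P : Type*) [TopologicalSpace P] [PolishSpace P]
    [MeasurableSpace P] [BorelSpace P] (X : Set P)
    (hne : X.Nonempty)
    (hB : MeasurableSet X)
    (hiso : ∀ x : ↥X, ¬ IsOpen ({x} : Set ↥X))
    (hzd : TopologicalSpace.IsTopologicalBasis {U : Set ↥X | IsClopen U})
    (hCDH : IsCDH ↥X) :
    Nonempty (↥X ≃ₜ (ℕ → Bool)) ∨
    Nonempty (↥X ≃ₜ (ℕ → ℕ)) ∨
    Nonempty (↥X ≃ₜ ↥{y : ℕ → Bool | y ≠ fun _ => false}) ∨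
    Nonempty (↥X ≃ₜ ((ℕ → ℕ) ⊕ (ℕ → Bool))) ∨
    Nonempty (↥X ≃ₜ ((ℕ → ℕ) ⊕ ↥{y : ℕ → Bool | y ≠ fun _ => false})) := by
  classical
  -- `X` is Polish
  have hpol : PolishSpace ↥X := by
    have : PolishSpace ↥(closure X) := isClosed_closure.polishSpace
    have hf : IsEmbedding (inclusion (subset_closure : X ⊆ closure X)) :=
      IsEmbedding.inclusion subset_closure
    have hr : range (inclusion (subset_closure : X ⊆ closure X)) = Subtype.val ⁻¹' X := by
      rw [range_inclusion]; rfl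
    refine aux_polish hf ?_ ?_ hiso hCDH
    · intro q
      rw [hr, closure_subtype, Subtype.image_preimage_coe,
        inter_eq_self_of_subset_right subset_closure]
      exact q.2
    · rw [hr]
      exact measurable_subtype_coe hB
  have hne' : Nonempty ↥X := hne.to_subtype
  -- the set of points of local compactness
  let V : Set ↥X := {x | ∃ K ∈ 𝓝 x, IsCompact K}
  have hVo : IsOpen V := by
    rw [isOpen_iff_mem_nhds]
    rintro x ⟨K, hK, hKc⟩
    filter_upwards [eventually_mem_nhds_iff.2 hK] with y hy
    exact ⟨K, hy, hKc⟩
  have hVinv1 : ∀ (h : ↥X ≃ₜ ↥X) (x : ↥X), x ∈ V → h x ∈ V := by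
    rintro h x ⟨K, hK, hKc⟩
    exact ⟨h '' K, h.isOpenMap.image_mem_nhds hK, hKc.image h.continuous⟩
  have hVinv : ∀ h : ↥X ≃ₜ ↥X, h ⁻¹' V = V := by
    intro h
    ext x
    refine ⟨fun hx => ?_, fun hx => hVinv1 h x hx⟩
    have := hVinv1 h.symm _ hx
    simpa using this
  have hVc : IsClopen V := by
    rw [isClopen_iff_frontier_eq_empty]
    by_contra hfr
    obtain ⟨x, hx⟩ := nonempty_iff_ne_empty.2 hfr
    obtain ⟨D, hDc, hDd⟩ := exists_countable_dense ↥X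
    have hdense : Dense (frontier V)ᶜ := by
      rw [← interior_eq_empty_iff_dense_compl, ← frontier_compl]
      exact interior_frontier hVo.isClosed_compl
    obtain ⟨h, hh⟩ := hCDH (insert x D) (D ∩ (frontier V)ᶜ) (hDc.insert x)
      (hDd.mono (subset_insert _ _)) (hDc.mono inter_subset_left)
      (hDd.inter_of_isOpen_right hdense isClosed_frontier.isOpen_compl)
    have h1 : h x ∈ h '' (insert x D) := mem_image_of_mem _ (mem_insert _ _)
    rw [hh] at h1
    apply h1.2
    have h2 : x ∈ h ⁻¹' (frontier V) := by
      rw [h.preimage_frontier, hVinv]; exact hx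
    exact h2
  -- the nowhere locally compact part
  have hBaire : (Vᶜ).Nonempty → Nonempty (↥Vᶜ ≃ₜ (ℕ → ℕ)) := by
    intro hn
    have : PolishSpace ↥Vᶜ := hVc.compl.isClosed.polishSpace
    have : Nonempty ↥Vᶜ := hn.to_subtype
    refine aux_alexandrov ?_ (aux_zd_subtype hzd _)
    rintro S hS ⟨x, hx⟩ hSc
    apply x.2
    refine ⟨Subtype.val '' S, ?_, hSc.image continuous_subtype_val⟩
    exact (hVc.compl.isOpen.isOpenMap_subtype_val _ hS.isOpen).mem_nhds ⟨x, hx, rfl⟩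
  -- the locally compact part
  have hLC : V.Nonempty → Nonempty (↥V ≃ₜ (ℕ → Bool)) ∨
      Nonempty (↥V ≃ₜ ↥{y : ℕ → Bool | y ≠ fun _ => false}) := by
    intro hn
    have : Nonempty ↥V := hn.to_subtype
    by_cases hcomp : CompactSpace ↥V
    · exact Or.inl (aux_brouwer (aux_iso_subtype hiso _ hVo) (aux_zd_subtype hzd _))
    · right
      obtain ⟨e⟩ := aux_loccompact (Y := ↥V) (by
        rintro ⟨x, K, hK, hKc⟩
        refine ⟨Subtype.val ⁻¹' K, continuous_subtype_val.continuousAt.preimage_mem_nhds hK, ?_⟩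
        exact hVc.isClosed.isClosedEmbedding_subtypeVal.isCompact_preimage hKc) hcomp
        (aux_iso_subtype hiso _ hVo) (aux_zd_subtype hzd _)
      obtain ⟨e'⟩ := aux_cantor_minus
      exact ⟨e.symm.trans e'⟩
  by_cases hV : V.Nonempty
  · by_cases hW : (Vᶜ).Nonempty
    · obtain ⟨s⟩ := aux_sum hVc
      obtain ⟨b⟩ := hBaire hW
      rcases hLC hV with ⟨⟨e⟩⟩ | ⟨⟨e⟩⟩
      · exact Or.inr (Or.inr (Or.inr (Or.inl ⟨s.trans (b.sumCongr e)⟩)))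
      · exact Or.inr (Or.inr (Or.inr (Or.inr ⟨s.trans (b.sumCongr e)⟩)))
    · rw [not_nonempty_iff_eq_empty, compl_empty_iff] at hW
      have u : ↥V ≃ₜ ↥X := (Homeomorph.setCongr hW).trans (Homeomorph.Set.univ _)
      rcases hLC hV with ⟨⟨e⟩⟩ | ⟨⟨e⟩⟩
      · exact Or.inl ⟨u.symm.trans e⟩
      · exact Or.inr (Or.inr (Or.inl ⟨u.symm.trans e⟩))
  · rw [not_nonempty_iff_eq_empty] at hV
    have hW : Vᶜ = univ := by rw [hV, compl_empty]
    obtain ⟨b⟩ := hBaire (hW ▸ univ_nonempty)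
    have u : ↥Vᶜ ≃ₜ ↥X := (Homeomorph.setCongr hW).trans (Homeomorph.Set.univ _)
    exact Or.inr (Or.inl ⟨u.symm.trans b⟩)
end

section
/- Let X be a Borel subset of the Cantor space 2^ℕ. Then the following are equivalent: (1) the countable power X^ℕ of the subspace X, with the product topology, is countable dense homogeneous; (2) X is a Gδ subset of 2^ℕ; (3) X^ℕ has at most one point, or X^ℕ is homeomorphic to the Cantor space 2^ℕ, or X^ℕ is homeomorphic to the Baire space ℕ^ℕ. -/
open MeasureTheory

namespace BorelCDH

open MeasureTheory Set Topology Filter TopologicalSpace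


/-- Alexandrov: a `Gδ` subset of a Polish space is Polish. -/
theorem polishSpace_of_isGδ {M : Type*} [TopologicalSpace M] [PolishSpace M] {s : Set M}
    (hs : IsGδ s) : PolishSpace s := by
  obtain ⟨U, hU, rfl⟩ := isGδ_iff_eq_iInter_nat.1 hs
  have hP : ∀ n, PolishSpace (U n) := fun n => (hU n).polishSpace
  let f : (⋂ n, U n : Set M) → (∀ n, U n) := fun x n => ⟨x.1, mem_iInter.1 x.2 n⟩
  have hf : Continuous f := by
    refine continuous_pi fun n => ?_
    exact continuous_subtype_val.subtype_mk _
  have hcl : IsClosedEmbedding f := by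
    refine ⟨?_, ?_⟩
    · have h1 : Continuous (fun y : (∀ n, U n) => (y 0).1) :=
        continuous_subtype_val.comp (continuous_apply 0)
      exact IsEmbedding.of_comp hf h1 (IsEmbedding.subtypeVal)
    · have : range f = ⋂ n, {y : (∀ n, U n) | (y n).1 = (y 0).1} := by
        ext y
        simp only [mem_range, mem_iInter, mem_ofPred_eq]
        constructor
        · rintro ⟨x, rfl⟩ n
          rfl
        · intro h
          refine ⟨⟨(y 0).1, mem_iInter.2 fun n => h n ▸ (y n).2⟩, ?_⟩
          funext n
          exact Subtype.ext (h n).symm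
      rw [this]
      refine isClosed_iInter fun n => isClosed_eq ?_ ?_
      · exact continuous_subtype_val.comp (continuous_apply n)
      · exact continuous_subtype_val.comp (continuous_apply 0)
  exact hcl.polishSpace

/-- Alexandrov: a Polish subspace is `Gδ`. -/
theorem isGδ_range_of_polishSpace {P M : Type*} [TopologicalSpace P] [PolishSpace P]
    [TopologicalSpace M] [MetrizableSpace M] {f : P → M} (hf : IsEmbedding f) :
    IsGδ (range f) := by
  let _ := metrizableSpaceMetric M
  let _ := upgradeIsCompletelyMetrizable P
  let O : ℕ → Set M := fun n =>
    ⋃₀ {V | IsOpen V ∧ ∀ p q, f p ∈ V → f q ∈ V → dist p q < 1 / ((n : ℝ) + 1)}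
  have hO : ∀ n, IsOpen (O n) := fun n => isOpen_sUnion fun V hV => hV.1
  have key : range f = closure (range f) ∩ ⋂ n, O n := by
    apply Subset.antisymm
    · rintro _ ⟨p, rfl⟩
      refine ⟨subset_closure ⟨p, rfl⟩, mem_iInter.2 fun n => ?_⟩
      have hpos : (0 : ℝ) < 1 / ((n : ℝ) + 1) := by positivity
      have h1 : Metric.ball p (1 / ((n : ℝ) + 1) / 2) ∈ 𝓝 p := Metric.ball_mem_nhds _ (by positivity)
      rw [hf.isInducing.nhds_eq_comap, mem_comap] at h1
      obtain ⟨t, ht, hts⟩ := h1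
      obtain ⟨V, hVt, hV, hpV⟩ := mem_nhds_iff.1 ht
      refine ⟨V, ⟨hV, fun a b ha hb => ?_⟩, hpV⟩
      have ha' := hts (show a ∈ f ⁻¹' t from hVt ha)
      have hb' := hts (show b ∈ f ⁻¹' t from hVt hb)
      rw [Metric.mem_ball] at ha' hb'
      have := dist_triangle_right a b p
      linarith
    · rintro x ⟨hx, hxO⟩
      have hne : NeBot (comap f (𝓝 x)) := by
        rw [comap_neBot_iff]
        intro t ht
        obtain ⟨_, hy, p, rfl⟩ := mem_closure_iff_nhds.1 hx t ht
        exact ⟨p, hy⟩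
      have hc : Cauchy (comap f (𝓝 x)) := by
        rw [Metric.cauchy_iff]
        refine ⟨hne, fun ε hε => ?_⟩
        obtain ⟨n, hn⟩ := exists_nat_one_div_lt hε
        obtain ⟨V, ⟨hV, hVd⟩, hxV⟩ := mem_iInter.1 hxO n
        refine ⟨f ⁻¹' V, preimage_mem_comap (hV.mem_nhds hxV), fun a ha b hb => ?_⟩
        exact (hVd a b ha hb).trans hn
      obtain ⟨p, hp⟩ := CompleteSpace.complete hc
      refine ⟨p, ?_⟩
      have h1 : Tendsto f (comap f (𝓝 x)) (𝓝 (f p)) := (hf.continuous.tendsto p).mono_left hp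
      exact tendsto_nhds_unique h1 tendsto_comap
  rw [key]
  exact isClosed_closure.isGδ.inter (IsGδ.iInter fun n => (hO n).isGδ)

theorem isGδ_of_polishSpace {M : Type*} [TopologicalSpace M] [MetrizableSpace M] {s : Set M}
    [PolishSpace s] : IsGδ s := by
  have := isGδ_range_of_polishSpace (IsEmbedding.subtypeVal (p := fun x => x ∈ s))
  rwa [Subtype.range_coe] at this

/-- A Hurewicz type theorem: if the complement of `X` is analytic and each countable subset of `X`
is contained in a `Gδ` subset of `X` then `X` is `Gδ`. -/
theorem isGδ_of_countable {M : Type*} [TopologicalSpace M] [T2Space M]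
    {X : Set M} (hX : AnalyticSet Xᶜ)
    (h : ∀ E : Set M, E.Countable → E ⊆ X → ∃ H, IsGδ H ∧ E ⊆ H ∧ H ⊆ X) : IsGδ X := by
  rw [AnalyticSet] at hX
  rcases hX with hX | ⟨f, hf, hfX⟩
  · rw [compl_empty_iff] at hX
    rw [hX]; exact IsGδ.univ
  let Sep : Set (ℕ → ℕ) → Prop := fun S => ∃ H, IsGδ H ∧ X ⊆ H ∧ ∀ x ∈ S, f x ∉ H
  let B := countableBasis (ℕ → ℕ)
  let W : Set (ℕ → ℕ) := ⋃₀ {U ∈ B | Sep U}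
  have hWo : IsOpen W := isOpen_sUnion fun U hU => isOpen_of_mem_countableBasis hU.1
  have hW : Sep W := by
    have hc : {U ∈ B | Sep U}.Countable := (countable_countableBasis _).mono (sep_subset _ _)
    choose! H h1 h2 h3 using (fun (U : Set (ℕ → ℕ)) (hU : U ∈ {U ∈ B | Sep U}) => hU.2)
    refine ⟨⋂ U ∈ {U ∈ B | Sep U}, H U, IsGδ.biInter hc h1, subset_iInter₂ h2, ?_⟩
    rintro x ⟨U, hU, hxU⟩ hx
    exact h3 U hU x hxU (mem_iInter₂.1 hx U hU)
  by_cases hWu : W = univ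
  · obtain ⟨H, h1, h2, h3⟩ := hW
    have : X = H := by
      refine h2.antisymm fun x hx => ?_
      by_contra hxX
      have hx' : x ∈ range f := hfX ▸ hxX
      obtain ⟨y, rfl⟩ := hx'
      exact h3 y (hWu ▸ mem_univ y) hx
    rw [this]; exact h1
  exfalso
  have hC : IsClosed Wᶜ := hWo.isClosed_compl
  have hb : ∀ U ∈ B, (U ∩ Wᶜ).Nonempty → (closure (f '' (U ∩ Wᶜ)) ∩ X).Nonempty := by
    intro U hU ⟨x, hxU, hxW⟩
    by_contra hemp
    rw [not_nonempty_iff_eq_empty] at hemp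
    apply hxW
    refine ⟨U, ⟨hU, ?_⟩, hxU⟩
    obtain ⟨H, h1, h2, h3⟩ := hW
    refine ⟨H ∩ (closure (f '' (U ∩ Wᶜ)))ᶜ, h1.inter isClosed_closure.isOpen_compl.isGδ, ?_, ?_⟩
    · intro y hy
      refine ⟨h2 hy, fun hy' => ?_⟩
      have : y ∈ closure (f '' (U ∩ Wᶜ)) ∩ X := ⟨hy', hy⟩
      rw [hemp] at this
      exact this
    · intro y hy hy'
      by_cases hyW : y ∈ W
      · exact h3 y hyW hy'.1
      · exact hy'.2 (subset_closure ⟨y, ⟨hy, hyW⟩, rfl⟩)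
  have hMne : Nonempty M := ⟨f 0⟩
  choose! b hb1 using hb
  obtain ⟨H, hH, hEH, hHX⟩ := h (b '' {U ∈ B | (U ∩ Wᶜ).Nonempty})
    (((countable_countableBasis _).mono (sep_subset _ _)).image b) (by
      rintro _ ⟨U, hU, rfl⟩
      exact (hb1 U hU.1 hU.2).2)
  obtain ⟨V, hV, rfl⟩ := isGδ_iff_eq_iInter_nat.1 hH
  have hPol : PolishSpace (Wᶜ : Set (ℕ → ℕ)) := hC.polishSpace
  have hne : Nonempty (Wᶜ : Set (ℕ → ℕ)) := by
    obtain ⟨x, hx⟩ := (ne_univ_iff_exists_notMem W).1 hWu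
    exact ⟨⟨x, hx⟩⟩
  let F : ℕ → Set (Wᶜ : Set (ℕ → ℕ)) := fun n => {x | f x ∉ V n}
  have hF : ∀ n, IsClosed (F n) := fun n =>
    (hV n).isClosed_compl.preimage (hf.comp continuous_subtype_val)
  have hFu : ⋃ n, F n = univ := by
    rw [eq_univ_iff_forall]
    intro x
    have hx : f x ∉ X := by
      have : f x ∈ range f := ⟨_, rfl⟩
      rwa [hfX] at this
    have : f x ∉ ⋂ n, V n := fun h' => hx (hHX h')
    simpa [F] using this
  obtain ⟨n, x, hx⟩ := nonempty_interior_of_iUnion_of_closed hF hFu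
  obtain ⟨t, ht, hto, hxt⟩ := mem_interior.1 hx
  obtain ⟨t', ht', rfl⟩ := isOpen_induced_iff.1 hto
  obtain ⟨U, hU, hxU, hUt⟩ := (isBasis_countableBasis (ℕ → ℕ)).exists_subset_of_mem_open hxt ht'
  have hUne : (U ∩ Wᶜ).Nonempty := ⟨x.1, hxU, x.2⟩
  have h1 := hb1 U hU hUne
  have h2 : b U ∈ V n := mem_iInter.1 (hEH ⟨U, ⟨hU, hUne⟩, rfl⟩) n
  have h3 : closure (f '' (U ∩ Wᶜ)) ⊆ (V n)ᶜ := by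
    refine closure_minimal ?_ (hV n).isClosed_compl
    rintro _ ⟨y, ⟨hyU, hyW⟩, rfl⟩
    exact ht (show (⟨y, hyW⟩ : (Wᶜ : Set (ℕ → ℕ))) ∈ Subtype.val ⁻¹' t' from hUt hyU)
  exact h3 h1.1 h2

/-- open sets in a power have a completely free coordinate -/
theorem exists_free_coord {Y : Type*} [TopologicalSpace Y] {A : Set (ℕ → Y)} (hA : IsOpen A)
    {a : ℕ → Y} (ha : a ∈ A) : ∃ k, ∀ y, Function.update a k y ∈ A := by
  obtain ⟨I, u, hu, hsub⟩ := isOpen_pi_iff.1 hA a ha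
  obtain ⟨k, hk⟩ := Infinite.exists_notMem_finset I
  refine ⟨k, fun y => hsub ?_⟩
  intro i hi
  have : i ≠ k := fun h => hk (h ▸ hi)
  rw [Function.update_of_ne this]
  exact (hu i hi).2

theorem exists_ne_of_isOpen {Y : Type*} [TopologicalSpace Y] [Nontrivial Y] {A : Set (ℕ → Y)}
    (hA : IsOpen A) {a : ℕ → Y} (ha : a ∈ A) : ∃ b ∈ A, b ≠ a := by
  obtain ⟨k, hk⟩ := exists_free_coord hA ha
  obtain ⟨y, hy⟩ := exists_ne (a k)
  refine ⟨_, hk y, fun h => hy ?_⟩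
  have := congrFun h k
  simpa using this

/-- A countable dense subset of the Cantor space is not `Gδ`. -/
theorem not_countable_dense_isGδ {Q : Set (ℕ → Bool)} (hQ : Q.Countable) (hd : Dense Q)
    (hG : IsGδ Q) : False := by
  have h1 : Dense Qᶜ := by
    have : Qᶜ ∈ residual (ℕ → Bool) := by
      have : Qᶜ = ⋂ q ∈ Q, ({q}ᶜ : Set (ℕ → Bool)) := by
        ext x; simp
        constructor
        · intro h i hi hx; exact h (hx ▸ hi)
        · intro h hx; exact h x hx rfl
      rw [this]
      refine (countable_bInter_mem hQ).2 fun q _ => ?_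
      refine residual_of_dense_open isOpen_compl_singleton ?_
      rw [dense_iff_inter_open]
      rintro U hU ⟨a, ha⟩
      by_cases haq : a = q
      · subst haq
        obtain ⟨b, hb, hne⟩ := exists_ne_of_isOpen hU ha
        exact ⟨b, hb, hne⟩
      · exact ⟨a, ha, haq⟩
    exact dense_of_mem_residual this
  have h2 := Dense.inter_of_Gδ hG hQ.isGδ_compl hd h1
  rw [inter_compl_self] at h2
  obtain ⟨x, hx⟩ := h2.nonempty
  exact hx

/-- A meagre separable space has a countable dense `Gδ`. -/
theorem exists_countable_dense_isGδ {Z : Type*} [TopologicalSpace Z] [SecondCountableTopology Z]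
    [T1Space Z] [Nonempty Z] (hm : IsMeagre (univ : Set Z)) :
    ∃ D : Set Z, D.Countable ∧ Dense D ∧ IsGδ D := by
  rw [IsMeagre, compl_univ, mem_residual_iff] at hm
  obtain ⟨S, hSo, hSd, hSc, hS⟩ := hm
  have hSne : S.Nonempty := by
    by_contra h
    rw [not_nonempty_iff_eq_empty] at h
    rw [h, sInter_empty] at hS
    obtain ⟨z⟩ := ‹Nonempty Z›
    exact hS (mem_univ z)
  obtain ⟨g, hg⟩ := hSc.exists_eq_range hSne
  let O : ℕ → Set Z := fun n => Nat.rec (g 0) (fun k s => s ∩ g (k + 1)) n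
  have hgo : ∀ n, IsOpen (g n) := fun n => hSo _ (hg ▸ mem_range_self n)
  have hgd : ∀ n, Dense (g n) := fun n => hSd _ (hg ▸ mem_range_self n)
  have hOs : ∀ n, O (n + 1) = O n ∩ g (n + 1) := fun n => rfl
  have hO : ∀ n, IsOpen (O n) ∧ Dense (O n) ∧ O n ⊆ g n := by
    intro n
    induction n with
    | zero => exact ⟨hgo 0, hgd 0, Subset.rfl⟩
    | succ n ih =>
      rw [hOs]
      exact ⟨ih.1.inter (hgo _), ih.2.1.inter_of_isOpen_left (hgd _) ih.1, inter_subset_right⟩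
  have hanti : Antitone O := antitone_nat_of_succ_le fun n => by
    rw [hOs]; exact inter_subset_left
  have hBne : (countableBasis Z).Nonempty := by
    obtain ⟨z⟩ := ‹Nonempty Z›
    obtain ⟨U, hU, _⟩ := (isBasis_countableBasis Z).exists_subset_of_mem_open (mem_univ z) isOpen_univ
    exact ⟨U, hU⟩
  obtain ⟨B, hB⟩ := (countable_countableBasis Z).exists_eq_range hBne
  have hBm : ∀ k, B k ∈ countableBasis Z := fun k => hB ▸ mem_range_self k
  have hd : ∀ k, (B k ∩ O k).Nonempty := fun k =>
    (hO k).2.1.inter_open_nonempty _ (isOpen_of_mem_countableBasis (hBm k))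
      (nonempty_of_mem_countableBasis (hBm k))
  choose d hd1 using hd
  refine ⟨range d, countable_range d, ?_, ?_⟩
  · rw [(isBasis_countableBasis Z).dense_iff]
    intro U hU _
    obtain ⟨k, rfl⟩ : U ∈ range B := hB ▸ hU
    exact ⟨d k, (hd1 k).1, mem_range_self k⟩
  · have : range d = ⋂ n, (O n ∪ d '' (Iio n)) := by
      apply Subset.antisymm
      · rintro _ ⟨k, rfl⟩
        refine mem_iInter.2 fun n => ?_
        rcases lt_or_ge k n with h | h
        · exact Or.inr ⟨k, h, rfl⟩
        · exact Or.inl (hanti h (hd1 k).2)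
      · intro z hz
        have : ∃ n, z ∉ O n := by
          by_contra! hcon
          refine hS (mem_sInter.2 ?_ : z ∈ ⋂₀ S)
          intro t ht
          rw [hg] at ht
          obtain ⟨n, rfl⟩ := ht
          exact (hO n).2.2 (hcon n)
        obtain ⟨n, hn⟩ := this
        rcases mem_iInter.1 hz n with h | ⟨k, _, rfl⟩
        · exact absurd h hn
        · exact mem_range_self k
    rw [this]
    exact IsGδ.iInter fun n => (hO n).1.isGδ.union ((finite_Iio n).image d).isGδ

/-- If `X` is Borel, then either `X` contains a dense Polish subspace, or some nonempty open
subset of `X` is meagre in `X`. -/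
theorem dichotomy {M : Type*} [TopologicalSpace M] [PolishSpace M] {X : Set M}
    (hX : MeasurableSet[borel M] X) :
    (∃ G : Set X, PolishSpace G ∧ Dense G) ∨
      ∃ V : Set X, IsOpen V ∧ V.Nonempty ∧ IsMeagre V := by
  let K := closure X
  have hKp : PolishSpace K := isClosed_closure.polishSpace
  let i : X → K := fun x => ⟨x.1, subset_closure x.2⟩
  have hi : Continuous i := continuous_subtype_val.subtype_mk _
  have hie : IsEmbedding i := IsEmbedding.of_comp hi continuous_subtype_val IsEmbedding.subtypeVal
  have hir : range i = (Subtype.val ⁻¹' X : Set K) := by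
    ext x
    constructor
    · rintro ⟨y, rfl⟩; exact y.2
    · intro h; exact ⟨⟨x.1, h⟩, rfl⟩
  have hid : DenseRange i := by
    intro x
    rw [hir, closure_subtype, Subtype.image_preimage_coe]
    have : (closure X ∩ X) = X := inter_eq_right.2 subset_closure
    change x.1 ∈ closure (closure X ∩ X)
    rw [this]; exact x.2
  let _ : MeasurableSpace M := borel M
  have : BorelSpace M := ⟨rfl⟩
  have hbm : MeasurableSet (Subtype.val ⁻¹' X : Set K) := measurable_subtype_coe hX
  obtain ⟨u, huo, hu⟩ := hbm.residualEq_isOpen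
  rw [← hir] at hu
  have hR : {x | x ∈ range i ↔ x ∈ u} ∈ residual K := by
    filter_upwards [hu] with x hx
    exact iff_of_eq hx
  by_cases hud : Dense u
  · left
    have h1 : range i ∈ residual K := by
      filter_upwards [hR, residual_of_dense_open huo hud] with x hx hxu
      exact hx.2 hxu
    obtain ⟨t, hti, htG, htd⟩ := mem_residual.1 h1
    have hpt : PolishSpace t := polishSpace_of_isGδ htG
    refine ⟨i ⁻¹' t, ?_, ?_⟩
    · have e : (i ⁻¹' t : Set X) ≃ₜ t :=
        { toFun := fun x => ⟨i x.1, x.2⟩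
          invFun := fun y => ⟨⟨y.1.1, by
            have := hti y.2
            rw [hir] at this
            exact this⟩, y.2⟩
          left_inv := fun x => rfl
          right_inv := fun y => rfl
          continuous_toFun := (hi.comp continuous_subtype_val).subtype_mk _
          continuous_invFun := by
            refine Continuous.subtype_mk (Continuous.subtype_mk ?_ _) _
            exact continuous_subtype_val.comp continuous_subtype_val }
      exact e.isClosedEmbedding.polishSpace
    · rw [dense_iff_inter_open]
      rintro U hU ⟨a, ha⟩
      obtain ⟨U', hU', rfl⟩ := hie.isInducing.isOpen_iff.1 hU
      obtain ⟨y, hy, hyt⟩ := htd.inter_open_nonempty U' hU' ⟨i a, ha⟩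
      obtain ⟨x, rfl⟩ := hti hyt
      exact ⟨x, hy, hyt⟩
  · right
    refine ⟨i ⁻¹' (closure u)ᶜ, isClosed_closure.isOpen_compl.preimage hi, ?_, ?_⟩
    · have : (closure u)ᶜ.Nonempty := by
        rw [nonempty_compl]
        intro h
        exact hud (dense_iff_closure_eq.2 h)
      obtain ⟨x, hx⟩ := hid.exists_mem_open isClosed_closure.isOpen_compl this
      exact ⟨x, hx⟩
    · obtain ⟨S, hSo, hSd, hSc, hS⟩ := mem_residual_iff.1 hR
      have hres : ∀ t ∈ S, i ⁻¹' t ∈ residual X := by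
        intro t ht
        refine residual_of_dense_open ((hSo t ht).preimage hi) ?_
        rw [dense_iff_inter_open]
        rintro U hU ⟨a, ha⟩
        obtain ⟨U', hU', rfl⟩ := hie.isInducing.isOpen_iff.1 hU
        have hne : (U' ∩ t).Nonempty := (hSd t ht).inter_open_nonempty U' hU' ⟨i a, ha⟩
        obtain ⟨x, hx⟩ := hid.exists_mem_open (hU'.inter (hSo t ht)) hne
        exact ⟨x, hx.1, hx.2⟩
      have h2 : (⋂ t ∈ S, i ⁻¹' t) ∈ residual X := (countable_bInter_mem hSc).2 hres
      rw [IsMeagre]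
      filter_upwards [h2] with x hx hxu
      have h3 : i x ∈ ⋂₀ S := mem_sInter.2 fun t ht => mem_iInter₂.1 hx t ht
      have h4 := (hS h3).1 (mem_range_self x)
      exact hxu (subset_closure h4)

/-- If some nonempty open subset of `X` is meagre then `X^ℕ` is meagre. -/
theorem isMeagre_pow {Y : Type*} [TopologicalSpace Y] {V : Set Y} (hV : IsOpen V)
    (hne : V.Nonempty) (hm : IsMeagre V) : IsMeagre (univ : Set (ℕ → Y)) := by
  have h1 : ∀ k, ((fun z : ℕ → Y => z k) ⁻¹' V)ᶜ ∈ residual (ℕ → Y) := fun k =>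
    hm.preimage_of_isOpenMap (continuous_apply k) (isOpenMap_eval k)
  have h2 : (⋃ k, (fun z : ℕ → Y => z k) ⁻¹' V) ∈ residual (ℕ → Y) := by
    refine residual_of_dense_open (isOpen_iUnion fun k => hV.preimage (continuous_apply k)) ?_
    rw [dense_iff_inter_open]
    rintro U hU ⟨a, ha⟩
    obtain ⟨k, hk⟩ := exists_free_coord hU ha
    obtain ⟨v, hv⟩ := hne
    refine ⟨_, hk v, mem_iUnion.2 ⟨k, ?_⟩⟩
    simpa using hv
  rw [IsMeagre]
  filter_upwards [h2, countable_iInter_mem.2 h1] with z hz1 hz2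
  obtain ⟨k, hk⟩ := mem_iUnion.1 hz1
  exact absurd hk (mem_iInter.1 hz2 k)

/-- A CDH power of a nontrivial space is not meagre. -/
theorem not_isMeagre_of_isCDH {Y : Type*} [TopologicalSpace Y] [SecondCountableTopology Y]
    [T1Space Y] [Nontrivial Y] (h : IsCDH (ℕ → Y)) (hm : IsMeagre (univ : Set (ℕ → Y))) :
    False := by
  obtain ⟨D, hDc, hDd, hDG⟩ := exists_countable_dense_isGδ hm
  obtain ⟨a, b, hab⟩ := exists_pair_ne Y
  let c : (ℕ → Bool) → (ℕ → Y) := fun x k => if x k then a else b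
  have hc : Continuous c := by
    refine continuous_pi fun k => ?_
    exact (continuous_of_discreteTopology (f := fun t : Bool => if t then a else b)).comp
      (continuous_apply k)
  have hci : Function.Injective c := by
    intro x y hxy
    funext k
    have := congrFun hxy k
    simp only [c] at this
    cases hx : x k <;> cases hy : y k <;> simp_all
  obtain ⟨Q, hQc, hQd⟩ := exists_countable_dense (ℕ → Bool)
  obtain ⟨g, hg⟩ := h D (D ∪ c '' Q) hDc hDd (hDc.union (hQc.image c)) (hDd.mono subset_union_left)
  have hG : IsGδ (D ∪ c '' Q) := by
    rw [← hg, ← Homeomorph.coe_toEquiv, Equiv.image_eq_preimage_symm]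
    exact hDG.preimage g.symm.continuous
  refine not_countable_dense_isGδ (Q := c ⁻¹' (D ∪ c '' Q)) ?_ ?_ (hG.preimage hc)
  · exact (hDc.union (hQc.image c)).preimage hci
  · refine hQd.mono fun x hx => Or.inr ⟨x, hx, rfl⟩

theorem isGδ_of_isCDH {M : Type*} [TopologicalSpace M] [PolishSpace M] {X : Set M}
    (hX : MeasurableSet[borel M] X) (h : IsCDH (ℕ → X)) : IsGδ X := by
  by_cases hsub : X.Subsingleton
  · exact (hsub.finite).isGδ
  have hnt : Nontrivial X := by
    rw [not_subsingleton_iff] at hsub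
    exact hsub.coe_sort
  rcases dichotomy hX with ⟨G, hGp, hGd⟩ | ⟨V, hV, hne, hm⟩
  swap
  · exact (not_isMeagre_of_isCDH h (isMeagre_pow hV hne hm)).elim
  have han : AnalyticSet Xᶜ := by
    let _ : MeasurableSpace M := borel M
    have : BorelSpace M := ⟨rfl⟩
    exact (MeasurableSet.compl hX).analyticSet
  refine isGδ_of_countable han fun E hEc hEX => ?_
  -- the dense Polish subspace of the power
  let j : (ℕ → G) → (ℕ → X) := fun z k => (z k).1
  have hj : IsEmbedding j := IsEmbedding.piMap fun _ => IsEmbedding.subtypeVal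
  have hjd : DenseRange j := by
    have : DenseRange (Subtype.val : G → X) := by
      rw [DenseRange, Subtype.range_coe]; exact hGd
    exact DenseRange.piMap fun _ => this
  obtain ⟨D₀, hD₀c, hD₀d⟩ := exists_countable_dense (ℕ → G)
  have hDd : Dense (j '' D₀) := hjd.dense_image hj.continuous hD₀d
  let δ : X → (ℕ → X) := fun x _ => x
  have hδ : Continuous δ := continuous_pi fun _ => continuous_id
  have hδc : IsClosed (range δ) := by
    have : range δ = ⋂ k, {z : ℕ → X | z k = z 0} := by
      ext z
      simp only [mem_range, mem_iInter, mem_ofPred_eq]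
      constructor
      · rintro ⟨x, rfl⟩ n; rfl
      · intro hz; exact ⟨z 0, funext fun k => (hz k).symm⟩
    rw [this]
    exact isClosed_iInter fun k => isClosed_eq (continuous_apply k) (continuous_apply 0)
  have hδe : IsClosedEmbedding δ :=
    ⟨IsEmbedding.of_comp hδ (continuous_apply 0) IsEmbedding.id, hδc⟩
  let E' : Set X := Subtype.val ⁻¹' E
  have hE'c : E'.Countable := hEc.preimage Subtype.val_injective
  obtain ⟨g, hg⟩ := h (j '' D₀) (j '' D₀ ∪ δ '' E') (hD₀c.image j) hDd
    ((hD₀c.image j).union (hE'c.image δ)) (hDd.mono subset_union_left)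
  let P : Set (ℕ → G) := {z | g (j z) ∈ range δ}
  have hPc : IsClosed P := hδc.preimage (g.continuous.comp hj.continuous)
  have hPp : PolishSpace P := hPc.polishSpace
  let e : P → M := fun z => ((g (j z.1)) 0).1
  have he : IsEmbedding e := by
    have h1 : IsEmbedding (fun z : P => g (j z.1)) :=
      g.isEmbedding.comp (hj.comp IsEmbedding.subtypeVal)
    have hec : Continuous e := continuous_subtype_val.comp ((continuous_apply 0).comp h1.continuous)
    have h2 : ∀ z : P, g (j z.1) = δ (g (j z.1) 0) := by
      rintro ⟨z, x, hx⟩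
      rw [← hx]
    let e' : P → X := fun z => g (j z.1) 0
    have he' : Continuous e' := (continuous_apply 0).comp h1.continuous
    have h3 : IsEmbedding e' := by
      refine IsEmbedding.of_comp he' hδ ?_
      have : δ ∘ e' = fun z : P => g (j z.1) := funext fun z => (h2 z).symm
      rw [this]; exact h1
    exact IsEmbedding.subtypeVal.comp h3
  refine ⟨range e, isGδ_range_of_polishSpace he, ?_, ?_⟩
  · intro x hx
    have h1 : δ ⟨x, hEX hx⟩ ∈ g '' (j '' D₀) := by
      rw [hg]; exact Or.inr ⟨⟨x, hEX hx⟩, hx, rfl⟩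
    obtain ⟨_, ⟨z, _, rfl⟩, hz⟩ := h1
    refine ⟨⟨z, ⟨_, hz.symm⟩⟩, ?_⟩
    simp only [e, hz, δ]
  · rintro _ ⟨z, rfl⟩
    exact Subtype.coe_prop _

/-- The set of sequences that are eventually equal to `o`. -/
def EvEq {β : Type*} (o : β) : Set (ℕ → β) := {x | ∃ N, ∀ n ≥ N, x n = o}

open PiNat in
/-- Abstract scheme construction. -/
theorem scheme {Z β : Type*} [TopologicalSpace Z] [T1Space Z] [TopologicalSpace β]
    [DiscreteTopology β] (o : β) (R : ℕ → Set Z → Prop) (e : ℕ → Z) (he : DenseRange e)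
    (hstep : ∀ (n : ℕ) (A : Set Z) (a : Z), IsClopen A → a ∈ A → ∃ B : β → Set Z,
      (∀ b, IsClopen (B b)) ∧ (∀ b, (B b).Nonempty) ∧ Pairwise (fun b c => Disjoint (B b) (B c)) ∧
      (⋃ b, B b) = A ∧ a ∈ B o ∧ ∀ b, R n (B b))
    (hlim : ∀ T : ℕ → Set Z, Antitone T → (∀ n, IsClopen (T n)) → (∀ n, (T n).Nonempty) →
      (∀ n, R n (T (n + 1))) → ∃ z, (∀ n, z ∈ T n) ∧ ∀ U ∈ 𝓝 z, ∃ n, T n ⊆ U) :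
    ∃ h : Z ≃ₜ (ℕ → β), h '' range e = EvEq o := by
  classical
  let σ := {p : Set Z × Z // IsClopen p.1 ∧ p.2 ∈ p.1 ∧ p.2 ∈ range e}
  have hnext : ∀ (n : ℕ) (p : σ), ∃ q : β → σ,
      Pairwise (fun b c => Disjoint (q b).1.1 (q c).1.1) ∧
      (⋃ b, (q b).1.1) = p.1.1 ∧ (q o).1.2 = p.1.2 ∧ (∀ b, R n (q b).1.1) ∧
      ∀ b, b ≠ o → ∃ k, (q b).1.2 = e k ∧ ∀ j < k, e j ∉ (q b).1.1 := by
    rintro n ⟨⟨A, a⟩, hA, haA, haD⟩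
    obtain ⟨B, hB1, hB2, hB3, hB4, hB5, hB6⟩ := hstep n A a hA haA
    have hex : ∀ b, ∃ k, e k ∈ B b := fun b => by
      obtain ⟨k, hk⟩ := he.exists_mem_open (hB1 b).isOpen (hB2 b)
      exact ⟨k, hk⟩
    let q : β → σ := fun b => if hb : b = o then ⟨(B b, a), hB1 b, hb ▸ hB5, haD⟩
      else ⟨(B b, e (Nat.find (hex b))), hB1 b, Nat.find_spec (hex b), mem_range_self _⟩
    have hq : ∀ b, (q b).1.1 = B b := by
      intro b
      by_cases hb : b = o <;> simp [q, hb]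
    refine ⟨q, ?_, ?_, ?_, ?_, ?_⟩
    · intro b c hbc
      simp only [hq]
      exact hB3 hbc
    · simp only [hq]; exact hB4
    · simp [q]
    · intro b; rw [hq]; exact hB6 b
    · intro b hb
      refine ⟨Nat.find (hex b), by simp [q, hb], fun j hj => ?_⟩
      rw [hq]
      exact Nat.find_min (hex b) hj
  choose q hq1 hq2 hq3 hq4 hq5 using hnext
  let S : List β → σ := fun s => List.rec
    ⟨(univ, e 0), isClopen_univ, mem_univ _, mem_range_self _⟩ (fun b s p => q s.length p b) s
  let A : List β → Set Z := fun s => (S s).1.1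
  let d : List β → Z := fun s => (S s).1.2
  have hAnil : A [] = univ := rfl
  have hS : ∀ b s, S (b :: s) = q s.length (S s) b := fun b s => rfl
  have hAc : ∀ s, IsClopen (A s) := fun s => (S s).2.1
  have hdA : ∀ s, d s ∈ A s := fun s => (S s).2.2.1
  have hdD : ∀ s, d s ∈ range e := fun s => (S s).2.2.2
  have hAU : ∀ s, (⋃ b, A (b :: s)) = A s := fun s => hq2 _ _
  have hAdis : ∀ s b c z, z ∈ A (b :: s) → z ∈ A (c :: s) → b = c := by
    intro s b c z hb hc
    by_contra hne
    exact disjoint_left.1 (hq1 s.length (S s) hne) hb hc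
  have hdo : ∀ s, d (o :: s) = d s := fun s => hq3 _ _
  have hAR : ∀ b s, R s.length (A (b :: s)) := fun b s => hq4 _ _ _
  have hdk : ∀ b s, b ≠ o → ∃ k, d (b :: s) = e k ∧ ∀ j < k, e j ∉ A (b :: s) :=
    fun b s hb => hq5 _ _ _ hb
  have hanti : ∀ x : ℕ → β, Antitone (fun n => A (res x n)) := by
    intro x
    refine antitone_nat_of_succ_le fun n => ?_
    rw [res_succ]
    change A (x n :: res x n) ⊆ A (res x n)
    rw [← hAU (res x n)]
    exact subset_iUnion (fun b => A (b :: res x n)) (x n)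
  have hG : ∀ x : ℕ → β, ∃ z, (∀ n, z ∈ A (res x n)) ∧ ∀ U ∈ 𝓝 z, ∃ n, A (res x n) ⊆ U := by
    intro x
    refine hlim (fun n => A (res x n)) (hanti x) (fun n => hAc _) (fun n => ⟨_, hdA _⟩) fun n => ?_
    have := hAR (x n) (res x n)
    rw [res_length] at this
    exact this
  choose G hG1 hG2 using hG
  have huniq : ∀ (x y : ℕ → β) (z : Z) (n : ℕ), z ∈ A (res x n) → z ∈ A (res y n) →
      res x n = res y n := by
    intro x y z n
    induction n with
    | zero => intro _ _; rfl
    | succ n ih =>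
      intro hx hy
      have h1 := ih (hanti x (Nat.le_succ n) hx) (hanti y (Nat.le_succ n) hy)
      rw [res_succ] at hx hy ⊢
      rw [res_succ]
      rw [← h1] at hy ⊢
      rw [hAdis _ _ _ _ hx hy]
  have hGi : Function.Injective G := by
    intro x y hxy
    apply res_injective
    funext n
    exact huniq x y (G x) n (hG1 x n) (hxy ▸ hG1 y n)
  have hpath : ∀ z, ∃ x : ℕ → β, ∀ n, z ∈ A (res x n) := by
    intro z
    have hb : ∀ s, ∃ b, z ∈ A s → z ∈ A (b :: s) := by
      intro s
      by_cases hz : z ∈ A s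
      · rw [← hAU s] at hz
        obtain ⟨b, hb⟩ := mem_iUnion.1 hz
        exact ⟨b, fun _ => hb⟩
      · exact ⟨o, fun h => absurd h hz⟩
    choose b hb using hb
    let L : ℕ → List β := fun n => Nat.rec [] (fun _ l => b l :: l) n
    have hL : ∀ n, res (fun n => b (L n)) n = L n := by
      intro n
      induction n with
      | zero => rfl
      | succ n ih => rw [res_succ, ih]
    refine ⟨fun n => b (L n), fun n => ?_⟩
    rw [hL]
    induction n with
    | zero => exact mem_univ z
    | succ n ih => exact hb _ ih
  have hGs : Function.Surjective G := by
    intro z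
    obtain ⟨x, hx⟩ := hpath z
    refine ⟨x, ?_⟩
    by_contra hne
    obtain ⟨n, hn⟩ := hG2 x {z}ᶜ (isOpen_compl_singleton.mem_nhds hne)
    exact hn (hx n) rfl
  have hGc : Continuous G := by
    rw [continuous_iff_continuousAt]
    intro x U hU
    obtain ⟨n, hn⟩ := hG2 x U hU
    have h1 : cylinder x n ∈ 𝓝 x := (isOpen_cylinder _ x n).mem_nhds (self_mem_cylinder x n)
    refine mem_map.2 (mem_of_superset h1 fun y hy => ?_)
    rw [cylinder_eq_res] at hy
    apply hn
    have := hG1 y n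
    rwa [show res y n = res x n from hy] at this
  let E : (ℕ → β) ≃ Z := Equiv.ofBijective G ⟨hGi, hGs⟩
  have hEG : ∀ x, E x = G x := fun x => rfl
  have hEm : ∀ z n, z ∈ A (res (E.symm z) n) := by
    intro z n
    have := hG1 (E.symm z) n
    rwa [← hEG, Equiv.apply_symm_apply] at this
  have hEc : Continuous E.symm := by
    refine continuous_pi fun k => ?_
    rw [continuous_iff_continuousAt]
    intro z
    have h1 : A (res (E.symm z) (k + 1)) ∈ 𝓝 z := (hAc (res (E.symm z) (k + 1))).isOpen.mem_nhds (hEm z (k + 1))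
    have h2 : (fun w => E.symm w k) =ᶠ[𝓝 z] fun _ => E.symm z k := by
      filter_upwards [h1] with w hw
      have := huniq _ _ w (k + 1) (hEm w (k + 1)) hw
      rw [res_succ, res_succ] at this
      exact (List.cons.inj this).1
    exact (continuousAt_const).congr h2.symm
  let h : Z ≃ₜ (ℕ → β) :=
    { toEquiv := E.symm, continuous_toFun := hEc, continuous_invFun := hGc }
  refine ⟨h, ?_⟩
  have hstay : ∀ x m, d (res x m) = G x → ∀ n ≥ m, d (res x n) = G x ∧ x n = o := by
    intro x m hm n hn
    have hz : ∀ n, d (res x n) = G x → x n = o := by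
      intro n h1
      have h2 : G x ∈ A (o :: res x n) := by
        rw [← h1, ← hdo]; exact hdA (o :: res x n)
      have h3 := hG1 x (n + 1)
      rw [res_succ] at h3
      exact hAdis _ _ _ _ h3 h2
    induction n, hn using Nat.le_induction with
    | base => exact ⟨hm, hz m hm⟩
    | succ n hn ih =>
      have : d (res x (n + 1)) = G x := by
        rw [res_succ, ih.2, hdo]; exact ih.1
      exact ⟨this, hz _ this⟩
  have key : ∀ x, G x ∈ range e ↔ x ∈ EvEq o := by
    intro x
    constructor
    · intro hx
      have hx' : ∃ k, e k = G x := hx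
      let k := Nat.find hx'
      have hk : e k = G x := Nat.find_spec hx'
      have hM : ∃ M, ∀ j < k, e j ∉ A (res x M) := by
        have hU : (e '' Iio k)ᶜ ∈ 𝓝 (G x) := by
          refine ((finite_Iio k).image e).isClosed.isOpen_compl.mem_nhds ?_
          rintro ⟨j, hj, hje⟩
          exact Nat.find_min hx' hj hje
        obtain ⟨M, hM⟩ := hG2 x _ hU
        exact ⟨M, fun j hj hjM => hM hjM ⟨j, hj, rfl⟩⟩
      obtain ⟨M, hM⟩ := hM
      by_contra hcon
      have hcon' : ∃ n ≥ M, x n ≠ o := by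
        by_contra! hc
        exact hcon ⟨M, hc⟩
      obtain ⟨n, hnM, hn⟩ := hcon'
      obtain ⟨k', hk', hmin⟩ := hdk (x n) (res x n) hn
      rw [← res_succ] at hk' hmin
      have h1 : k' ≤ k := by
        by_contra! hlt
        apply hmin k hlt
        rw [hk]; exact hG1 x (n + 1)
      have h2 : k ≤ k' := by
        by_contra! hlt
        apply hM k' hlt
        rw [← hk']
        exact hanti x (le_trans hnM (Nat.le_succ n)) (hdA (res x (n + 1)))
      have h3 : k' = k := le_antisymm h1 h2
      rw [h3, hk] at hk'
      exact hcon ⟨n + 1, fun m hm => (hstay x (n + 1) hk' m hm).2⟩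
    · rintro ⟨N, hN⟩
      have h1 : ∀ n ≥ N, d (res x n) = d (res x N) := by
        intro n hn
        induction n, hn using Nat.le_induction with
        | base => rfl
        | succ n hn ih => rw [res_succ, hN n hn, hdo, ih]
      have h2 : G x = d (res x N) := by
        by_contra hne
        obtain ⟨n, hn⟩ := hG2 x {d (res x N)}ᶜ (isOpen_compl_singleton.mem_nhds hne)
        have h3 := hdA (res x (max n N))
        rw [h1 _ (le_max_right _ _)] at h3
        exact hn (hanti x (le_max_left n N) h3) rfl
      rw [h2]; exact hdD _
  ext x
  constructor
  · rintro ⟨z, hz, rfl⟩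
    rw [← key]
    change E (E.symm z) ∈ range e
    rw [Equiv.apply_symm_apply]; exact hz
  · intro hx
    refine ⟨G x, (key x).2 hx, ?_⟩
    exact E.symm_apply_apply x

/-- Compact case. -/
theorem cantor_case {Z : Type*} [TopologicalSpace Z] [T2Space Z] [SecondCountableTopology Z]
    [CompactSpace Z] [Nonempty Z] (hb : IsTopologicalBasis {s : Set Z | IsClopen s})
    (hp : ∀ (A : Set Z) (a : Z), IsOpen A → a ∈ A → ∃ b ∈ A, b ≠ a)
    (e : ℕ → Z) (he : DenseRange e) :
    ∃ h : Z ≃ₜ (ℕ → Bool), h '' range e = EvEq false := by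
  -- a countable clopen basis
  obtain ⟨B, hBc, hBsub, hB⟩ : ∃ B : Set (Set Z), B.Countable ∧ (∀ s ∈ B, IsClopen s) ∧
      IsTopologicalBasis B := by
    obtain ⟨B, hBs, hBc, hB⟩ := hb.exists_countable
    exact ⟨B, hBc, fun s hs => hBs hs, hB⟩
  have hBne : B.Nonempty := by
    obtain ⟨z⟩ := ‹Nonempty Z›
    obtain ⟨U, hU, _⟩ := hB.exists_subset_of_mem_open (mem_univ z) isOpen_univ
    exact ⟨U, hU⟩
  obtain ⟨C, hC⟩ := hBc.exists_eq_range hBne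
  have hCc : ∀ n, IsClopen (C n) := fun n => hBsub _ (hC ▸ mem_range_self n)
  refine scheme false (fun n T => T ⊆ C n ∨ T ⊆ (C n)ᶜ) e he ?_ ?_
  · intro n A a hA ha
    obtain ⟨W, hW, haW, hne, h1, h2⟩ : ∃ W, IsClopen W ∧ a ∈ W ∧ (A \ W).Nonempty ∧
        (A ∩ W ⊆ C n ∨ A ∩ W ⊆ (C n)ᶜ) ∧ (A \ W ⊆ C n ∨ A \ W ⊆ (C n)ᶜ) := by
      have hsplit : (A ⊆ C n ∨ A ⊆ (C n)ᶜ) → ∃ W, IsClopen W ∧ a ∈ W ∧ (A \ W).Nonempty ∧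
        (A ∩ W ⊆ C n ∨ A ∩ W ⊆ (C n)ᶜ) ∧ (A \ W ⊆ C n ∨ A \ W ⊆ (C n)ᶜ) := by
        intro hAC
        obtain ⟨b, hbA, hba⟩ := hp A a hA.isOpen ha
        obtain ⟨W, hW, haW, hWb⟩ := hb.exists_subset_of_mem_open
          (show a ∈ ({b}ᶜ : Set Z) from fun h => hba h.symm) isOpen_compl_singleton
        refine ⟨W, hW, haW, ⟨b, hbA, fun h => hWb h rfl⟩, ?_, ?_⟩
        · exact hAC.imp inter_subset_left.trans inter_subset_left.trans
        · exact hAC.imp sdiff_subset.trans sdiff_subset.trans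
      by_cases haC : a ∈ C n
      · by_cases hAC : A ⊆ C n
        · exact hsplit (Or.inl hAC)
        · obtain ⟨b, hbA, hbC⟩ := not_subset.1 hAC
          exact ⟨C n, hCc n, haC, ⟨b, hbA, hbC⟩, Or.inl inter_subset_right,
            Or.inr fun x hx => hx.2⟩
      · by_cases hAC : A ⊆ (C n)ᶜ
        · exact hsplit (Or.inr hAC)
        · obtain ⟨b, hbA, hbC⟩ := not_subset.1 hAC
          exact ⟨(C n)ᶜ, (hCc n).compl, haC, ⟨b, hbA, hbC⟩, Or.inr inter_subset_right,
            Or.inl fun x hx => not_not.1 hx.2⟩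
    refine ⟨fun b => bif b then A \ W else A ∩ W, ?_, ?_, ?_, ?_, ⟨ha, haW⟩, ?_⟩
    · rintro (_ | _)
      · exact hA.inter hW
      · exact hA.diff hW
    · rintro (_ | _)
      · exact ⟨a, ha, haW⟩
      · exact hne
    · rintro (_ | _) (_ | _) hbc
      · exact absurd rfl hbc
      · exact disjoint_left.2 fun x hx hx' => hx'.2 hx.2
      · exact disjoint_left.2 fun x hx hx' => hx.2 hx'.2
      · exact absurd rfl hbc
    · ext x
      simp only [mem_iUnion, Bool.exists_bool, cond_false, cond_true, mem_inter_iff, Set.mem_sdiff]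
      tauto
    · rintro (_ | _)
      · exact h1
      · exact h2
  · intro T hT hTc hTne hTR
    obtain ⟨z, hz⟩ := IsCompact.nonempty_iInter_of_sequence_nonempty_isCompact_isClosed T
      (fun n => hT (Nat.le_succ n)) hTne (hTc 0).isClosed.isCompact (fun n => (hTc n).isClosed)
    have hz' := mem_iInter.1 hz
    refine ⟨z, hz', fun U hU => ?_⟩
    obtain ⟨V, hV, hzV, hVU⟩ := hB.mem_nhds_iff.1 hU
    rw [hC] at hV
    obtain ⟨n, rfl⟩ := hV
    refine ⟨n + 1, ?_⟩
    rcases hTR n with h | h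
    · exact h.trans hVU
    · exact absurd hzV (h (hz' (n + 1)))

/-- Partition of a noncompact clopen set into infinitely many small clopen sets. -/
theorem clopen_partition {Z : Type*} [MetricSpace Z] [SecondCountableTopology Z]
    (hb : IsTopologicalBasis {s : Set Z | IsClopen s}) {A : Set Z} (hA : IsClopen A)
    (hnc : ¬ IsCompact A) {a : Z} (ha : a ∈ A) {ε : ℝ} (hε : 0 < ε) :
    ∃ B : ℕ → Set Z, (∀ b, IsClopen (B b)) ∧ (∀ b, (B b).Nonempty) ∧
      Pairwise (fun b c => Disjoint (B b) (B c)) ∧ (⋃ b, B b) = A ∧ a ∈ B 0 ∧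
      ∀ b, ∀ p ∈ B b, ∀ q ∈ B b, dist p q < ε := by
  classical
  have hcov : ∃ (ι : Type _) (U : ι → Set Z), (∀ i, IsOpen (U i)) ∧ A ⊆ ⋃ i, U i ∧
      ∀ t : Finset ι, ¬ A ⊆ ⋃ i ∈ t, U i := by
    by_contra! hcon
    exact hnc (isCompact_of_finite_subcover fun {ι} U h1 h2 => hcon ι U h1 h2)
  obtain ⟨ι, U, hU, hAU, hfin⟩ := hcov
  have hV : ∀ x, ∃ V, IsClopen V ∧ x ∈ V ∧ (∀ p ∈ V, ∀ q ∈ V, dist p q < ε) ∧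
      (x ∈ A → V ⊆ A ∧ ∃ i, V ⊆ U i) ∧ (x ∉ A → V ⊆ Aᶜ) := by
    intro x
    have hball : ∀ p ∈ Metric.ball x (ε / 2), ∀ q ∈ Metric.ball x (ε / 2), dist p q < ε := by
      intro p hp q hq
      rw [Metric.mem_ball] at hp hq
      have := dist_triangle_right p q x
      linarith
    by_cases hx : x ∈ A
    · obtain ⟨i, hi⟩ := mem_iUnion.1 (hAU hx)
      obtain ⟨V, hV, hxV, hVs⟩ := hb.exists_subset_of_mem_open
        (show x ∈ Metric.ball x (ε / 2) ∩ (A ∩ U i) from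
          ⟨Metric.mem_ball_self (by positivity), hx, hi⟩)
        (Metric.isOpen_ball.inter (hA.isOpen.inter (hU i)))
      exact ⟨V, hV, hxV, fun p hp q hq => hball p (hVs hp).1 q (hVs hq).1,
        fun _ => ⟨fun y hy => (hVs hy).2.1, i, fun y hy => (hVs hy).2.2⟩, fun h => absurd hx h⟩
    · obtain ⟨V, hV, hxV, hVs⟩ := hb.exists_subset_of_mem_open
        (show x ∈ Metric.ball x (ε / 2) ∩ Aᶜ from
          ⟨Metric.mem_ball_self (by positivity), hx⟩)
        (Metric.isOpen_ball.inter hA.compl.isOpen)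
      exact ⟨V, hV, hxV, fun p hp q hq => hball p (hVs hp).1 q (hVs hq).1,
        fun h => absurd h hx, fun _ y hy => (hVs hy).2⟩
  choose V hVc hxV hVd hVA hVn using hV
  obtain ⟨s, hsc, hs⟩ := TopologicalSpace.countable_cover_nhds fun x => (hVc x).isOpen.mem_nhds (hxV x)
  have hsne : s.Nonempty := by
    by_contra h
    rw [not_nonempty_iff_eq_empty] at h
    simp only [h, mem_empty_iff_false, iUnion_of_empty, iUnion_empty] at hs
    have : a ∈ (∅ : Set Z) := hs ▸ mem_univ a
    exact this
  obtain ⟨y, hy⟩ := hsc.exists_eq_range hsne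
  let W : ℕ → Set Z := fun n => V (y n) ∩ A
  have hWc : ∀ n, IsClopen (W n) := fun n => (hVc _).inter hA
  have hWA : (⋃ n, W n) = A := by
    apply Subset.antisymm
    · exact iUnion_subset fun n => inter_subset_right
    · intro x hx
      have : x ∈ ⋃ x ∈ s, V x := hs ▸ mem_univ x
      obtain ⟨w, hw, hxw⟩ := mem_iUnion₂.1 this
      rw [hy] at hw
      obtain ⟨n, rfl⟩ := hw
      exact mem_iUnion.2 ⟨n, hxw, hx⟩
  let X : ℕ → Set Z := disjointed W
  have hXW : ∀ n, X n ⊆ W n := fun n => disjointed_subset W n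
  have hXA : (⋃ n, X n) = A := (iUnion_disjointed).trans hWA
  have hXc : ∀ n, IsClopen (X n) := by
    intro n
    exact disjointedRec (fun t i ht => ht.diff (hWc i)) (hWc n)
  have hXd : Pairwise (fun b c => Disjoint (X b) (X c)) := disjoint_disjointed W
  let I : Set ℕ := {n | (X n).Nonempty}
  have hI : I.Infinite := by
    intro hIf
    have hi : ∀ n, ∃ i, n ∈ I → X n ⊆ U i := by
      intro n
      by_cases hn : n ∈ I
      · obtain ⟨x, hx⟩ := hn
        have hyA : y n ∈ A := by
          by_contra hyA
          exact hVn _ hyA (hXW n hx).1 (hXW n hx).2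
        obtain ⟨i, hi⟩ := (hVA _ hyA).2
        exact ⟨i, fun _ => (hXW n).trans (inter_subset_left.trans hi)⟩
      · obtain ⟨i, _⟩ := mem_iUnion.1 (hAU ha)
        exact ⟨i, fun h => absurd h hn⟩
    choose i hi using hi
    refine hfin (hIf.toFinset.image i) fun x hx => ?_
    rw [← hXA] at hx
    obtain ⟨n, hn⟩ := mem_iUnion.1 hx
    have hnI : n ∈ I := ⟨x, hn⟩
    refine mem_iUnion₂.2 ⟨i n, ?_, hi n hnI hn⟩
    exact Finset.mem_image_of_mem _ (hIf.mem_toFinset.2 hnI)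
  have : Infinite I := hI.to_subtype
  obtain ⟨φ₀⟩ : Nonempty (ℕ ≃ I) := nonempty_equiv_of_countable
  have ha' : a ∈ ⋃ n, X n := hXA ▸ ha
  obtain ⟨m, hm⟩ := mem_iUnion.1 ha'
  have hmI : m ∈ I := ⟨a, hm⟩
  let φ : ℕ ≃ I := (Equiv.swap 0 (φ₀.symm ⟨m, hmI⟩)).trans φ₀
  have hφ0 : φ 0 = ⟨m, hmI⟩ := by simp [φ]
  refine ⟨fun n => X (φ n), fun n => hXc _, fun n => (φ n).2, ?_, ?_, ?_, ?_⟩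
  · intro b c hbc
    refine hXd fun h => hbc (φ.injective (Subtype.ext h))
  · rw [← hXA]
    apply Subset.antisymm
    · exact iUnion_subset fun n => subset_iUnion X _
    · refine iUnion_subset fun n x hx => mem_iUnion.2 ⟨φ.symm ⟨n, ⟨x, hx⟩⟩, ?_⟩
      rw [Equiv.apply_symm_apply]; exact hx
  · change a ∈ X (φ 0)
    rw [hφ0]; exact hm
  · intro n p hp q hq
    exact hVd _ p (hXW _ hp).1 q (hXW _ hq).1

theorem baire_case {Z : Type*} [TopologicalSpace Z] [PolishSpace Z]
    (hb : IsTopologicalBasis {s : Set Z | IsClopen s})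
    (hp : ∀ A : Set Z, IsClopen A → A.Nonempty → ¬ IsCompact A)
    (e : ℕ → Z) (he : DenseRange e) :
    ∃ h : Z ≃ₜ (ℕ → ℕ), h '' range e = EvEq 0 := by
  let _ := upgradeIsCompletelyMetrizable Z
  refine scheme 0 (fun n T => ∀ p ∈ T, ∀ q ∈ T, dist p q < 1 / ((n : ℝ) + 1)) e he ?_ ?_
  · intro n A a hA ha
    exact clopen_partition hb hA (hp A hA ⟨a, ha⟩) ha (by positivity)
  · intro T hT hTc hTne hTR
    choose t ht using hTne
    have hc : CauchySeq t := by
      rw [Metric.cauchySeq_iff]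
      intro ε hε
      obtain ⟨n, hn⟩ := exists_nat_one_div_lt hε
      refine ⟨n + 1, fun i hi j hj => ?_⟩
      exact (hTR n _ (hT hi (ht i)) _ (hT hj (ht j))).trans hn
    obtain ⟨z, hz⟩ := cauchySeq_tendsto_of_complete hc
    have hzT : ∀ n, z ∈ T n := fun n =>
      (hTc n).isClosed.mem_of_tendsto hz (eventually_atTop.2 ⟨n, fun m hm => hT hm (ht m)⟩)
    refine ⟨z, hzT, fun U hU => ?_⟩
    obtain ⟨ε, hε, hεU⟩ := Metric.mem_nhds_iff.1 hU
    obtain ⟨n, hn⟩ := exists_nat_one_div_lt hε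
    exact ⟨n + 1, fun w hw => hεU ((hTR n _ hw _ (hzT _)).trans hn)⟩

instance polishSpace_bool : PolishSpace Bool :=
  (show IsClosedEmbedding (fun b : Bool => if b then (1 : ℕ) else 0) from
    IsClosedEmbedding.of_continuous_injective_isClosedMap continuous_of_discreteTopology
      (by intro a b; cases a <;> cases b <;> simp)
      (fun _ _ => isClosed_discrete _)).polishSpace

theorem clopen_basis (X : Set (ℕ → Bool)) :
    IsTopologicalBasis {s : Set (ℕ → X) | IsClopen s} := by
  let j : (ℕ → X) → (ℕ → ℕ → Bool) := fun z k => (z k).1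
  have hj : IsEmbedding j := IsEmbedding.piMap fun _ => IsEmbedding.subtypeVal
  refine isTopologicalBasis_of_isOpen_of_nhds (fun u hu => IsClopen.isOpen hu) ?_
  intro a u ha hu
  obtain ⟨u', hu', rfl⟩ := hj.isInducing.isOpen_iff.1 hu
  obtain ⟨V, hV, haV, hVu⟩ := compact_exists_isClopen_in_isOpen hu' (x := j a) ha
  exact ⟨j ⁻¹' V, hV.preimage hj.continuous, haV, preimage_mono hVu⟩

theorem main_homeo {X : Set (ℕ → Bool)} (hX : IsGδ X) (hnt : Nontrivial X) :
    (∀ e : ℕ → (ℕ → X), DenseRange e →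
      ∃ h : (ℕ → X) ≃ₜ (ℕ → Bool), h '' range e = EvEq false) ∨
    (∀ e : ℕ → (ℕ → X), DenseRange e →
      ∃ h : (ℕ → X) ≃ₜ (ℕ → ℕ), h '' range e = EvEq 0) := by
  have hP : PolishSpace X := polishSpace_of_isGδ hX
  by_cases hc : CompactSpace X
  · left
    intro e he
    exact cantor_case (clopen_basis X) (fun A a hA ha => exists_ne_of_isOpen hA ha) e he
  · right
    intro e he
    refine baire_case (clopen_basis X) ?_ e he
    rintro A hA ⟨a, ha⟩ hAc
    obtain ⟨k, hk⟩ := exists_free_coord hA.isOpen ha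
    apply hc
    have h1 : IsCompact ((fun z : ℕ → X => z k) '' A) := hAc.image (continuous_apply k)
    have h2 : (fun z : ℕ → X => z k) '' A = univ := by
      rw [eq_univ_iff_forall]
      intro y
      exact ⟨_, hk y, by simp⟩
    rw [h2] at h1
    exact ⟨h1⟩

theorem isCDH_of_homeo {Z W : Type*} [TopologicalSpace Z] [TopologicalSpace W] [Nonempty Z]
    {S : Set W} (h : ∀ e : ℕ → Z, DenseRange e → ∃ h : Z ≃ₜ W, h '' range e = S) : IsCDH Z := by
  intro D D' hDc hDd hD'c hD'd
  obtain ⟨e, rfl⟩ := hDc.exists_eq_range hDd.nonempty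
  obtain ⟨e', rfl⟩ := hD'c.exists_eq_range hD'd.nonempty
  obtain ⟨f, hf⟩ := h e hDd
  obtain ⟨f', hf'⟩ := h e' hD'd
  refine ⟨f.trans f'.symm, ?_⟩
  have h1 : (f.trans f'.symm : Z → Z) = f'.symm ∘ f := rfl
  rw [h1, image_comp, hf, ← hf', ← image_comp, Homeomorph.symm_comp_self, image_id]

theorem isCDH_of_subsingleton {Z : Type*} [TopologicalSpace Z] [Subsingleton Z] : IsCDH Z := by
  intro D D' _ hDd _ hD'd
  refine ⟨Homeomorph.refl Z, ?_⟩
  have h : ∀ E : Set Z, Dense E → E = univ := by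
    intro E hE
    rw [eq_univ_iff_forall]
    intro z
    obtain ⟨w, hw⟩ := (have : Nonempty Z := ⟨z⟩; hE.nonempty)
    rwa [Subsingleton.elim z w]
  rw [h D hDd, h D' hD'd]
  simp

theorem isGδ_of_pow_polish {X : Set (ℕ → Bool)} (hP : PolishSpace (ℕ → X)) : IsGδ X := by
  let δ : X → (ℕ → X) := fun x _ => x
  have hδ : Continuous δ := continuous_pi fun _ => continuous_id
  have hδc : IsClosed (range δ) := by
    have : range δ = ⋂ k, {z : ℕ → X | z k = z 0} := by
      ext z
      simp only [mem_range, mem_iInter, mem_ofPred_eq]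
      constructor
      · rintro ⟨x, rfl⟩ n; rfl
      · intro hz; exact ⟨z 0, funext fun k => (hz k).symm⟩
    rw [this]
    exact isClosed_iInter fun k => isClosed_eq (continuous_apply k) (continuous_apply 0)
  have hδe : IsClosedEmbedding δ :=
    ⟨IsEmbedding.of_comp hδ (continuous_apply 0) IsEmbedding.id, hδc⟩
  have : PolishSpace X := hδe.polishSpace
  exact isGδ_of_polishSpace

end BorelCDH

/-- For a Borel subset `X` of the Cantor space, the following are equivalent:
(1) `X^ℕ` is CDH; (2) `X` is `Gδ` in `2^ℕ`; (3) `X^ℕ` has at most one point, or is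
homeomorphic to the Cantor space, or is homeomorphic to the Baire space. -/
theorem borel_pow_CDH_characterization
    (X : Set (ℕ → Bool))
    (hB : MeasurableSet[borel (ℕ → Bool)] X) :
    (IsCDH (ℕ → ↥X) ↔ IsGδ X) ∧
    (IsGδ X ↔
      (Subsingleton (ℕ → ↥X) ∨
       Nonempty ((ℕ → ↥X) ≃ₜ (ℕ → Bool)) ∨
       Nonempty ((ℕ → ↥X) ≃ₜ (ℕ → ℕ)))) := by
  refine ⟨⟨BorelCDH.isGδ_of_isCDH hB, fun hX => ?_⟩, fun hX => ?_, ?_⟩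
  · rcases subsingleton_or_nontrivial X with hs | hnt
    · exact BorelCDH.isCDH_of_subsingleton
    · rcases BorelCDH.main_homeo hX hnt with h | h
      · exact BorelCDH.isCDH_of_homeo h
      · exact BorelCDH.isCDH_of_homeo h
  · rcases subsingleton_or_nontrivial X with hs | hnt
    · exact Or.inl inferInstance
    · right
      obtain ⟨e, he⟩ := TopologicalSpace.exists_dense_seq (ℕ → X)
      rcases BorelCDH.main_homeo hX hnt with h | h
      · obtain ⟨f, -⟩ := h e he
        exact Or.inl ⟨f⟩
      · obtain ⟨f, -⟩ := h e he
        exact Or.inr ⟨f⟩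
  · rintro (hs | ⟨⟨f⟩⟩ | ⟨⟨f⟩⟩)
    · have : X.Subsingleton := by
        intro x hx y hy
        have := congrFun (hs.elim (fun _ => (⟨x, hx⟩ : X)) (fun _ => ⟨y, hy⟩)) 0
        exact congrArg Subtype.val this
      exact this.finite.isGδ
    · exact BorelCDH.isGδ_of_pow_polish f.isClosedEmbedding.polishSpace
    · exact BorelCDH.isGδ_of_pow_polish f.isClosedEmbedding.polishSpace
end

section
/- Let X ⊆ 2^ℕ be a Gδ subset of the Cantor space such that the countable power X^ℕ of the subspace X has more than one point. If X is compact then X^ℕ is homeomorphic to the Cantor space 2^ℕ, and if X is not compact then X^ℕ is homeomorphic to the Baire space ℕ^ℕ. -/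
open Set TopologicalSpace Topology

namespace PowAux

/-- Scheme lemma: iterated partitions into clopen sets yield a homeomorphism with `ℕ → β`. -/
theorem scheme_homeo {Y β : Type*} [TopologicalSpace Y] [TopologicalSpace β] [DiscreteTopology β]
    [Nonempty Y] [T1Space Y] (P : ℕ → Set Y → Prop)
    (split : ∀ (n : ℕ) (U : Set Y), IsClopen U → U.Nonempty → ∃ V : β → Set Y,
      (∀ b, IsClopen (V b) ∧ (V b).Nonempty ∧ P n (V b)) ∧
      (∀ b c x, x ∈ V b → x ∈ V c → b = c) ∧ (∀ x, x ∈ U ↔ ∃ b, x ∈ V b))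
    (small : ∀ (x : Y) (O : Set Y), IsOpen O → x ∈ O → ∃ n, ∀ W, P n W → x ∈ W → W ⊆ O)
    (compl : ∀ W : ℕ → Set Y, (∀ n, IsClopen (W n) ∧ (W n).Nonempty) →
      (∀ n, W (n + 1) ⊆ W n) → (∀ n, P n (W (n + 1))) → (⋂ n, W n).Nonempty) :
    Nonempty (Y ≃ₜ (ℕ → β)) := by
  classical
  choose V hV hdis hcov using split
  let S := {U : Set Y // IsClopen U ∧ U.Nonempty}
  let A : List β → S := fun l => List.rec (motive := fun _ => S) ⟨univ, isClopen_univ, univ_nonempty⟩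
    (fun b l ih => ⟨V l.length ih.1 ih.2.1 ih.2.2 b,
      (hV l.length ih.1 ih.2.1 ih.2.2 b).1, (hV l.length ih.1 ih.2.1 ih.2.2 b).2.1⟩) l
  have A_nil : (A []).1 = univ := rfl
  have A_cons : ∀ b l, (A (b :: l)).1 = V l.length (A l).1 (A l).2.1 (A l).2.2 b := fun _ _ => rfl
  have A_P : ∀ b l, P l.length (A (b :: l)).1 := fun b l => by
    rw [A_cons]; exact (hV _ _ _ _ _).2.2
  have A_cov : ∀ l x, x ∈ (A l).1 ↔ ∃ b, x ∈ (A (b :: l)).1 := fun l x => by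
    simp only [A_cons]; exact hcov _ _ _ _ _
  have A_dis : ∀ l b c x, x ∈ (A (b :: l)).1 → x ∈ (A (c :: l)).1 → b = c := fun l b c x => by
    simp only [A_cons]; exact hdis _ _ _ _ _ _ _
  have ex : ∀ x : ℕ → β, ∃ y, ∀ n, y ∈ (A (PiNat.res x n)).1 := by
    intro x
    obtain ⟨y, hy⟩ := compl (fun n => (A (PiNat.res x n)).1) (fun n => (A _).2)
      (fun n y hy => (A_cov _ _).2 ⟨x n, hy⟩)
      (fun n => by have := A_P (x n) (PiNat.res x n); rwa [PiNat.res_length] at this)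
    exact ⟨y, fun n => mem_iInter.1 hy n⟩
  choose g hg using ex
  have key : ∀ (y : Y) (x x' : ℕ → β) (n : ℕ), (∀ m, y ∈ (A (PiNat.res x m)).1) →
      y ∈ (A (PiNat.res x' n)).1 → PiNat.res x n = PiNat.res x' n := by
    intro y x x' n hx
    induction n with
    | zero => intro _; rfl
    | succ n ih =>
      intro h
      have h2 := ih ((A_cov _ _).2 ⟨x' n, h⟩)
      rw [PiNat.res_succ] at h ⊢
      rw [PiNat.res_succ, ← h2]
      rw [← h2] at h
      have := A_dis _ _ _ _ (hx (n + 1)) h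
      rw [this]
  have ginj : Function.Injective g := by
    intro x x' h
    apply PiNat.res_injective
    ext1 n
    exact key (g x) x x' n (hg x) (h ▸ hg x' n)
  have gsurj : Function.Surjective g := by
    intro y
    have step : ∀ l : {l : List β // y ∈ (A l).1}, ∃ b, y ∈ (A (b :: l.1)).1 :=
      fun l => (A_cov _ _).1 l.2
    choose s hs using step
    let L : ℕ → {l : List β // y ∈ (A l).1} := fun n =>
      Nat.rec ⟨[], by rw [A_nil]; trivial⟩ (fun _ l => ⟨s l :: l.1, hs l⟩) n
    let x : ℕ → β := fun n => s (L n)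
    have hx : ∀ n, PiNat.res x n = (L n).1 := by
      intro n
      induction n with
      | zero => rfl
      | succ n ih => rw [PiNat.res_succ, ih]
    have hy : ∀ n, y ∈ (A (PiNat.res x n)).1 := fun n => by rw [hx]; exact (L n).2
    refine ⟨x, ?_⟩
    by_contra hne
    have h1 : ∀ O : Set Y, IsOpen O → y ∈ O → g x ∈ O := by
      intro O hO hyO
      obtain ⟨n, hn⟩ := small y O hO hyO
      have := A_P (x n) (PiNat.res x n)
      rw [PiNat.res_length] at this
      exact hn _ this (hy (n + 1)) (hg x (n + 1))
    exact h1 {g x}ᶜ isOpen_compl_singleton (fun h => hne (mem_singleton_iff.1 h).symm) rfl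
  have gcont : Continuous g := by
    rw [continuous_iff_continuousAt]
    intro x
    rw [ContinuousAt, Filter.tendsto_def]
    intro O hO
    obtain ⟨O', hO'O, hO', hx⟩ := mem_nhds_iff.1 hO
    obtain ⟨n, hn⟩ := small _ _ hO' hx
    have hP := A_P (x n) (PiNat.res x n)
    rw [PiNat.res_length] at hP
    have hsub := hn _ hP (hg x (n + 1))
    refine Filter.mem_of_superset
      ((PiNat.isOpen_cylinder (fun _ => β) x (n + 1)).mem_nhds (PiNat.self_mem_cylinder x (n + 1))) ?_
    intro x' hx'
    rw [PiNat.cylinder_eq_res] at hx'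
    have hx'' : PiNat.res x' (n + 1) = PiNat.res x (n + 1) := hx'
    apply hO'O
    apply hsub
    have := hg x' (n + 1)
    rw [hx''] at this
    exact this
  let e : (ℕ → β) ≃ Y := Equiv.ofBijective g ⟨ginj, gsurj⟩
  refine ⟨(Homeomorph.mk e gcont ?_).symm⟩
  refine continuous_pi fun n => ?_
  rw [continuous_iff_continuousAt]
  intro y
  obtain ⟨x, rfl⟩ := e.surjective y
  have hev : ∀ᶠ y' in 𝓝 (e x), e.symm y' n = e.symm (e x) n := by
    refine Filter.mem_of_superset ((A (PiNat.res x (n + 1))).2.1.isOpen.mem_nhds (hg x (n + 1))) ?_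
    intro y' hy'
    obtain ⟨x', rfl⟩ := e.surjective y'
    have := key (g x') x' x (n + 1) (hg x') hy'
    simp only [PiNat.res_succ, List.cons.injEq] at this
    simpa using this.1
  exact (tendsto_const_nhds.congr' (hev.mono fun _ h => h.symm))

theorem polish_of_Gδ {Z : Type*} [TopologicalSpace Z] [PolishSpace Z] {X : Set Z} (hG : IsGδ X) :
    PolishSpace X := by
  obtain ⟨U, hU, rfl⟩ := isGδ_iff_eq_iInter_nat.1 hG
  have : ∀ n, PolishSpace (U n) := fun n => (hU n).polishSpace
  let f : (⋂ n, U n : Set Z) → ∀ n, U n := fun x n => ⟨x.1, mem_iInter.1 x.2 n⟩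
  have hf : Continuous f := by fun_prop
  have hval : Continuous (fun h : ∀ n, U n => (h 0 : Z)) := by fun_prop
  have hemb : IsEmbedding f := by
    refine IsEmbedding.of_comp hf hval ?_
    exact IsEmbedding.subtypeVal
  have hr : range f = ⋂ n, {h : ∀ n, U n | (h n : Z) = h 0} := by
    ext h
    simp only [mem_range, mem_iInter, mem_ofPred_eq]
    constructor
    · rintro ⟨x, rfl⟩ n; rfl
    · intro hh
      refine ⟨⟨h 0, mem_iInter.2 fun n => hh n ▸ (h n).2⟩, ?_⟩
      funext n
      exact Subtype.ext (hh n).symm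
  have hc : IsClosedEmbedding f := by
    refine ⟨hemb, ?_⟩
    rw [hr]
    exact isClosed_iInter fun n => isClosed_eq (by fun_prop) (by fun_prop)
  exact hc.polishSpace

/-- A countable clopen base of `ℕ → X`. -/
theorem exists_base (X : Set (ℕ → Bool)) : ∃ B : ℕ → Set (ℕ → X), (∀ n, IsClopen (B n)) ∧
    ∀ x O, IsOpen O → x ∈ O → ∃ n, x ∈ B n ∧ B n ⊆ O := by
  let i : (ℕ → X) → (ℕ → ℕ → Bool) := fun x n => (x n).1
  have hi : IsInducing i := IsInducing.piMap (fun _ => IsInducing.subtypeVal)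
  have : Countable (Clopens (ℕ → ℕ → Bool)) := Clopens.countable_iff_secondCountable.2 inferInstance
  obtain ⟨c, hc⟩ := exists_surjective_nat (Clopens (ℕ → ℕ → Bool))
  refine ⟨fun n => i ⁻¹' (c n), fun n => (c n).isClopen.preimage hi.continuous, ?_⟩
  intro x O hO hx
  obtain ⟨O', hO', rfl⟩ := hi.isOpen_iff.1 hO
  obtain ⟨V, hV, hxV, hVO⟩ := compact_exists_isClopen_in_isOpen hO' hx
  obtain ⟨n, hn⟩ := hc ⟨V, hV⟩
  refine ⟨n, ?_, ?_⟩
  · simp [hn]; exact hxV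
  · simp only [hn]; exact preimage_mono hVO

theorem exists_free {X : Type*} [TopologicalSpace X] {U : Set (ℕ → X)} (hU : IsOpen U) {x : ℕ → X}
    (hx : x ∈ U) : ∃ i, ∀ a, Function.update x i a ∈ U := by
  obtain ⟨I, u, hu, hsub⟩ := isOpen_pi_iff.1 hU x hx
  obtain ⟨i, hi⟩ := Infinite.exists_notMem_finset I
  refine ⟨i, fun a => hsub ?_⟩
  intro j hj
  have : j ≠ i := fun h => hi (h ▸ hj)
  rw [Function.update_of_ne this]
  exact (hu j hj).2

theorem cantor_case (X : Set (ℕ → Bool)) (hnt : Nontrivial (ℕ → X)) (hX : IsCompact X) :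
    Nonempty ((ℕ → X) ≃ₜ (ℕ → Bool)) := by
  have : CompactSpace X := isCompact_iff_compactSpace.1 hX
  have : Nontrivial X := by
    by_contra h
    rw [not_nontrivial_iff_subsingleton] at h
    exact not_subsingleton (ℕ → X) inferInstance
  obtain ⟨B, hB, hbase⟩ := exists_base X
  refine scheme_homeo (fun n W => W ⊆ B n ∨ Disjoint W (B n)) ?_ ?_ ?_
  · intro n U hU hne
    have main : ∃ C, IsClopen C ∧ (U ∩ C).Nonempty ∧ (U \ C).Nonempty ∧
        ((U ∩ C ⊆ B n ∨ Disjoint (U ∩ C) (B n)) ∧ (U \ C ⊆ B n ∨ Disjoint (U \ C) (B n))) := by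
      by_cases h : (U ∩ B n).Nonempty ∧ (U \ B n).Nonempty
      · exact ⟨B n, hB n, h.1, h.2, Or.inl inter_subset_right, Or.inr disjoint_sdiff_left⟩
      · have hP : U ⊆ B n ∨ Disjoint U (B n) := by
          rw [not_and_or, not_nonempty_iff_eq_empty, not_nonempty_iff_eq_empty] at h
          rcases h with h | h
          · exact Or.inr (disjoint_iff_inter_eq_empty.2 h)
          · exact Or.inl (sdiff_eq_empty.1 h)
        obtain ⟨x, hx⟩ := hne
        obtain ⟨i, hi⟩ := exists_free hU.isOpen hx
        obtain ⟨a, ha⟩ := exists_ne (x i)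
        have hxa : x ∈ ({Function.update x i a}ᶜ : Set (ℕ → X)) := by
          intro h
          have := congrFun (mem_singleton_iff.1 h) i
          rw [Function.update_self] at this
          exact ha this.symm
        obtain ⟨m, hm, hms⟩ := hbase x _ isOpen_compl_singleton hxa
        refine ⟨B m, hB m, ⟨x, hx, hm⟩, ⟨_, hi a, fun h => hms h rfl⟩, ?_, ?_⟩
        · exact hP.imp (inter_subset_left.trans ·) (·.mono_left inter_subset_left)
        · exact hP.imp (sdiff_subset.trans ·) (·.mono_left sdiff_subset)
    obtain ⟨C, hC, h1, h2, h3, h4⟩ := main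
    refine ⟨fun b => if b then U ∩ C else U \ C, ?_, ?_, ?_⟩
    · intro b
      cases b
      · exact ⟨hU.diff hC, h2, h4⟩
      · exact ⟨hU.inter hC, h1, h3⟩
    · intro b c x
      cases b <;> cases c <;> simp <;> tauto
    · intro x
      simp
      tauto
  · intro x O hO hx
    obtain ⟨n, hn, hs⟩ := hbase x O hO hx
    refine ⟨n, fun W hW hxW => ?_⟩
    rcases hW with h | h
    · exact h.trans hs
    · exact (disjoint_left.1 h hxW hn).elim
  · intro W hW hanti _
    exact IsCompact.nonempty_iInter_of_sequence_nonempty_isCompact_isClosed W hanti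
      (fun n => (hW n).2) (hW 0).1.isClosed.isCompact (fun n => (hW n).1.isClosed)

theorem baire_abstract {Y : Type*} [TopologicalSpace Y] [PolishSpace Y] [Nonempty Y]
    (B : ℕ → Set Y) (hB : ∀ n, IsClopen (B n))
    (hbase : ∀ x O, IsOpen O → x ∈ O → ∃ n, x ∈ B n ∧ B n ⊆ O)
    (hnc : ∀ U : Set Y, IsOpen U → U.Nonempty → ¬ IsCompact U) :
    Nonempty (Y ≃ₜ (ℕ → ℕ)) := by
  classical
  let := upgradeIsCompletelyMetrizable Y
  have part : ∀ (U : Set Y), IsClopen U → ∀ δ > (0 : ℝ), ∃ C : ℕ → Set Y,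
      (∀ n, IsClopen (C n)) ∧ (∀ n, ∀ y ∈ C n, ∀ z ∈ C n, dist y z < δ) ∧
      (∀ m n x, x ∈ C m → x ∈ C n → m = n) ∧ ∀ x, x ∈ U ↔ ∃ n, x ∈ C n := by
    intro U hU δ hδ
    let D : ℕ → Set Y := fun n =>
      if ∀ y ∈ B n, ∀ z ∈ B n, dist y z < δ then B n ∩ U else ∅
    have hD : ∀ n, IsClopen (D n) := by
      intro n
      by_cases h : ∀ y ∈ B n, ∀ z ∈ B n, dist y z < δ
      · simp only [D, if_pos h]; exact (hB n).inter hU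
      · simp only [D, if_neg h]; exact isClopen_empty
    refine ⟨disjointed D, ?_, ?_, ?_, ?_⟩
    · intro n
      rw [disjointed_apply]
      refine (hD n).diff ?_
      rw [Finset.sup_set_eq_biUnion]
      exact isClopen_biUnion_finset fun i _ => hD i
    · intro n y hy z hz
      have hy := disjointed_le D n hy
      have hz := disjointed_le D n hz
      by_cases h : ∀ y ∈ B n, ∀ z ∈ B n, dist y z < δ
      · simp only [D, if_pos h] at hy hz
        exact h y hy.1 z hz.1
      · simp only [D, if_neg h] at hy
        exact hy.elim
    · intro m n x hm hn
      by_contra hne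
      exact disjoint_left.1 (disjoint_disjointed D hne) hm hn
    · intro x
      rw [← mem_iUnion, iUnion_disjointed, mem_iUnion]
      constructor
      · intro hx
        obtain ⟨n, hn, hs⟩ := hbase x (Metric.ball x (δ / 2)) Metric.isOpen_ball
          (Metric.mem_ball_self (by positivity))
        refine ⟨n, ?_⟩
        have h : ∀ y ∈ B n, ∀ z ∈ B n, dist y z < δ := by
          intro y hy z hz
          have h1 := hs hy
          have h2 := hs hz
          rw [Metric.mem_ball] at h1 h2
          have := dist_triangle_right y z x
          linarith
        simp only [D, if_pos h]
        exact ⟨hn, hx⟩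
      · rintro ⟨n, hn⟩
        by_cases h : ∀ y ∈ B n, ∀ z ∈ B n, dist y z < δ
        · simp only [D, if_pos h] at hn
          exact hn.2
        · simp only [D, if_neg h] at hn
          exact hn.elim
  refine scheme_homeo (fun n W => ∀ y ∈ W, ∀ z ∈ W, dist y z < 1 / ((n : ℝ) + 1)) ?_ ?_ ?_
  · intro n U hU hne
    have htb : ¬ TotallyBounded U := fun h =>
      hnc U hU.isOpen hne (h.isCompact_of_isClosed hU.isClosed)
    rw [Metric.totallyBounded_iff] at htb
    push Not at htb
    obtain ⟨ε, hε, hfin⟩ := htb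
    obtain ⟨C, hC, hCd, hCdis, hCU⟩ := part U hU (min ε (1 / ((n : ℝ) + 1))) (by positivity)
    have hinf : {k | (C k).Nonempty}.Infinite := by
      intro hf
      choose! p hp using (fun k (hk : (C k).Nonempty) => hk)
      refine hfin (p '' {k | (C k).Nonempty}) (hf.image p) ?_
      intro x hx
      obtain ⟨k, hk⟩ := (hCU x).1 hx
      have hkn : (C k).Nonempty := ⟨x, hk⟩
      refine mem_biUnion (mem_image_of_mem p hkn) ?_
      exact (hCd k x hk _ (hp k hkn)).trans_le (min_le_left _ _)
    have : Infinite {k | (C k).Nonempty} := hinf.to_subtype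
    let e := Nat.Subtype.orderIsoOfNat {k | (C k).Nonempty}
    refine ⟨fun k => C (e k).1, ?_, ?_, ?_⟩
    · intro k
      exact ⟨hC _, (e k).2, fun y hy z hz => (hCd _ y hy z hz).trans_le (min_le_right _ _)⟩
    · intro b c x hb hc
      exact e.injective (Subtype.ext (hCdis _ _ x hb hc))
    · intro x
      rw [hCU]
      constructor
      · rintro ⟨k, hk⟩
        obtain ⟨j, hj⟩ := e.surjective ⟨k, ⟨x, hk⟩⟩
        refine ⟨j, ?_⟩
        change x ∈ C (e j).1; rw [hj]; exact hk
      · rintro ⟨k, hk⟩; exact ⟨_, hk⟩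
  · intro x O hO hx
    obtain ⟨ε, hε, hs⟩ := Metric.isOpen_iff.1 hO x hx
    obtain ⟨n, hn⟩ := exists_nat_one_div_lt hε
    exact ⟨n, fun W hW hxW y hy => hs ((hW y hy x hxW).trans hn)⟩
  · intro W hW hanti hP
    choose u hu using fun n => (hW n).2
    have hanti' : Antitone W := antitone_nat_of_succ_le hanti
    have hcau : CauchySeq u := by
      rw [Metric.cauchySeq_iff]
      intro ε hε
      obtain ⟨n, hn⟩ := exists_nat_one_div_lt hε
      exact ⟨n + 1, fun a ha b hb =>
        (hP n _ (hanti' ha (hu a)) _ (hanti' hb (hu b))).trans hn⟩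
    obtain ⟨y, hy⟩ := cauchySeq_tendsto_of_complete hcau
    refine ⟨y, mem_iInter.2 fun n => ?_⟩
    refine (hW n).1.isClosed.mem_of_tendsto hy ?_
    filter_upwards [Filter.eventually_ge_atTop n] with m hm
    exact hanti' hm (hu m)

theorem baire_case (X : Set (ℕ → Bool)) (hG : IsGδ X) (hnt : Nontrivial (ℕ → X))
    (hX : ¬ IsCompact X) : Nonempty ((ℕ → X) ≃ₜ (ℕ → ℕ)) := by
  classical
  have : PolishSpace Bool := {}
  have : PolishSpace (ℕ → Bool) := inferInstance
  have : PolishSpace X := polish_of_Gδ hG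
  obtain ⟨B, hB, hbase⟩ := exists_base X
  have hnc : ∀ U : Set (ℕ → X), IsOpen U → U.Nonempty → ¬ IsCompact U := by
    rintro U hU ⟨x, hx⟩ hc
    obtain ⟨i, hi⟩ := exists_free hU hx
    apply hX
    have h1 := hc.image (continuous_apply i)
    have h2 : (fun f : ℕ → X => f i) '' U = univ := by
      rw [eq_univ_iff_forall]
      exact fun a => ⟨_, hi a, by simp⟩
    rw [h2] at h1
    exact isCompact_iff_isCompact_univ.2 h1
  exact baire_abstract B hB hbase hnc

end PowAux

/-- If `X` is a `Gδ` subset of the Cantor space and `X^ℕ` has more than one point, then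
`X^ℕ` is homeomorphic to the Cantor space if `X` is compact, and to the Baire space
otherwise. -/
theorem pow_homeomorphic_cantor_or_baire
    (X : Set (ℕ → Bool)) (hG : IsGδ X) (hnt : Nontrivial (ℕ → ↥X)) :
    (IsCompact X → Nonempty ((ℕ → ↥X) ≃ₜ (ℕ → Bool))) ∧
    (¬ IsCompact X → Nonempty ((ℕ → ↥X) ≃ₜ (ℕ → ℕ))) :=
  ⟨PowAux.cantor_case X hnt, PowAux.baire_case X hG hnt⟩
end
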